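/- There is a constant c > 0 such that for every n ≥ 2 and every nonempty set S of triangulations of the convex (n+2)-gon with 2|S| ≤ |V(K_n)|, the number of edges of the associahedron graph K_n with exactly one endpoint in S is at least c·|S|/(√n · log n). In other words, the edge expansion of K_n is Ω(1/(√n·log n)). -/

import Mathlib

open Finset

/-- `x` lies strictly between `a` and `b` in cyclic (counterclockwise) order
on the vertices `0, 1, …, m-1` of a convex `m`-gon. -/
def CycBtw {m : ℕ} (a b x : Fin m) : Prop :=
  0 < (x - a).val ∧ (x - a).val < (b - a).val

/-- `a` and `b` are adjacent (cyclically consecutive) vertices of the convex `m`-gon. -/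
def PolyAdj {m : ℕ} (a b : Fin m) : Prop :=
  (b - a).val = 1 ∨ (a - b).val = 1

/-- `e` is a side of the convex `m`-gon. -/
def IsSide {m : ℕ} (e : Sym2 (Fin m)) : Prop :=
  ∃ a b : Fin m, e = s(a, b) ∧ PolyAdj a b

/-- `e` is a diagonal of the convex `m`-gon: a pair of distinct non-adjacent vertices. -/
def IsDiagonal {m : ℕ} (e : Sym2 (Fin m)) : Prop :=
  ¬ e.IsDiag ∧ ∀ a b : Fin m, e = s(a, b) → ¬ PolyAdj a b

/-- Two chords cross iff exactly one endpoint of one lies strictly between the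
endpoints of the other (for every representation of the endpoints). -/
def Crosses {m : ℕ} (e f : Sym2 (Fin m)) : Prop :=
  ∀ a b : Fin m, e = s(a, b) →
    ∃ c d : Fin m, f = s(c, d) ∧ Xor' (CycBtw a b c) (CycBtw a b d)

/-- A triangulation of the convex `(n+2)`-gon: a maximal set of pairwise
non-crossing diagonals. -/
def IsTriangulation (n : ℕ) (t : Finset (Sym2 (Fin (n + 2)))) : Prop :=
  (∀ e ∈ t, IsDiagonal e) ∧
  (∀ e ∈ t, ∀ f ∈ t, ¬ Crosses e f) ∧
  (∀ e, IsDiagonal e → (∀ f ∈ t, ¬ Crosses e f) → e ∈ t)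

/-- The type of triangulations of the convex `(n+2)`-gon. -/
def Triangulation (n : ℕ) : Type :=
  {t : Finset (Sym2 (Fin (n + 2))) // IsTriangulation n t}

instance (n : ℕ) : DecidableEq (Triangulation n) := fun a b =>
  decidable_of_iff (a.val = b.val) Subtype.ext_iff.symm

noncomputable instance (n : ℕ) : Fintype (Triangulation n) := by
  classical exact Subtype.fintype _

/-- The associahedron graph `K_n`: vertices are the triangulations of the convex
`(n+2)`-gon, with an edge between two triangulations iff they differ in exactly
one diagonal (a flip). -/
def assocGraph (n : ℕ) : SimpleGraph (Triangulation n) where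
  Adj s t := (s.val \ t.val).card = 1 ∧ (t.val \ s.val).card = 1
  symm := ⟨fun s t h => ⟨h.2, h.1⟩⟩
  loopless := ⟨fun s h => by simp at h⟩

/-- The set of edges of `G` with exactly one endpoint in `S`. -/
def edgeBoundary {V : Type*} (G : SimpleGraph V) (S : Set V) : Set (Sym2 V) :=
  {e | e ∈ G.edgeSet ∧ ∃ u v : V, e = s(u, v) ∧ u ∈ S ∧ v ∉ S}

namespace Assoc
open scoped Classical
set_option linter.all false

/-- strict cyclic betweenness in a linear order -/
def sb {V : Type*} [LinearOrder V] (a b c : V) : Prop :=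
  (a < b ∧ b < c) ∨ (b < c ∧ c < a) ∨ (c < a ∧ a < b)

/-- `c` is strictly inside the arc `(a,b)` and `d` strictly inside the arc `(b,a)` -/
def cr {V : Type*} [LinearOrder V] (a b c d : V) : Prop := sb a c b ∧ sb b d a

/-- closed arc membership -/
def inarc {V : Type*} [LinearOrder V] (u v w : V) : Prop := w = u ∨ w = v ∨ sb u w v

section geo
variable {V : Type*} [LinearOrder V]

lemma sb_rot {a b c : V} (h : sb a b c) : sb b c a := by unfold sb at *; tauto
lemma sb_rot' {a b c : V} (h : sb a b c) : sb c a b := by unfold sb at *; tauto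
lemma sb_ne {a b c : V} (h : sb a b c) : a ≠ b ∧ b ≠ c ∧ a ≠ c := by unfold sb at *; grind
lemma sb_asymm {a b c : V} (h : sb a b c) : ¬ sb a c b := by unfold sb at *; grind
lemma sb_total {a b c : V} (h1 : a ≠ b) (h2 : b ≠ c) (h3 : a ≠ c) : sb a b c ∨ sb a c b := by
  unfold sb at *; grind
lemma sb_trans {a b c d : V} (h1 : sb a b c) (h2 : sb a c d) : sb a b d ∧ sb b c d := by
  unfold sb at *; grind
lemma cr_swap {a b c d : V} : cr a b c d ↔ cr b a d c := by unfold cr sb; tauto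
lemma cr_symm {a b c d : V} (h : cr a b c d) : cr c d b a := by unfold cr sb at *; grind
lemma not_cr_self {a c d : V} : ¬ cr a a c d := by unfold cr sb; grind

lemma geo1 {p q a b c d : V} (hpq : p ≠ q) (ha : inarc p q a) (hb : inarc p q b) (h : cr a b c d)
   (h1 : ¬ cr p q c d) (h2 : ¬ cr p q d c) : inarc p q c ∧ inarc p q d := by
  unfold inarc cr sb at *
  grind

lemma inarc_disj {p q r c : V} (hpq : sb p q r) (hc : inarc q r c) : c = q ∨ sb q c p := by
  unfold inarc sb at *
  grind

lemma inarc_inter {p q r c : V} (hpq : sb p q r) (h : inarc p q c) (hc : inarc q r c) : c = q := by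
  unfold inarc sb at *
  grind

lemma geo2 {p q r a b c d : V} (hpq : sb p q r) (ha : inarc p q a) (hb : inarc p q b)
   (hc : inarc q r c) (hd : inarc q r d) : ¬ cr a b c d := by
  intro h
  have hc' := inarc_disj hpq hc
  have hd' := inarc_disj hpq hd
  clear hc hd hpq
  unfold inarc cr sb at *
  grind (splits := 20)

lemma geo3 {p q r a b : V} (hpq : sb p q r) (h1 : ¬ cr a b p q) (h1' : ¬ cr a b q p)
  (h2 : ¬ cr a b q r) (h2' : ¬ cr a b r q) (h3 : ¬ cr a b r p) (h3' : ¬ cr a b p r) :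
   (inarc p q a ∧ inarc p q b) ∨ (inarc q r a ∧ inarc q r b) ∨ (inarc r p a ∧ inarc r p b) := by
  unfold inarc cr sb at *
  grind
end geo

section tri
variable {V : Type*} [LinearOrder V]

/-- maximal noncrossing sets of chords (loops and sides included) on the vertex set `A` -/
noncomputable def Tri (A : Finset V) : Finset (Finset (Sym2 V)) :=
  A.sym2.powerset.filter (fun x => ∀ a ∈ A, ∀ b ∈ A,
    (s(a, b) ∈ x ↔ ∀ c d, s(c, d) ∈ x → ¬ cr a b c d))

lemma mem_Tri {A : Finset V} {x : Finset (Sym2 V)} : x ∈ Tri A ↔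
    (∀ a b, s(a, b) ∈ x → a ∈ A ∧ b ∈ A) ∧ ∀ a ∈ A, ∀ b ∈ A,
    (s(a, b) ∈ x ↔ ∀ c d, s(c, d) ∈ x → ¬ cr a b c d) := by
  unfold Tri
  rw [mem_filter, mem_powerset]
  constructor
  · rintro ⟨h1, h2⟩
    exact ⟨fun a b h => by simpa using h1 h, h2⟩
  · rintro ⟨h1, h2⟩
    refine ⟨fun e he => ?_, h2⟩
    induction e using Sym2.ind with
    | _ a b => simpa using h1 a b he

lemma Tri.nc {A : Finset V} {x : Finset (Sym2 V)} (hx : x ∈ Tri A) {a b c d : V}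
    (h1 : s(a, b) ∈ x) (h2 : s(c, d) ∈ x) : ¬ cr a b c d := by
  rw [mem_Tri] at hx
  exact (hx.2 a (hx.1 a b h1).1 b (hx.1 a b h1).2).1 h1 c d h2

lemma Tri.mem {A : Finset V} {x : Finset (Sym2 V)} (hx : x ∈ Tri A) {a b : V}
    (h1 : s(a, b) ∈ x) : a ∈ A ∧ b ∈ A := (mem_Tri.1 hx).1 a b h1

lemma Tri.max {A : Finset V} {x : Finset (Sym2 V)} (hx : x ∈ Tri A) {a b : V} (ha : a ∈ A)
    (hb : b ∈ A) (h : ∀ c d, s(c, d) ∈ x → ¬ cr a b c d) : s(a, b) ∈ x :=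
  ((mem_Tri.1 hx).2 a ha b hb).2 h

lemma Tri.loop {A : Finset V} {x : Finset (Sym2 V)} (hx : x ∈ Tri A) {a : V} (ha : a ∈ A) :
    s(a, a) ∈ x := Tri.max hx ha ha (fun _ _ _ => not_cr_self)

lemma Tri.side {A : Finset V} {x : Finset (Sym2 V)} (hx : x ∈ Tri A) {a b : V} (ha : a ∈ A)
    (hb : b ∈ A) (h : ∀ c ∈ A, ¬ sb a c b) : s(a, b) ∈ x :=
  Tri.max hx ha hb (fun c d hcd hc => h c (Tri.mem hx hcd).1 hc.1)

/-- the part of `A` in the closed arc from `u` to `v` -/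
noncomputable def arc (A : Finset V) (u v : V) : Finset V := A.filter (inarc u v)

lemma mem_arc {A : Finset V} {u v w : V} : w ∈ arc A u v ↔ w ∈ A ∧ inarc u v w := by
  simp [arc]

/-- triangulations containing the triangle `p q r` -/
noncomputable def Om (A : Finset V) (p q r : V) : Finset (Finset (Sym2 V)) :=
  (Tri A).filter (fun x => s(p, q) ∈ x ∧ s(q, r) ∈ x ∧ s(r, p) ∈ x)

lemma mem_Om {A : Finset V} {p q r : V} {x : Finset (Sym2 V)} : x ∈ Om A p q r ↔
    x ∈ Tri A ∧ s(p, q) ∈ x ∧ s(q, r) ∈ x ∧ s(r, p) ∈ x := by simp [Om]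

lemma Om_rot (A : Finset V) (p q r : V) : Om A p q r = Om A q r p := by
  ext x; simp only [mem_Om]; tauto

lemma Tri.root {A : Finset V} {x : Finset (Sym2 V)} {p q : V} (hp : p ∈ A) (hq : q ∈ A)
    (hx : x ∈ Tri (arc A p q)) : s(p, q) ∈ x := by
  have h1 : p ∈ arc A p q := mem_arc.2 ⟨hp, Or.inl rfl⟩
  have h2 : q ∈ arc A p q := mem_arc.2 ⟨hq, Or.inr (Or.inl rfl)⟩
  rw [Sym2.eq_swap]
  refine Tri.side hx h2 h1 (fun c hc h => ?_)
  have := (mem_arc.1 hc).2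
  have hne := sb_ne h
  rcases this with h' | h' | h'
  · exact hne.2.1 h'
  · exact hne.1 h'.symm
  · exact sb_asymm (sb_rot' h) (sb_rot (sb_rot (sb_rot h')))

lemma union_mem {x1 x2 x3 : Finset (Sym2 V)} {A : Finset V} {p q r : V}
    (hp : p ∈ A) (hq : q ∈ A) (hr : r ∈ A) (h : sb p q r)
    (h1 : x1 ∈ Tri (arc A p q)) (h2 : x2 ∈ Tri (arc A q r)) (h3 : x3 ∈ Tri (arc A r p)) :
    x1 ∪ x2 ∪ x3 ∈ Om A p q r := by
  have e1 := Tri.root hp hq h1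
  have e2 := Tri.root hq hr h2
  have e3 := Tri.root hr hp h3
  have m1 : ∀ {a b}, s(a, b) ∈ x1 → (a ∈ A ∧ b ∈ A) ∧ inarc p q a ∧ inarc p q b := fun hab => by
    have := Tri.mem h1 hab
    simp only [mem_arc] at this; tauto
  have m2 : ∀ {a b}, s(a, b) ∈ x2 → (a ∈ A ∧ b ∈ A) ∧ inarc q r a ∧ inarc q r b := fun hab => by
    have := Tri.mem h2 hab
    simp only [mem_arc] at this; tauto
  have m3 : ∀ {a b}, s(a, b) ∈ x3 → (a ∈ A ∧ b ∈ A) ∧ inarc r p a ∧ inarc r p b := fun hab => by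
    have := Tri.mem h3 hab
    simp only [mem_arc] at this; tauto
  refine mem_Om.2 ⟨mem_Tri.2 ⟨?_, ?_⟩, ?_, ?_, ?_⟩
  · intro a b hab
    simp only [mem_union] at hab
    rcases hab with (hab | hab) | hab
    · exact (m1 hab).1
    · exact (m2 hab).1
    · exact (m3 hab).1
  · intro a ha b hb
    constructor
    · intro hab c d hcd hcr
      simp only [mem_union] at hab hcd
      have hcr' := cr_symm hcr
      have sw : ∀ {e f g h : V}, cr e f g h → cr e f h g ∨ True := fun _ => Or.inr trivial
      have hrev : cr c d b a := hcr'
      have hh := sb_rot h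
      have hhh := sb_rot hh
      rcases hab with (hab | hab) | hab <;> rcases hcd with (hcd | hcd) | hcd
      · exact Tri.nc h1 hab hcd hcr
      · exact geo2 h (m1 hab).2.1 (m1 hab).2.2 (m2 hcd).2.1 (m2 hcd).2.2 hcr
      · exact geo2 hhh (m3 hcd).2.1 (m3 hcd).2.2 (m1 hab).2.2 (m1 hab).2.1 hrev
      · exact geo2 h (m1 hcd).2.1 (m1 hcd).2.2 (m2 hab).2.2 (m2 hab).2.1 hrev
      · exact Tri.nc h2 hab hcd hcr
      · exact geo2 hh (m2 hab).2.1 (m2 hab).2.2 (m3 hcd).2.1 (m3 hcd).2.2 hcr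
      · exact geo2 hhh (m3 hab).2.1 (m3 hab).2.2 (m1 hcd).2.1 (m1 hcd).2.2 hcr
      · exact geo2 hh (m2 hcd).2.1 (m2 hcd).2.2 (m3 hab).2.2 (m3 hab).2.1 hrev
      · exact Tri.nc h3 hab hcd hcr
    · intro H
      have E1 : s(p, q) ∈ x1 ∪ x2 ∪ x3 := by simp [e1]
      have E2 : s(q, r) ∈ x1 ∪ x2 ∪ x3 := by simp [e2]
      have E3 : s(r, p) ∈ x1 ∪ x2 ∪ x3 := by simp [e3]
      have := geo3 h (H _ _ E1) (H _ _ (Sym2.eq_swap ▸ E1)) (H _ _ E2) (H _ _ (Sym2.eq_swap ▸ E2))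
        (H _ _ E3) (H _ _ (Sym2.eq_swap ▸ E3))
      simp only [mem_union]
      rcases this with h' | h' | h'
      · refine Or.inl (Or.inl (Tri.max h1 (mem_arc.2 ⟨ha, h'.1⟩) (mem_arc.2 ⟨hb, h'.2⟩) ?_))
        exact fun c d hcd => H c d (by simp [hcd])
      · refine Or.inl (Or.inr (Tri.max h2 (mem_arc.2 ⟨ha, h'.1⟩) (mem_arc.2 ⟨hb, h'.2⟩) ?_))
        exact fun c d hcd => H c d (by simp [hcd])
      · refine (Or.inr (Tri.max h3 (mem_arc.2 ⟨ha, h'.1⟩) (mem_arc.2 ⟨hb, h'.2⟩) ?_))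
        exact fun c d hcd => H c d (by simp [hcd])
  · simp [e1]
  · simp [e2]
  · simp [e3]

lemma mem_inter_sym2 {x : Finset (Sym2 V)} {B : Finset V} {a b : V} :
    s(a, b) ∈ x ∩ B.sym2 ↔ s(a, b) ∈ x ∧ a ∈ B ∧ b ∈ B := by
  simp [mem_inter, mk_mem_sym2_iff]

lemma restr_mem {x : Finset (Sym2 V)} {A : Finset V} {p q : V} (hpq : p ≠ q)
    (hx : x ∈ Tri A) (h : s(p, q) ∈ x) : x ∩ (arc A p q).sym2 ∈ Tri (arc A p q) := by
  refine mem_Tri.2 ⟨fun a b hab => (mem_inter_sym2.1 hab).2, fun a ha b hb => ?_⟩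
  have ha' := mem_arc.1 ha
  have hb' := mem_arc.1 hb
  rw [mem_inter_sym2]
  constructor
  · rintro ⟨h1, -⟩ c d hcd
    exact Tri.nc hx h1 (mem_inter_sym2.1 hcd).1
  · intro H
    refine ⟨Tri.max hx ha'.1 hb'.1 (fun c d hcd hcr => ?_), ha, hb⟩
    have := geo1 hpq ha'.2 hb'.2 hcr (Tri.nc hx h hcd) (Tri.nc hx h (Sym2.eq_swap ▸ hcd))
    have hm := Tri.mem hx hcd
    exact H c d (mem_inter_sym2.2 ⟨hcd, mem_arc.2 ⟨hm.1, this.1⟩, mem_arc.2 ⟨hm.2, this.2⟩⟩) hcr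

lemma sym2_ext {x y : Finset (Sym2 V)} (h : ∀ a b, s(a, b) ∈ x ↔ s(a, b) ∈ y) : x = y := by
  ext e
  induction e using Sym2.ind with
  | _ a b => exact h a b

lemma restr_union {x : Finset (Sym2 V)} {A : Finset V} {p q r : V} (h : sb p q r)
    (hx : x ∈ Om A p q r) :
    x ∩ (arc A p q).sym2 ∪ x ∩ (arc A q r).sym2 ∪ x ∩ (arc A r p).sym2 = x := by
  obtain ⟨hx, E1, E2, E3⟩ := mem_Om.1 hx
  refine sym2_ext (fun a b => ?_)
  simp only [mem_union, mem_inter_sym2, mem_arc]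
  constructor
  · tauto
  · intro hab
    have hm := Tri.mem hx hab
    have := geo3 h (Tri.nc hx hab E1) (Tri.nc hx hab (Sym2.eq_swap ▸ E1))
      (Tri.nc hx hab E2) (Tri.nc hx hab (Sym2.eq_swap ▸ E2))
      (Tri.nc hx hab E3) (Tri.nc hx hab (Sym2.eq_swap ▸ E3))
    tauto

/-- chords of the union lying in the first piece -/
lemma mem_union_piece {x1 x2 x3 : Finset (Sym2 V)} {A : Finset V} {p q r : V}
    (h : sb p q r)
    (h1 : x1 ∈ Tri (arc A p q)) (h2 : x2 ∈ Tri (arc A q r)) (h3 : x3 ∈ Tri (arc A r p))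
    {a b : V} (ha : a ∈ arc A p q) (hb : b ∈ arc A p q) :
    s(a, b) ∈ x1 ∪ x2 ∪ x3 ↔ s(a, b) ∈ x1 := by
  simp only [mem_union]
  refine ⟨?_, fun h => Or.inl (Or.inl h)⟩
  rintro ((h' | h') | h')
  · exact h'
  · have := Tri.mem h2 h'
    have ea := inarc_inter h (mem_arc.1 ha).2 (mem_arc.1 this.1).2
    have eb := inarc_inter h (mem_arc.1 hb).2 (mem_arc.1 this.2).2
    subst ea; subst eb
    exact Tri.loop h1 ha
  · have := Tri.mem h3 h'
    have ea := inarc_inter (sb_rot' h) (mem_arc.1 this.1).2 (mem_arc.1 ha).2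
    have eb := inarc_inter (sb_rot' h) (mem_arc.1 this.2).2 (mem_arc.1 hb).2
    subst ea; subst eb
    exact Tri.loop h1 ha

lemma union_restr {x1 x2 x3 : Finset (Sym2 V)} {A : Finset V} {p q r : V}
    (h : sb p q r)
    (h1 : x1 ∈ Tri (arc A p q)) (h2 : x2 ∈ Tri (arc A q r)) (h3 : x3 ∈ Tri (arc A r p)) :
    (x1 ∪ x2 ∪ x3) ∩ (arc A p q).sym2 = x1 := by
  refine sym2_ext (fun a b => ?_)
  rw [mem_inter_sym2]
  constructor
  · rintro ⟨h', ha, hb⟩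
    exact (mem_union_piece h h1 h2 h3 ha hb).1 h'
  · intro h'
    have := Tri.mem h1 h'
    exact ⟨by simp [h'], this⟩

/-- flip adjacency -/
def adj (x y : Finset (Sym2 V)) : Prop := (x \ y).card = 1 ∧ (y \ x).card = 1

lemma adj_comm {x y : Finset (Sym2 V)} : adj x y ↔ adj y x := by unfold adj; tauto
lemma adj_irrefl {x : Finset (Sym2 V)} : ¬ adj x x := by simp [adj]

lemma union_sdiff {x1 x2 x3 y1 : Finset (Sym2 V)} {A : Finset V} {p q r : V}
    (h : sb p q r) (hy : y1 ∈ Tri (arc A p q))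
    (h1 : x1 ∈ Tri (arc A p q)) (h2 : x2 ∈ Tri (arc A q r)) (h3 : x3 ∈ Tri (arc A r p)) :
    (x1 ∪ x2 ∪ x3) \ (y1 ∪ x2 ∪ x3) = x1 \ y1 := by
  refine sym2_ext (fun a b => ?_)
  simp only [mem_sdiff]
  constructor
  · rintro ⟨h4, h5⟩
    simp only [mem_union] at h4 h5
    tauto
  · rintro ⟨h4, h5⟩
    have := Tri.mem h1 h4
    rw [mem_union_piece h h1 h2 h3 this.1 this.2, mem_union_piece h hy h2 h3 this.1 this.2]
    exact ⟨h4, h5⟩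

lemma adj_union {x1 x2 x3 y1 : Finset (Sym2 V)} {A : Finset V} {p q r : V}
    (h : sb p q r) (hy : y1 ∈ Tri (arc A p q))
    (h1 : x1 ∈ Tri (arc A p q)) (h2 : x2 ∈ Tri (arc A q r)) (h3 : x3 ∈ Tri (arc A r p)) :
    adj (x1 ∪ x2 ∪ x3) (y1 ∪ x2 ∪ x3) ↔ adj x1 y1 := by
  unfold adj
  rw [union_sdiff h hy h1 h2 h3, union_sdiff h h1 hy h2 h3]

lemma sum_Om {A : Finset V} {p q r : V}
    (hp : p ∈ A) (hq : q ∈ A) (hr : r ∈ A) (h : sb p q r) {M : Type*} [AddCommMonoid M]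
    (g : Finset (Sym2 V) → M) :
    ∑ x ∈ Om A p q r, g x =
      ∑ x1 ∈ Tri (arc A p q), ∑ x2 ∈ Tri (arc A q r), ∑ x3 ∈ Tri (arc A r p),
        g (x1 ∪ x2 ∪ x3) := by
  have hne := sb_ne h
  simp_rw [← sum_product']
  symm
  refine sum_nbij' (fun z => z.1 ∪ z.2.1 ∪ z.2.2)
    (fun x => (x ∩ (arc A p q).sym2, x ∩ (arc A q r).sym2, x ∩ (arc A r p).sym2)) ?_ ?_ ?_ ?_ ?_
  · rintro ⟨x1, x2, x3⟩ hz
    simp only [mem_product] at hz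
    exact union_mem hp hq hr h hz.1 hz.2.1 hz.2.2
  · intro x hx
    obtain ⟨hx, E1, E2, E3⟩ := mem_Om.1 hx
    simp only [mem_product]
    exact ⟨restr_mem hne.1 hx E1, restr_mem hne.2.1 hx E2, restr_mem hne.2.2.symm hx E3⟩
  · rintro ⟨x1, x2, x3⟩ hz
    simp only [mem_product] at hz
    obtain ⟨h1, h2, h3⟩ := hz
    simp only [Prod.mk.injEq]
    refine ⟨union_restr h h1 h2 h3, ?_, ?_⟩
    · rw [union_assoc, union_comm x1]
      exact union_restr (sb_rot h) h2 h3 h1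
    · rw [union_comm, ← union_assoc]
      exact union_restr (sb_rot' h) h3 h1 h2
  · intro x hx
    exact restr_union h hx
  · intros; rfl

end tri
end Assoc

namespace Assoc
open scoped Classical
set_option linter.all false

section apex
variable {V : Type*} [LinearOrder V]

lemma card_arc_lt {A : Finset V} {u w c : V} (hc : c ∈ A) (h : sb u w c) :
    (arc A u w).card < (arc A u c).card := by
  apply Finset.card_lt_card
  rw [Finset.ssubset_iff_of_subset]
  · refine ⟨c, mem_arc.2 ⟨hc, Or.inr (Or.inl rfl)⟩, ?_⟩
    rw [mem_arc]
    rintro ⟨-, h'⟩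
    unfold inarc sb at *
    grind
  · intro a ha
    rw [mem_arc] at *
    refine ⟨ha.1, ?_⟩
    have h' := ha.2
    unfold inarc sb at *
    grind

lemma exists_apex {A : Finset V} {x : Finset (Sym2 V)} {u v w0 : V} (hx : x ∈ Tri A)
    (h : s(u, v) ∈ x) (hw0 : w0 ∈ A) (hs : sb u w0 v) :
    ∃ w ∈ A, sb u w v ∧ s(u, w) ∈ x ∧ s(w, v) ∈ x := by
  have hu := (Tri.mem hx h).1
  have hv := (Tri.mem hx h).2
  have hne : (A.filter (fun w => sb u w v ∧ s(u, w) ∈ x)).Nonempty := by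
    obtain ⟨w, hw, hmin⟩ := Finset.exists_min_image (A.filter (fun w => sb u w v))
      (fun w => (arc A u w).card) ⟨w0, by simp [hw0, hs]⟩
    simp only [mem_filter] at hw hmin
    refine ⟨w, ?_⟩
    simp only [mem_filter]
    refine ⟨hw.1, hw.2, Tri.side hx hu hw.1 (fun c hc hcs => ?_)⟩
    have h1 := hmin c ⟨hc, (sb_trans hcs hw.2).1⟩
    have h2 := card_arc_lt hw.1 hcs
    omega
  obtain ⟨w, hw, hmax⟩ := Finset.exists_max_image _ (fun w => (arc A u w).card) hne
  simp only [mem_filter] at hw hmax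
  obtain ⟨hwA, hw1, hw2⟩ := hw
  refine ⟨w, hwA, hw1, hw2, Tri.max hx hwA hv ?_⟩
  intro c d hcd hcr
  have hm := Tri.mem hx hcd
  have n1 := Tri.nc hx h hcd
  have n2 := Tri.nc hx hw2 (Sym2.eq_swap ▸ hcd : s(d, c) ∈ x)
  have key : d = u ∧ sb u w c ∧ sb u c v := by
    clear hmax hm
    unfold cr sb at *
    grind
  obtain ⟨rfl, k1, k2⟩ := key
  have h1 := hmax c ⟨hm.1, k2, Sym2.eq_swap ▸ hcd⟩
  have h2 := card_arc_lt hm.1 k1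
  omega

lemma apex_unique {A : Finset V} {x : Finset (Sym2 V)} {u v w w' : V} (hx : x ∈ Tri A)
    (h1 : sb u w v) (h2 : s(u, w) ∈ x) (h3 : s(w, v) ∈ x)
    (h1' : sb u w' v) (h2' : s(u, w') ∈ x) (h3' : s(w', v) ∈ x) : w = w' := by
  have a1 := Tri.nc hx h2 h3'
  have a2 := Tri.nc hx h2' h3
  unfold cr sb at *
  grind

/-- inner vertices of an arc -/
noncomputable def inner (A : Finset V) (u v : V) : Finset V := A.filter (fun w => sb u w v)

lemma mem_inner {A : Finset V} {u v w : V} : w ∈ inner A u v ↔ w ∈ A ∧ sb u w v := by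
  simp [inner]

lemma inner_arc (A : Finset V) (u v : V) : inner (arc A u v) u v = inner A u v := by
  ext w; simp [mem_inner, mem_arc, inarc]; tauto

/-- `u v` is a side of `A` -/
structure Root (A : Finset V) (u v : V) : Prop where
  hu : u ∈ A
  hv : v ∈ A
  ne : u ≠ v
  all : ∀ a ∈ A, inarc u v a

lemma Root.arc_eq {A : Finset V} {u v : V} (h : Root A u v) : arc A u v = A := by
  ext w; rw [mem_arc]; exact ⟨fun h => h.1, fun hw => ⟨hw, h.all w hw⟩⟩

lemma root_arc {A : Finset V} {u v : V} (hu : u ∈ A) (hv : v ∈ A) (h : u ≠ v) :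
    Root (arc A u v) u v :=
  ⟨mem_arc.2 ⟨hu, Or.inl rfl⟩, mem_arc.2 ⟨hv, Or.inr (Or.inl rfl)⟩, h,
    fun a ha => (mem_arc.1 ha).2⟩

lemma Root.mem {A : Finset V} {u v : V} (h : Root A u v) {x : Finset (Sym2 V)} (hx : x ∈ Tri A) :
    s(u, v) ∈ x := Tri.root h.hu h.hv (h.arc_eq.symm ▸ hx)

lemma arc_arc_left {A : Finset V} {u w v : V} (h : sb u w v) :
    arc (arc A u v) u w = arc A u w := by
  ext a; simp only [mem_arc]
  constructor
  · tauto
  · rintro ⟨h1, h2⟩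
    refine ⟨⟨h1, ?_⟩, h2⟩
    unfold inarc sb at *
    grind

lemma arc_arc_right {A : Finset V} {u w v : V} (h : sb u w v) :
    arc (arc A u v) w v = arc A w v := by
  ext a; simp only [mem_arc]
  constructor
  · tauto
  · rintro ⟨h1, h2⟩
    refine ⟨⟨h1, ?_⟩, h2⟩
    unfold inarc sb at *
    grind

lemma arc_back (A : Finset V) {u v : V} (hu : u ∈ A) (hv : v ∈ A) : arc (arc A u v) v u = {u, v} := by
  ext a; simp only [mem_arc, mem_insert, mem_singleton]
  constructor
  · rintro ⟨⟨h1, h2⟩, h3⟩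
    unfold inarc sb at *
    grind
  · rintro (rfl | rfl)
    · exact ⟨⟨hu, Or.inl rfl⟩, Or.inr (Or.inl rfl)⟩
    · exact ⟨⟨hv, Or.inr (Or.inl rfl)⟩, Or.inl rfl⟩

lemma Tri_pair {u v : V} : Tri {u, v} = {({u, v} : Finset V).sym2} := by
  ext x
  have key : ∀ a ∈ ({u, v} : Finset V), ∀ b ∈ ({u, v} : Finset V), ∀ c ∈ ({u, v} : Finset V),
      ∀ d, ¬ cr a b c d := by
    intro a ha b hb c hc d
    simp only [mem_insert, mem_singleton] at *
    unfold cr sb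
    grind
  rw [mem_singleton, mem_Tri]
  constructor
  · rintro ⟨h1, h2⟩
    refine sym2_ext (fun a b => ?_)
    rw [mk_mem_sym2_iff]
    refine ⟨h1 a b, fun h => (h2 a h.1 b h.2).2 (fun c d hcd => key a h.1 b h.2 c (h1 c d hcd).1 d)⟩
  · rintro rfl
    refine ⟨fun a b h => mk_mem_sym2_iff.1 h, fun a ha b hb => ?_⟩
    refine ⟨fun h c d hcd => key a ha b hb c (mk_mem_sym2_iff.1 hcd).1 d, fun _ => ?_⟩
    exact mk_mem_sym2_iff.2 ⟨ha, hb⟩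

/-- decomposition over the apex of a chord -/
lemma sum_apex {A : Finset V} {u v : V} (hi : (inner A u v).Nonempty) {S : Finset (Finset (Sym2 V))}
    (hS : S ⊆ Tri A) (hm : ∀ x ∈ S, s(u, v) ∈ x) {M : Type*} [AddCommMonoid M]
    (g : Finset (Sym2 V) → M) :
    ∑ x ∈ S, g x = ∑ w ∈ inner A u v, ∑ x ∈ S with (s(u, w) ∈ x ∧ s(w, v) ∈ x), g x := by
  simp_rw [sum_filter]
  rw [sum_comm]
  refine sum_congr rfl (fun x hx => ?_)
  obtain ⟨w0, hw0⟩ := hi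
  rw [mem_inner] at hw0
  obtain ⟨w, hw, h1, h2, h3⟩ := exists_apex (hS hx) (hm x hx) hw0.1 hw0.2
  rw [sum_eq_single w]
  · rw [if_pos ⟨h2, h3⟩]
  · intro b hb hbw
    rw [if_neg]
    rintro ⟨h4, h5⟩
    exact hbw (apex_unique (hS hx) (mem_inner.1 hb).2 h4 h5 h1 h2 h3)
  · intro h; exact absurd (mem_inner.2 ⟨hw, h1⟩) h

lemma sum_root {A : Finset V} {u v : V} (hr : Root A u v) (hi : (inner A u v).Nonempty)
    {M : Type*} [AddCommMonoid M] (g : Finset (Sym2 V) → M) :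
    ∑ x ∈ Tri A, g x = ∑ w ∈ inner A u v, ∑ x ∈ Om A u w v, g x := by
  rw [sum_apex hi (Subset.refl _) (fun x hx => hr.mem hx)]
  refine sum_congr rfl (fun w hw => sum_congr ?_ (fun _ _ => rfl))
  ext x
  rw [mem_filter, mem_Om]
  constructor
  · rintro ⟨h1, h2, h3⟩
    exact ⟨h1, h2, h3, Sym2.eq_swap ▸ hr.mem h1⟩
  · tauto

/-- triangulations containing the triangles `p q r` and `r s p` -/
noncomputable def Qd (A : Finset V) (p q r s : V) : Finset (Finset (Sym2 V)) :=
  (Om A p q r).filter (fun x => s(r, s) ∈ x ∧ s(s, p) ∈ x)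

lemma mem_Qd {A : Finset V} {p q r s : V} {x : Finset (Sym2 V)} : x ∈ Qd A p q r s ↔
    x ∈ Tri A ∧ s(p, q) ∈ x ∧ s(q, r) ∈ x ∧ s(r, p) ∈ x ∧ s(r, s) ∈ x ∧ s(s, p) ∈ x := by
  simp only [Qd, mem_filter, mem_Om]; tauto

lemma Qd_rot2 (A : Finset V) (p q r s : V) : Qd A p q r s = Qd A r s p q := by
  ext x; simp only [mem_Qd]
  rw [Sym2.eq_swap (a := r) (b := p)]; tauto

lemma sum_Qd {A : Finset V} {p q r : V} (hi : (inner A r p).Nonempty)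
    {M : Type*} [AddCommMonoid M] (g : Finset (Sym2 V) → M) :
    ∑ x ∈ Om A p q r, g x = ∑ s ∈ inner A r p, ∑ x ∈ Qd A p q r s, g x := by
  rw [sum_apex hi (fun x hx => (mem_Om.1 hx).1) (fun x hx => (mem_Om.1 hx).2.2.2)]
  rfl

/-- the flip in the quadrilateral `p q r s`, replacing `p r` by `q s` -/
noncomputable def flip (p q r s : V) (x : Finset (Sym2 V)) : Finset (Sym2 V) :=
  insert s(q, s) (x.erase s(p, r))

lemma mem_flip {p q r s a b : V} {x : Finset (Sym2 V)} :
    s(a, b) ∈ flip p q r s x ↔ s(a, b) = s(q, s) ∨ (s(a, b) ≠ s(p, r) ∧ s(a, b) ∈ x) := by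
  simp [flip]

lemma geoQ {p q r s c d : V} (h1 : sb p q r) (h2 : sb r s p) (h : cr q s c d)
    (n1 : ¬ cr p q c d) (n1' : ¬ cr q p c d) (n2 : ¬ cr q r c d) (n2' : ¬ cr r q c d)
    (n3 : ¬ cr r s c d) (n3' : ¬ cr s r c d) (n4 : ¬ cr s p c d) (n4' : ¬ cr p s c d) :
    c = r ∧ d = p := by
  unfold cr sb at *
  grind (splits := 20)

lemma sb_quad {p q r s : V} (h1 : sb p q r) (h2 : sb r s p) : sb q r s ∧ sb s p q := by
  unfold sb at *
  grind

lemma flip_mem {A : Finset V} {p q r s : V} (h1 : sb p q r) (h2 : sb r s p)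
    {x : Finset (Sym2 V)} (hx : x ∈ Qd A p q r s) : flip p q r s x ∈ Qd A q r s p := by
  obtain ⟨hx, E1, E2, E3, E4, E5⟩ := mem_Qd.1 hx
  have hq := sb_quad h1 h2
  have ne1 := sb_ne h1
  have ne2 := sb_ne h2
  have ne3 := sb_ne hq.1
  have sym : ∀ {a b}, s(a, b) ∈ x → s(b, a) ∈ x := fun h => Sym2.eq_swap ▸ h
  -- anything crossing `q s` and in `x` or noncrossing with the boundary is `p r`
  have K1 : ∀ {c d}, s(c, d) ∈ x → cr q s c d → c = r ∧ d = p := fun {c d} hcd hcr =>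
    geoQ h1 h2 hcr (Tri.nc hx E1 hcd) (Tri.nc hx (sym E1) hcd) (Tri.nc hx E2 hcd)
      (Tri.nc hx (sym E2) hcd) (Tri.nc hx E4 hcd) (Tri.nc hx (sym E4) hcd)
      (Tri.nc hx E5 hcd) (Tri.nc hx (sym E5) hcd)
  have crr : ∀ {a b c d : V}, cr a b c d → cr b a d c := fun h => cr_swap.1 h
  have K2 : ∀ {c d}, s(c, d) ∈ x → cr s q c d → c = p ∧ d = r := fun {c d} hcd hcr =>
    (K1 (sym hcd) (crr hcr)).symm
  have hbd : ∀ e ∈ ({s(p, q), s(q, r), s(r, s), s(s, p)} : Finset (Sym2 V)),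
      e ∈ flip p q r s x := by
    intro e he
    simp only [mem_insert, mem_singleton] at he
    rcases he with rfl | rfl | rfl | rfl <;> rw [mem_flip] <;> right
    · refine ⟨?_, E1⟩; simp; grind
    · refine ⟨?_, E2⟩; simp; grind
    · refine ⟨?_, E4⟩; simp; grind
    · refine ⟨?_, E5⟩; simp; grind
  have B1 := hbd s(p, q) (by simp)
  have B2 := hbd s(q, r) (by simp)
  have B3 := hbd s(r, s) (by simp)
  have B4 := hbd s(s, p) (by simp)
  have B5 : s(q, s) ∈ flip p q r s x := mem_flip.2 (Or.inl rfl)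
  have symf : ∀ {a b}, s(a, b) ∈ flip p q r s x → s(b, a) ∈ flip p q r s x :=
    fun h => Sym2.eq_swap ▸ h
  refine mem_Qd.2 ⟨mem_Tri.2 ⟨?_, ?_⟩, B2, B3, symf B5, B4, B1⟩
  · intro a b hab
    rcases mem_flip.1 hab with h | h
    · rw [Sym2.eq_iff] at h
      have hqA := (Tri.mem hx E2).1
      have hsA := (Tri.mem hx E4).2
      rcases h with ⟨rfl, rfl⟩ | ⟨rfl, rfl⟩ <;> exact ⟨by assumption, by assumption⟩
    · exact Tri.mem hx h.2
  · intro a ha b hb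
    constructor
    · intro hab c d hcd hcr
      rcases mem_flip.1 hab with h | h <;> rcases mem_flip.1 hcd with h' | h'
      · rw [Sym2.eq_iff] at h h'
        rcases h with ⟨rfl, rfl⟩ | ⟨rfl, rfl⟩ <;> rcases h' with ⟨rfl, rfl⟩ | ⟨rfl, rfl⟩ <;>
          · unfold cr sb at hcr; grind
      · rw [Sym2.eq_iff] at h
        apply h'.1
        rcases h with ⟨rfl, rfl⟩ | ⟨rfl, rfl⟩
        · obtain ⟨rfl, rfl⟩ := K1 h'.2 hcr; exact Sym2.eq_swap
        · obtain ⟨rfl, rfl⟩ := K2 h'.2 hcr; rfl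
      · rw [Sym2.eq_iff] at h'
        apply h.1
        have hcr' := cr_symm hcr
        rcases h' with ⟨rfl, rfl⟩ | ⟨rfl, rfl⟩
        · obtain ⟨rfl, rfl⟩ := K1 (sym h.2) hcr'; rfl
        · obtain ⟨rfl, rfl⟩ := K2 (sym h.2) hcr'; exact Sym2.eq_swap
      · exact Tri.nc hx h.2 h'.2 hcr
    · intro H
      by_cases hH : ∀ c d, s(c, d) ∈ x → ¬ cr a b c d
      · refine mem_flip.2 (Or.inr ⟨?_, Tri.max hx ha hb hH⟩)
        intro he
        rw [Sym2.eq_iff] at he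
        have c1 : cr p r q s := ⟨h1, h2⟩
        rcases he with ⟨rfl, rfl⟩ | ⟨rfl, rfl⟩
        · exact H _ _ B5 c1
        · exact H _ _ (symf B5) (crr c1)
      · push Not at hH
        obtain ⟨c, d, hcd, hcr⟩ := hH
        have he : s(c, d) = s(p, r) := by
          by_contra hne
          exact H c d (mem_flip.2 (Or.inr ⟨hne, hcd⟩)) hcr
        -- `a b` crosses `p r`
        have N : ∀ {c d}, s(c, d) ∈ flip p q r s x → ¬ cr c d a b ∧ ¬ cr d c a b := by
          intro c d h
          exact ⟨fun h' => H _ _ (symf h) (by have := cr_symm h'; exact crr (crr this)),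
            fun h' => H _ _ h (by have := cr_symm h'; exact this)⟩
        have G : ∀ {a b}, cr r p a b → (∀ {c d}, s(c, d) ∈ flip p q r s x → ¬ cr c d a b ∧ ¬ cr d c a b)
            → a = s ∧ b = q := by
          intro a b hab N
          exact geoQ (p := q) (q := r) (r := s) (s := p) hq.1 hq.2 hab (N B2).1 (N B2).2 (N B3).1 (N B3).2 (N B4).1 (N B4).2
            (N B1).1 (N B1).2
        have hcr' := cr_symm hcr
        rw [mem_flip]; left
        rw [Sym2.eq_iff] at he
        have N' : ∀ {c d}, s(c, d) ∈ flip p q r s x → ¬ cr c d b a ∧ ¬ cr d c b a := fun h =>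
          ⟨fun h' => (N h).2 (crr h'), fun h' => (N h).1 (crr h')⟩
        rcases he with ⟨rfl, rfl⟩ | ⟨rfl, rfl⟩
        · obtain ⟨rfl, rfl⟩ := G (crr hcr') N; exact Sym2.eq_swap
        · obtain ⟨rfl, rfl⟩ := G hcr' N'; rfl

lemma flip_adj {A : Finset V} {p q r s : V} (h1 : sb p q r) (h2 : sb r s p)
    {x : Finset (Sym2 V)} (hx : x ∈ Qd A p q r s) : adj x (flip p q r s x) := by
  obtain ⟨hx, E1, E2, E3, E4, E5⟩ := mem_Qd.1 hx
  have E3' : s(p, r) ∈ x := Sym2.eq_swap ▸ E3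
  have hq : s(q, s) ∉ x := fun h => Tri.nc hx E3' h ⟨h1, h2⟩
  constructor
  · rw [card_eq_one]
    refine ⟨s(p, r), ?_⟩
    ext e
    simp only [flip, mem_sdiff, mem_insert, mem_erase, mem_singleton]
    grind
  · rw [card_eq_one]
    refine ⟨s(q, s), ?_⟩
    ext e
    simp only [flip, mem_sdiff, mem_insert, mem_erase, mem_singleton]
    grind

lemma flip_flip {A : Finset V} {p q r s : V} (h1 : sb p q r) (h2 : sb r s p)
    {x : Finset (Sym2 V)} (hx : x ∈ Qd A p q r s) : flip q r s p (flip p q r s x) = x := by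
  obtain ⟨hx, E1, E2, E3, E4, E5⟩ := mem_Qd.1 hx
  have E3' : s(p, r) ∈ x := Sym2.eq_swap ▸ E3
  have hq : s(q, s) ∉ x := fun h => Tri.nc hx E3' h ⟨h1, h2⟩
  ext e
  simp only [flip, mem_insert, mem_erase]
  rw [Sym2.eq_swap (a := r) (b := p)]
  grind

lemma sum_flip {A : Finset V} {p q r s : V} (h1 : sb p q r) (h2 : sb r s p)
    {M : Type*} [AddCommMonoid M] (g : Finset (Sym2 V) → M) :
    ∑ x ∈ Qd A q r s p, g x = ∑ x ∈ Qd A p q r s, g (flip p q r s x) := by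
  have hq := sb_quad h1 h2
  symm
  refine sum_nbij' (flip p q r s) (flip q r s p) ?_ ?_ ?_ ?_ ?_
  · intro x hx; exact flip_mem h1 h2 hx
  · intro x hx
    rw [Qd_rot2]
    have := flip_mem hq.1 hq.2 hx
    rwa [← Qd_rot2] at this ⊢
  · intro x hx; exact flip_flip h1 h2 hx
  · intro x hx
    have := flip_flip hq.1 hq.2 hx
    have e : flip r s p q = flip p q r s := by
      funext y; unfold flip
      rw [Sym2.eq_swap (a := s) (b := q), Sym2.eq_swap (a := r) (b := p)]
    rwa [e] at this
  · intros; rfl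

end apex
end Assoc

namespace Assoc
open scoped Classical
set_option linter.all false

section count
variable {V : Type*} [LinearOrder V]

/-- Catalan numbers indexed by the number of sides of the arc -/
noncomputable def gam (k : ℕ) : ℝ := (catalan (k - 1) : ℝ)

lemma arc_inter_card {A : Finset V} {u w v : V} (hw : w ∈ A) (h : sb u w v) :
    (arc A u w).card + (arc A w v).card = (arc A u v).card + 1 := by
  have e1 : arc A u w ∪ arc A w v = arc A u v := by
    ext a
    simp only [mem_union, mem_arc]
    constructor
    · rintro (⟨h1, h2⟩ | ⟨h1, h2⟩) <;> refine ⟨h1, ?_⟩ <;> (unfold inarc sb at *; grind)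
    · rintro ⟨h1, h2⟩
      have : inarc u w a ∨ inarc w v a := by unfold inarc sb at *; grind
      tauto
  have e2 : arc A u w ∩ arc A w v = {w} := by
    ext a
    simp only [mem_inter, mem_arc, mem_singleton]
    constructor
    · rintro ⟨⟨h1, h2⟩, h3, h4⟩; exact inarc_inter h h2 h4
    · rintro rfl; exact ⟨⟨hw, Or.inr (Or.inl rfl)⟩, hw, Or.inl rfl⟩
  have := card_union_add_card_inter (arc A u w) (arc A w v)
  rw [e1, e2, card_singleton] at this
  omega

lemma arc_compl_card {A : Finset V} {u v : V} (hu : u ∈ A) (hv : v ∈ A) (h : u ≠ v) :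
    (arc A u v).card + (arc A v u).card = A.card + 2 := by
  have e1 : arc A u v ∪ arc A v u = A := by
    ext a
    simp only [mem_union, mem_arc]
    constructor
    · tauto
    · intro ha
      have : inarc u v a ∨ inarc v u a := by unfold inarc sb at *; grind
      tauto
  have e2 : arc A u v ∩ arc A v u = {u, v} := by
    ext a
    simp only [mem_inter, mem_arc, mem_singleton, mem_insert]
    constructor
    · rintro ⟨⟨h1, h2⟩, h3, h4⟩; unfold inarc sb at *; grind
    · rintro (rfl | rfl) <;> simp [inarc, hu, hv]
  have := card_union_add_card_inter (arc A u v) (arc A v u)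
  rw [e1, e2, card_pair h] at this
  omega

lemma two_le_arc {A : Finset V} {u v : V} (hu : u ∈ A) (hv : v ∈ A) (h : u ≠ v) :
    2 ≤ (arc A u v).card := by
  rw [← card_pair h]
  apply card_le_card
  intro a; simp only [mem_insert, mem_singleton, mem_arc]
  rintro (rfl | rfl) <;> simp [inarc, hu, hv]

lemma inner_card {A : Finset V} {u v : V} (hu : u ∈ A) (hv : v ∈ A) (h : u ≠ v) :
    (inner A u v).card + 2 = (arc A u v).card := by
  have : arc A u v = insert u (insert v (inner A u v)) := by
    ext a; simp only [mem_insert, mem_arc, mem_inner, inarc]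
    constructor
    · tauto
    · rintro (rfl | rfl | ⟨h1, h2⟩) <;> simp [*]
  rw [this, card_insert_of_notMem, card_insert_of_notMem]
  · rw [mem_inner]; rintro ⟨-, h⟩; exact (sb_ne h).2.1 rfl
  · rw [mem_insert, mem_inner]
    rintro (h' | ⟨-, h'⟩)
    · exact h h'
    · exact (sb_ne h').1 rfl

lemma card_eq_sum_one {α : Type*} (S : Finset α) : S.card = ∑ x ∈ S, 1 := by simp

lemma card_Om' {A : Finset V} {p q r : V} (hp : p ∈ A) (hq : q ∈ A) (hr : r ∈ A) (h : sb p q r) :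
    (Om A p q r).card =
      (Tri (arc A p q)).card * (Tri (arc A q r)).card * (Tri (arc A r p)).card := by
  rw [card_eq_sum_one, sum_Om hp hq hr h]
  simp [mul_assoc]

lemma card_Tri_root : ∀ (k : ℕ) (A : Finset V) (u v : V), Root A u v → A.card = k + 2 →
    (Tri A).card = catalan k := by
  intro k
  induction k using Nat.strong_induction_on with
  | _ k ih =>
    intro A u v hr hA
    rcases k with _ | k
    · have : A = {u, v} := by
        symm
        apply eq_of_subset_of_card_le
        · intro a; simp only [mem_insert, mem_singleton]
          rintro (rfl | rfl)
          · exact hr.hu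
          · exact hr.hv
        · rw [card_pair hr.ne, hA]
      rw [this, Tri_pair]; simp
    · have hc := inner_card hr.hu hr.hv hr.ne
      rw [hr.arc_eq, hA] at hc
      have hne : (inner A u v).Nonempty := by
        rw [← card_pos]; omega
      have hback : arc A v u = {u, v} := by
        have := arc_back A hr.hu hr.hv
        rwa [hr.arc_eq] at this
      rw [card_eq_sum_one, sum_root hr hne, catalan_succ',
        Finset.Nat.sum_antidiagonal_eq_sum_range_succ (fun a b => catalan a * catalan b)]
      have hA' : ∀ w ∈ inner A u v, (arc A u w).card + (arc A w v).card = k + 4 ∧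
          2 ≤ (arc A u w).card ∧ 2 ≤ (arc A w v).card := by
        intro w hw
        rw [mem_inner] at hw
        have h1 := arc_inter_card hw.1 hw.2
        rw [hr.arc_eq, hA] at h1
        have hne := sb_ne hw.2
        exact ⟨by omega, two_le_arc hr.hu hw.1 hne.1, two_le_arc hw.1 hr.hv hne.2.1⟩
      have inj : Set.InjOn (fun w => (arc A u w).card - 2) (inner A u v) := by
        intro w hw w' hw' he
        have h1 := hA' w hw
        have h2 := hA' w' hw'
        simp only at he
        rw [mem_coe, mem_inner] at hw hw'
        by_contra hne
        rcases sb_total (sb_ne hw.2).1 hne (sb_ne hw'.2).1 with h | h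
        · have := card_arc_lt hw'.1 h; omega
        · have := card_arc_lt hw.1 h; omega
      have himg : (inner A u v).image (fun w => (arc A u w).card - 2) = range (k + 1) := by
        apply eq_of_subset_of_card_le
        · intro i hi
          rw [mem_image] at hi
          obtain ⟨w, hw, rfl⟩ := hi
          have := hA' w hw
          rw [mem_range]; omega
        · rw [card_image_of_injOn inj, card_range]; omega
      rw [← himg, sum_image inj]
      refine sum_congr rfl (fun w hw => ?_)
      have h1 := hA' w hw
      rw [mem_inner] at hw
      have hne := sb_ne hw.2
      rw [← card_eq_sum_one, card_Om' hr.hu hw.1 hr.hv hw.2, hback, Tri_pair, card_singleton, mul_one]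
      rw [ih ((arc A u w).card - 2) (by omega) _ u w (root_arc hr.hu hw.1 hne.1) (by omega)]
      rw [ih ((arc A w v).card - 2) (by omega) _ w v (root_arc hw.1 hr.hv hne.2.1) (by omega)]
      congr 2
      omega

lemma exists_root {A : Finset V} (hA : 2 ≤ A.card) : ∃ u v, Root A u v := by
  have hne : A.Nonempty := by rw [← card_pos]; omega
  refine ⟨A.min' hne, A.max' hne, A.min'_mem hne, A.max'_mem hne, ?_, ?_⟩
  · have := A.min'_lt_max'_of_card (by omega)
    exact this.ne
  · intro a ha
    have h1 := A.min'_le a ha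
    have h2 := A.le_max' a ha
    unfold inarc sb
    grind

lemma card_Tri {A : Finset V} (hA : 2 ≤ A.card) : ((Tri A).card : ℝ) = gam (A.card - 1) := by
  obtain ⟨u, v, h⟩ := exists_root hA
  rw [gam, card_Tri_root (A.card - 2) A u v h (by omega)]
  rfl

/-- length of the arc -/
noncomputable def len (A : Finset V) (u v : V) : ℕ := (arc A u v).card - 1

lemma card_Tri_arc {A : Finset V} {u v : V} (hu : u ∈ A) (hv : v ∈ A) (h : u ≠ v) :
    ((Tri (arc A u v)).card : ℝ) = gam (len A u v) := card_Tri (two_le_arc hu hv h)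

lemma len_pos {A : Finset V} {u v : V} (hu : u ∈ A) (hv : v ∈ A) (h : u ≠ v) :
    1 ≤ len A u v := by
  have := two_le_arc hu hv h
  unfold len; omega

lemma len_add {A : Finset V} {u w v : V} (hu : u ∈ A) (hw : w ∈ A) (hv : v ∈ A) (h : sb u w v) :
    len A u w + len A w v = len A u v := by
  have hne := sb_ne h
  have := arc_inter_card hw h
  have h1 := two_le_arc hu hw hne.1
  have h2 := two_le_arc hw hv hne.2.1
  unfold len; omega

lemma card_Om {A : Finset V} {p q r : V} (hp : p ∈ A) (hq : q ∈ A) (hr : r ∈ A) (h : sb p q r) :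
    ((Om A p q r).card : ℝ) = gam (len A p q) * gam (len A q r) * gam (len A r p) := by
  have hne := sb_ne h
  rw [card_Om' hp hq hr h]
  push_cast
  rw [card_Tri_arc hp hq hne.1, card_Tri_arc hq hr hne.2.1, card_Tri_arc hr hp hne.2.2.symm]

lemma sum_Qd_prod {A : Finset V} {p q r s : V}
    (hp : p ∈ A) (hq : q ∈ A) (hr : r ∈ A) (hs : s ∈ A) (h : sb p q r) (h' : sb r s p)
    {M : Type*} [AddCommMonoid M] (g : Finset (Sym2 V) → M) :
    ∑ x ∈ Qd A p q r s, g x =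
      ∑ x1 ∈ Tri (arc A p q), ∑ x2 ∈ Tri (arc A q r), ∑ x3 ∈ Om (arc A r p) r s p,
        g (x1 ∪ x2 ∪ x3) := by
  unfold Qd
  rw [sum_filter, sum_Om hp hq hr h]
  refine sum_congr rfl (fun x1 h1 => sum_congr rfl (fun x2 h2 => ?_))
  unfold Om
  rw [sum_filter]
  refine sum_congr rfl (fun x3 h3 => ?_)
  have hr' : r ∈ arc A r p := mem_arc.2 ⟨hr, Or.inl rfl⟩
  have hp' : p ∈ arc A r p := mem_arc.2 ⟨hp, Or.inr (Or.inl rfl)⟩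
  have hs' : s ∈ arc A r p := mem_arc.2 ⟨hs, Or.inr (Or.inr h')⟩
  have e : x1 ∪ x2 ∪ x3 = x3 ∪ x1 ∪ x2 := by rw [union_comm, ← union_assoc]
  have e3 := Tri.root hr hp h3
  have e3' : s(p, r) ∈ x3 := Sym2.eq_swap ▸ e3
  rw [e]
  have i1 := mem_union_piece (sb_rot' h) h3 h1 h2 hr' hs'
  have i2 := mem_union_piece (sb_rot' h) h3 h1 h2 hs' hp'
  refine if_congr ?_ rfl rfl
  rw [i1, i2]
  tauto

lemma len_arc_left {A : Finset V} {u w v : V} (h : sb u w v) :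
    len (arc A u v) u w = len A u w := by unfold len; rw [arc_arc_left h]
lemma len_arc_right {A : Finset V} {u w v : V} (h : sb u w v) :
    len (arc A u v) w v = len A w v := by unfold len; rw [arc_arc_right h]

lemma gam_one : gam 1 = 1 := by simp [gam]

lemma card_Om_root {A : Finset V} {u v w : V} (hr : Root A u v) (hw : w ∈ inner A u v) :
    ((Om A u w v).card : ℝ) = gam (len A u w) * gam (len A w v) := by
  rw [mem_inner] at hw
  rw [card_Om hr.hu hw.1 hr.hv hw.2]
  have hback : arc A v u = {u, v} := by
    have := arc_back A hr.hu hr.hv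
    rwa [hr.arc_eq] at this
  have : len A v u = 1 := by
    unfold len; rw [hback, card_pair hr.ne]
  rw [this, gam_one, mul_one]

lemma card_Qd {A : Finset V} {p q r s : V}
    (hp : p ∈ A) (hq : q ∈ A) (hr : r ∈ A) (hs : s ∈ A) (h : sb p q r) (h' : sb r s p) :
    ((Qd A p q r s).card : ℝ) = gam (len A p q) * gam (len A q r) *
      (gam (len A r s) * gam (len A s p)) := by
  have hne := sb_ne h
  have : (Qd A p q r s).card = (Tri (arc A p q)).card * ((Tri (arc A q r)).card *
      (Om (arc A r p) r s p).card) := by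
    rw [card_eq_sum_one, sum_Qd_prod hp hq hr hs h h']
    simp
  rw [this]
  have hs' : s ∈ inner (arc A r p) r p := mem_inner.2 ⟨mem_arc.2 ⟨hs, Or.inr (Or.inr h')⟩, h'⟩
  push_cast
  rw [card_Om_root (root_arc hr hp hne.2.2.symm) hs', card_Tri_arc hp hq hne.1,
    card_Tri_arc hq hr hne.2.1, len_arc_left h', len_arc_right h']
  ring

end count

section catalan

lemma gam_succ (k : ℕ) (hk : 1 ≤ k) : gam (k + 1) * (k + 1) = 2 * (2 * k - 1) * gam k := by
  obtain ⟨n, rfl⟩ : ∃ n, k = n + 1 := ⟨k - 1, by omega⟩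
  unfold gam
  simp only [Nat.add_sub_cancel]
  have h1 := succ_mul_catalan_eq_centralBinom n
  have h2 := succ_mul_catalan_eq_centralBinom (n + 1)
  have h3 := Nat.succ_mul_centralBinom_succ n
  rw [← h1, ← h2] at h3
  have h4 : ((n : ℝ) + 1) * ((n + 1 + 1) * catalan (n + 1)) =
    2 * (2 * n + 1) * ((n + 1) * catalan n) := by exact_mod_cast h3
  have hn : (n : ℝ) + 1 ≠ 0 := by positivity
  push_cast
  apply mul_left_cancel₀ hn
  linarith

lemma gam_pos (k : ℕ) : 0 < gam k := by
  unfold gam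
  have : 0 < catalan (k - 1) := by
    have h1 := succ_mul_catalan_eq_centralBinom (k - 1)
    have h2 := Nat.centralBinom_pos (k - 1)
    by_contra h
    simp only [not_lt, Nat.le_zero] at h
    rw [h] at h1; omega
  exact_mod_cast this

lemma gam_logconv1 (k l : ℕ) (hk : 1 ≤ k) (hkl : k ≤ l) :
    gam (k + 1) * gam l ≤ gam k * gam (l + 1) := by
  have h1 := gam_succ k hk
  have h2 := gam_succ l (hk.trans hkl)
  have pk := gam_pos k
  have pl := gam_pos l
  have hk' : (1 : ℝ) ≤ k := by exact_mod_cast hk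
  have hkl' : (k : ℝ) ≤ l := by exact_mod_cast hkl
  have e1 : gam (k + 1) = 2 * (2 * k - 1) * gam k / (k + 1) := by
    rw [eq_div_iff (by positivity)]; exact h1
  have e2 : gam (l + 1) = 2 * (2 * l - 1) * gam l / (l + 1) := by
    rw [eq_div_iff (by positivity)]; exact h2
  rw [e1, e2, div_mul_eq_mul_div, mul_div_assoc', div_le_div_iff₀ (by positivity) (by positivity)]
  have : (2 * (k : ℝ) - 1) * (l + 1) ≤ (2 * l - 1) * (k + 1) := by nlinarith
  have hh := mul_le_mul_of_nonneg_right this (mul_pos pk pl).le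
  nlinarith

lemma gam_logconv (d a b : ℕ) (hd : 1 ≤ d) :
    gam (b + d) * gam (a + d) ≤ gam d * gam (a + b + d) := by
  induction a with
  | zero => simp [mul_comm]
  | succ a ih =>
    have h := gam_logconv1 (a + d) (a + b + d) (by omega) (by omega)
    have e1 : a + 1 + d = a + d + 1 := by omega
    have e2 : a + 1 + b + d = a + b + d + 1 := by omega
    rw [e1, e2]
    have p1 := gam_pos (a + d)
    have p2 := gam_pos (a + b + d)
    have p3 := gam_pos (b + d)
    have p4 := gam_pos d
    have p5 := gam_pos (a + d + 1)
    have : gam (b + d) * gam (a + d + 1) * gam (a + b + d) ≤ gam d * gam (a + b + d + 1) * gam (a + b + d) := by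
      calc gam (b + d) * gam (a + d + 1) * gam (a + b + d)
          = gam (b + d) * (gam (a + d + 1) * gam (a + b + d)) := by ring
        _ ≤ gam (b + d) * (gam (a + d) * gam (a + b + d + 1)) := by gcongr
        _ = gam (b + d) * gam (a + d) * gam (a + b + d + 1) := by ring
        _ ≤ gam d * gam (a + b + d) * gam (a + b + d + 1) := by
            have := gam_pos (a + b + d + 1); gcongr
        _ = _ := by ring
    exact le_of_mul_le_mul_right this p2

lemma gam_sq_upper (k : ℕ) (hk : 1 ≤ k) : gam k ^ 2 * k ^ 3 ≤ 16 ^ k / 16 := by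
  induction k, hk using Nat.le_induction with
  | base => simp [gam]
  | succ k hk ih =>
    have h := gam_succ k hk
    have hk' : (1 : ℝ) ≤ k := by exact_mod_cast hk
    have hp := gam_pos k
    push_cast
    have e : gam (k + 1) ^ 2 * ((k : ℝ) + 1) ^ 3 = 4 * (2 * k - 1) ^ 2 * gam k ^ 2 * (k + 1) := by
      calc _ = (gam (k + 1) * (k + 1)) ^ 2 * (k + 1) := by ring
        _ = _ := by rw [h]; ring
    rw [e, pow_succ (16 : ℝ)]
    have : 4 * (2 * (k : ℝ) - 1) ^ 2 * (k + 1) ≤ 16 * k ^ 3 := by nlinarith [sq_nonneg ((k : ℝ) - 1)]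
    have := mul_le_mul_of_nonneg_right this (sq_nonneg (gam k))
    nlinarith

lemma gam_sq_lower' (k : ℕ) (hk : 2 ≤ k) : 16 ^ k / 64 ≤ gam k ^ 2 * (k ^ 2 * (k - 1)) := by
  induction k, hk using Nat.le_induction with
  | base => norm_num [gam]
  | succ k hk ih =>
    have h := gam_succ k (by omega)
    have hk' : (2 : ℝ) ≤ k := by exact_mod_cast hk
    have hp := gam_pos k
    push_cast
    have e : gam (k + 1) ^ 2 * (((k : ℝ) + 1) ^ 2 * (k + 1 - 1)) = 4 * (2 * k - 1) ^ 2 * gam k ^ 2 * k := by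
      calc _ = (gam (k + 1) * (k + 1)) ^ 2 * k := by ring
        _ = _ := by rw [h]; ring
    rw [e, pow_succ (16 : ℝ)]
    have : 16 * ((k : ℝ) ^ 2 * (k - 1)) ≤ 4 * (2 * k - 1) ^ 2 * k := by nlinarith
    have := mul_le_mul_of_nonneg_right this (sq_nonneg (gam k))
    nlinarith

lemma gam_sq_lower (k : ℕ) (hk : 1 ≤ k) : 16 ^ k / 64 ≤ gam k ^ 2 * k ^ 3 := by
  rcases Nat.lt_or_ge k 2 with h | h
  · obtain rfl : k = 1 := by omega
    norm_num [gam]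
  · refine (gam_sq_lower' k h).trans ?_
    have hk' : (2 : ℝ) ≤ k := by exact_mod_cast h
    have : (k : ℝ) ^ 2 * (k - 1) ≤ k ^ 3 := by nlinarith [sq_nonneg (k : ℝ)]
    gcongr

/-- `k^{3/2}` -/
noncomputable def th (k : ℕ) : ℝ := k * Real.sqrt k

lemma th_sq (k : ℕ) : th k ^ 2 = (k : ℝ) ^ 3 := by
  unfold th; rw [mul_pow, Real.sq_sqrt (Nat.cast_nonneg k)]; ring

lemma th_pos {k : ℕ} (hk : 1 ≤ k) : 0 < th k := by
  have : (0 : ℝ) < k := by exact_mod_cast hk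
  unfold th; positivity

lemma th_mono {k l : ℕ} (h : k ≤ l) : th k ≤ th l := by
  unfold th
  have : (k : ℝ) ≤ l := by exact_mod_cast h
  gcongr

lemma gam_upper (k : ℕ) (hk : 1 ≤ k) : gam k * th k ≤ 4 ^ k / 4 := by
  have h := gam_sq_upper k hk
  have : (gam k * th k) ^ 2 ≤ (4 ^ k / 4) ^ 2 := by
    rw [mul_pow, th_sq, div_pow, ← pow_mul, mul_comm k 2, pow_mul]; norm_num; linarith
  exact le_of_sq_le_sq this (by positivity)
where
  le_of_sq_le_sq {a b : ℝ} (h : a ^ 2 ≤ b ^ 2) (hb : 0 ≤ b) : a ≤ b :=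
    (le_abs_self a).trans (abs_le_of_sq_le_sq h hb)

lemma gam_lower (k : ℕ) (hk : 1 ≤ k) : 4 ^ k / 8 ≤ gam k * th k := by
  have h := gam_sq_lower k hk
  have : (4 ^ k / 8) ^ 2 ≤ (gam k * th k) ^ 2 := by
    rw [mul_pow, th_sq, div_pow, ← pow_mul, mul_comm k 2, pow_mul]; norm_num; linarith
  exact gam_upper.le_of_sq_le_sq this (mul_pos (gam_pos k) (th_pos hk)).le

/-- splitting an arc costs at most `m^{3/2}` -/
lemma gam_split (a b m : ℕ) (ha : 1 ≤ a) (hb : 1 ≤ b) (hm : a + b ≤ m) :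
    gam (a + b) ≤ 16 * th m * (gam a * gam b) := by
  have h1 := gam_upper (a + b) (by omega)
  have h2 := gam_lower a ha
  have h3 := gam_lower b hb
  have ta := th_pos ha
  have tb := th_pos hb
  have tab := th_pos (k := a + b) (by omega)
  have key : th a * th b ≤ th m * th (a + b) :=
    mul_le_mul (th_mono (by omega)) (th_mono (by omega)) tb.le (th_pos (by omega)).le
  have pa := gam_pos a
  have pb := gam_pos b
  have h4 : (4 : ℝ) ^ (a + b) / 64 ≤ gam a * gam b * (th a * th b) := by
    calc (4 : ℝ) ^ (a + b) / 64 = (4 ^ a / 8) * (4 ^ b / 8) := by rw [pow_add]; ring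
      _ ≤ (gam a * th a) * (gam b * th b) := by gcongr
      _ = _ := by ring
  have h5 : gam (a + b) * th (a + b) ≤ 16 * th m * (gam a * gam b) * th (a + b) := by
    calc gam (a + b) * th (a + b) ≤ 16 * (4 ^ (a + b) / 64) := by linarith
      _ ≤ 16 * (gam a * gam b * (th a * th b)) := by gcongr
      _ ≤ 16 * (gam a * gam b * (th m * th (a + b))) := by gcongr
      _ = _ := by ring
  exact le_of_mul_le_mul_right h5 tab

/-- comparing two splittings -/
lemma gam_compare (a c a' c' : ℕ) (ha : 1 ≤ a) (hc : 1 ≤ c) (ha' : 1 ≤ a') (hc' : 1 ≤ c')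
    (h : a + c = a' + c') :
    gam a * gam c * (th a * th c) ≤ 4 * (gam a' * gam c') * (th a' * th c') := by
  have h1 := gam_upper a ha
  have h1' := gam_upper c hc
  have h2 := gam_lower a' ha'
  have h3 := gam_lower c' hc'
  have pc := gam_pos c
  have pa' := gam_pos a'
  have tc := th_pos hc
  have ta' := th_pos ha'
  calc gam a * gam c * (th a * th c) = (gam a * th a) * (gam c * th c) := by ring
    _ ≤ (4 ^ a / 4) * (4 ^ c / 4) := by gcongr
    _ = 4 ^ (a + c) / 16 := by rw [pow_add]; ring
    _ = 4 * ((4 ^ a' / 8) * (4 ^ c' / 8)) := by rw [h, pow_add]; ring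
    _ ≤ 4 * ((gam a' * th a') * (gam c' * th c')) := by gcongr
    _ = _ := by ring

end catalan
end Assoc

namespace Assoc
open scoped Classical
set_option linter.all false

section energy
variable {V : Type*} [LinearOrder V]

/-- edge energy -/
noncomputable def en (f : Finset (Sym2 V) → ℝ) (x y : Finset (Sym2 V)) : ℝ :=
  if adj x y then |f x - f y| else 0

lemma en_nonneg (f : Finset (Sym2 V) → ℝ) (x y) : 0 ≤ en f x y := by
  unfold en; split_ifs <;> positivity

lemma en_comm (f : Finset (Sym2 V) → ℝ) (x y) : en f x y = en f y x := by
  unfold en; rw [adj_comm, abs_sub_comm]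

lemma en_self (f : Finset (Sym2 V) → ℝ) (x) : en f x x = 0 := by
  unfold en; rw [if_neg adj_irrefl]

/-- total energy over ordered pairs -/
noncomputable def En (S : Finset (Finset (Sym2 V))) (f : Finset (Sym2 V) → ℝ) : ℝ :=
  ∑ x ∈ S, ∑ y ∈ S, en f x y

lemma En_nonneg (S : Finset (Finset (Sym2 V))) (f) : 0 ≤ En S f :=
  sum_nonneg (fun _ _ => sum_nonneg (fun _ _ => en_nonneg _ _ _))

/-- energy in the third component -/
noncomputable def P3 (A : Finset V) (p q r : V) (f : Finset (Sym2 V) → ℝ) : ℝ :=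
  ∑ x1 ∈ Tri (arc A p q), ∑ x2 ∈ Tri (arc A q r), En (Tri (arc A r p)) (fun x3 => f (x1 ∪ x2 ∪ x3))

lemma P3_nonneg (A : Finset V) (p q r : V) (f) : 0 ≤ P3 A p q r f :=
  sum_nonneg (fun _ _ => sum_nonneg (fun _ _ => En_nonneg _ _))

lemma peel {α : Type*} (S : Finset α) (φ H : α → ℝ) (h : ∀ y ∈ S, φ y ≤ H y) {x : α} (hx : x ∈ S) :
    ∑ y ∈ S, φ y + H x ≤ ∑ y ∈ S, H y + φ x := by
  have := single_le_sum (f := fun y => H y - φ y) (fun y hy => sub_nonneg.2 (h y hy)) hx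
  rw [sum_sub_distrib] at this
  linarith

lemma three {α : Type*} (S1 S2 S3 : Finset α) (g : α → α → α → ℝ) (hg : ∀ a b c, 0 ≤ g a b c)
    {x1 x2 x3 : α} (h1 : x1 ∈ S1) (h2 : x2 ∈ S2) (h3 : x3 ∈ S3) (h0 : g x1 x2 x3 = 0) :
    ∑ y1 ∈ S1, g y1 x2 x3 + ∑ y2 ∈ S2, g x1 y2 x3 + ∑ y3 ∈ S3, g x1 x2 y3 ≤
      ∑ y1 ∈ S1, ∑ y2 ∈ S2, ∑ y3 ∈ S3, g y1 y2 y3 := by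
  have a1 := peel S1 (fun y1 => g y1 x2 x3) (fun y1 => ∑ y2 ∈ S2, ∑ y3 ∈ S3, g y1 y2 y3)
    (fun y1 _ => by
      have i1 : g y1 x2 x3 ≤ ∑ y3 ∈ S3, g y1 x2 y3 :=
        single_le_sum (f := fun y3 => g y1 x2 y3) (fun _ _ => hg _ _ _) h3
      have i2 : ∑ y3 ∈ S3, g y1 x2 y3 ≤ ∑ y2 ∈ S2, ∑ y3 ∈ S3, g y1 y2 y3 :=
        single_le_sum (f := fun y2 => ∑ y3 ∈ S3, g y1 y2 y3)
          (fun _ _ => sum_nonneg (fun _ _ => hg _ _ _)) h2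
      exact i1.trans i2) h1
  have a2 := peel S2 (fun y2 => g x1 y2 x3) (fun y2 => ∑ y3 ∈ S3, g x1 y2 y3)
    (fun y2 _ => single_le_sum (f := fun y3 => g x1 y2 y3) (fun _ _ => hg _ _ _) h3) h2
  linarith

lemma En_Om {A : Finset V} {p q r : V} (hp : p ∈ A) (hq : q ∈ A) (hr : r ∈ A) (h : sb p q r)
    (f : Finset (Sym2 V) → ℝ) :
    P3 A p q r f + P3 A q r p f + P3 A r p q f ≤ En (Om A p q r) f := by
  have e : En (Om A p q r) f = ∑ x1 ∈ Tri (arc A p q), ∑ x2 ∈ Tri (arc A q r),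
      ∑ x3 ∈ Tri (arc A r p), ∑ y1 ∈ Tri (arc A p q), ∑ y2 ∈ Tri (arc A q r),
      ∑ y3 ∈ Tri (arc A r p), en f (x1 ∪ x2 ∪ x3) (y1 ∪ y2 ∪ y3) := by
    unfold En
    rw [sum_Om hp hq hr h]
    simp_rw [sum_Om hp hq hr h]
  have u1 : ∀ x1 x2 x3 : Finset (Sym2 V), x2 ∪ x3 ∪ x1 = x1 ∪ x2 ∪ x3 := fun x1 x2 x3 => by
    rw [union_comm, ← union_assoc]
  have u2 : ∀ x1 x2 x3 : Finset (Sym2 V), x3 ∪ x1 ∪ x2 = x1 ∪ x2 ∪ x3 := fun x1 x2 x3 => by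
    rw [← u1 x3 x1 x2]
  have b3 : P3 A p q r f = ∑ x1 ∈ Tri (arc A p q), ∑ x2 ∈ Tri (arc A q r),
      ∑ x3 ∈ Tri (arc A r p), ∑ y3 ∈ Tri (arc A r p), en f (x1 ∪ x2 ∪ x3) (x1 ∪ x2 ∪ y3) := by
    unfold P3 En
    refine sum_congr rfl (fun x1 h1 => sum_congr rfl (fun x2 h2 => sum_congr rfl (fun x3 h3 =>
      sum_congr rfl (fun y3 h3' => ?_))))
    unfold en
    refine if_congr ?_ rfl rfl
    rw [← u2 x1 x2 x3, ← u2 x1 x2 y3]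
    exact (adj_union (sb_rot' h) h3' h3 h1 h2).symm
  have b1 : P3 A q r p f = ∑ x1 ∈ Tri (arc A p q), ∑ x2 ∈ Tri (arc A q r),
      ∑ x3 ∈ Tri (arc A r p), ∑ y1 ∈ Tri (arc A p q), en f (x1 ∪ x2 ∪ x3) (y1 ∪ x2 ∪ x3) := by
    unfold P3 En
    have : ∀ x2 ∈ Tri (arc A q r), (∑ x3 ∈ Tri (arc A r p), ∑ x1 ∈ Tri (arc A p q),
      ∑ y1 ∈ Tri (arc A p q), en (fun z => f (x2 ∪ x3 ∪ z)) x1 y1) = ∑ x1 ∈ Tri (arc A p q),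
       ∑ x3 ∈ Tri (arc A r p), ∑ y1 ∈ Tri (arc A p q), en f (x1 ∪ x2 ∪ x3) (y1 ∪ x2 ∪ x3) := by
      intro x2 h2
      rw [sum_comm]
      refine sum_congr rfl (fun x1 h1 => sum_congr rfl (fun x3 h3 => sum_congr rfl (fun y1 h1' => ?_)))
      unfold en
      beta_reduce
      rw [u1 x1 x2 x3, u1 y1 x2 x3]
      exact if_congr (adj_union h h1' h1 h2 h3).symm rfl rfl
    rw [sum_congr rfl this, sum_comm]
  have b2 : P3 A r p q f = ∑ x1 ∈ Tri (arc A p q), ∑ x2 ∈ Tri (arc A q r),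
      ∑ x3 ∈ Tri (arc A r p), ∑ y2 ∈ Tri (arc A q r), en f (x1 ∪ x2 ∪ x3) (x1 ∪ y2 ∪ x3) := by
    unfold P3 En
    rw [sum_comm]
    refine sum_congr rfl (fun x1 h1 => ?_)
    rw [sum_comm]
    refine sum_congr rfl (fun x2 h2 => sum_congr rfl (fun x3 h3 => sum_congr rfl (fun y2 h2' => ?_)))
    unfold en
    simp only [u2]
    refine if_congr ?_ rfl rfl
    rw [← u1 x1 x2 x3, ← u1 x1 y2 x3]
    exact (adj_union (sb_rot h) h2' h2 h3 h1).symm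
  rw [e, b1, b2, b3]
  simp_rw [← sum_add_distrib]
  refine sum_le_sum (fun x1 h1 => sum_le_sum (fun x2 h2 => sum_le_sum (fun x3 h3 => ?_)))
  have := three (Tri (arc A p q)) (Tri (arc A q r)) (Tri (arc A r p))
    (fun y1 y2 y3 => en f (x1 ∪ x2 ∪ x3) (y1 ∪ y2 ∪ y3)) (fun _ _ _ => en_nonneg _ _ _) h1 h2 h3
    (en_self _ _)
  linarith

lemma En_mono {S T : Finset (Finset (Sym2 V))} (h : S ⊆ T) (f) : En S f ≤ En T f := by
  unfold En
  refine (sum_le_sum_of_subset_of_nonneg h (fun _ _ _ => sum_nonneg (fun _ _ => en_nonneg _ _ _))) |>.trans' ?_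
  exact sum_le_sum (fun x _ => sum_le_sum_of_subset_of_nonneg h (fun _ _ _ => en_nonneg _ _ _))

/-- the distribution of the apex is stable -/
def Dprop (A : Finset V) (u v : V) : Prop := ∀ (f : Finset (Sym2 V) → ℝ) (ϕ : V → ℝ),
  (∀ w ∈ inner A u v, 0 ≤ ϕ w ∧ ϕ w ≤ 1) →
  ∑ w ∈ inner A u v, ϕ w * (∑ x ∈ Om A u w v, f x -
    ((Om A u w v).card : ℝ) / (Tri A).card * ∑ x ∈ Tri A, f x) ≤ 1 / 2 * En (Tri A) f

lemma Tri_card_pos {A : Finset V} (hA : 2 ≤ A.card) : (0 : ℝ) < (Tri A).card := by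
  rw [card_Tri hA]; exact gam_pos _

lemma Tri_arc_card_pos {A : Finset V} {u v : V} (hu : u ∈ A) (hv : v ∈ A) (h : u ≠ v) :
    (0 : ℝ) < (Tri (arc A u v)).card := Tri_card_pos (two_le_arc hu hv h)

lemma Om_card_pos {A : Finset V} {p q r : V} (hp : p ∈ A) (hq : q ∈ A) (hr : r ∈ A) (h : sb p q r) :
    (0 : ℝ) < (Om A p q r).card := by
  rw [card_Om hp hq hr h]
  have := gam_pos (len A p q)
  have := gam_pos (len A q r)
  have := gam_pos (len A r p)
  positivity

lemma Qd_card_pos {A : Finset V} {p q r s : V} (hp : p ∈ A) (hq : q ∈ A) (hr : r ∈ A) (hs : s ∈ A)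
    (h : sb p q r) (h' : sb r s p) :
    (0 : ℝ) < (Qd A p q r s).card := by
  rw [card_Qd hp hq hr hs h h']
  have := gam_pos (len A p q)
  have := gam_pos (len A q r)
  have := gam_pos (len A r s)
  have := gam_pos (len A s p)
  positivity

lemma DPpsi {A : Finset V} {p q r : V} (hp : p ∈ A) (hq : q ∈ A) (hr : r ∈ A) (h : sb p q r)
    (hD : Dprop (arc A r p) r p) (f : Finset (Sym2 V) → ℝ) (ϕ : V → ℝ)
    (hϕ : ∀ w ∈ inner A r p, 0 ≤ ϕ w ∧ ϕ w ≤ 1) :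
    ∑ s ∈ inner A r p, ϕ s * (∑ x ∈ Qd A p q r s, f x -
      ((Qd A p q r s).card : ℝ) / (Om A p q r).card * ∑ x ∈ Om A p q r, f x) ≤
      1 / 2 * P3 A p q r f := by
  have hne := sb_ne h
  have c1 := Tri_arc_card_pos hp hq hne.1
  have c2 := Tri_arc_card_pos hq hr hne.2.1
  have c3 := Tri_arc_card_pos hr hp hne.2.2.symm
  have ratio : ∀ s ∈ inner A r p, ((Qd A p q r s).card : ℝ) / (Om A p q r).card =
      ((Om (arc A r p) r s p).card : ℝ) / (Tri (arc A r p)).card := by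
    intro s hs
    rw [mem_inner] at hs
    have e1 : (Qd A p q r s).card = (Tri (arc A p q)).card * ((Tri (arc A q r)).card *
      (Om (arc A r p) r s p).card) := by
      rw [card_eq_sum_one, sum_Qd_prod hp hq hr hs.1 h hs.2]
      simp
    rw [e1, card_Om' hp hq hr h]
    push_cast
    field_simp
  have step : ∀ s ∈ inner A r p, ϕ s * (∑ x ∈ Qd A p q r s, f x -
      ((Qd A p q r s).card : ℝ) / (Om A p q r).card * ∑ x ∈ Om A p q r, f x) =
      ∑ x1 ∈ Tri (arc A p q), ∑ x2 ∈ Tri (arc A q r),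
        ϕ s * (∑ x3 ∈ Om (arc A r p) r s p, f (x1 ∪ x2 ∪ x3) -
        ((Om (arc A r p) r s p).card : ℝ) / (Tri (arc A r p)).card *
          ∑ x3 ∈ Tri (arc A r p), f (x1 ∪ x2 ∪ x3)) := by
    intro s hs
    rw [ratio s hs]
    rw [mem_inner] at hs
    rw [sum_Qd_prod hp hq hr hs.1 h hs.2, sum_Om hp hq hr h]
    simp_rw [mul_sum, ← sum_sub_distrib, mul_sum]
  rw [sum_congr rfl step, sum_comm]
  unfold P3
  rw [mul_sum]
  refine sum_le_sum (fun x1 h1 => ?_)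
  rw [sum_comm, mul_sum]
  refine sum_le_sum (fun x2 h2 => ?_)
  have := hD (fun x3 => f (x1 ∪ x2 ∪ x3)) ϕ (by rwa [inner_arc])
  rwa [inner_arc] at this

lemma sum_zero_Qd {A : Finset V} {p q r : V} (hp : p ∈ A) (hq : q ∈ A) (hr : r ∈ A) (h : sb p q r)
    (f : Finset (Sym2 V) → ℝ) : 
    ∑ s ∈ inner A r p, (∑ x ∈ Qd A p q r s, f x -
      ((Qd A p q r s).card : ℝ) / (Om A p q r).card * ∑ x ∈ Om A p q r, f x) = 0 := by
  rcases (inner A r p).eq_empty_or_nonempty with h0 | hne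
  · rw [h0]; simp
  · have hO := Om_card_pos hp hq hr h
    rw [sum_sub_distrib, ← sum_mul, ← sum_div, ← sum_Qd hne]
    have : ∑ s ∈ inner A r p, ((Qd A p q r s).card : ℝ) = (Om A p q r).card := by
      have := sum_Qd (A := A) (q := q) hne (fun _ => (1 : ℝ))
      simp only [sum_const, nsmul_eq_mul, mul_one] at this
      exact this.symm
    rw [this, div_self hO.ne']; ring

lemma DPpsi0 {A : Finset V} {p q r : V} (hp : p ∈ A) (hq : q ∈ A) (hr : r ∈ A) (h : sb p q r)
    (hD : Dprop (arc A r p) r p) (f : Finset (Sym2 V) → ℝ) (c : ℝ) (ψ : V → ℝ)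
    (hϕ : ∀ w ∈ inner A r p, 0 ≤ c + ψ w ∧ c + ψ w ≤ 1) :
    ∑ s ∈ inner A r p, ψ s * (∑ x ∈ Qd A p q r s, f x -
      ((Qd A p q r s).card : ℝ) / (Om A p q r).card * ∑ x ∈ Om A p q r, f x) ≤
      1 / 2 * P3 A p q r f := by
  have h1 := DPpsi hp hq hr h hD f (fun w => c + ψ w) hϕ
  have h2 := sum_zero_Qd hp hq hr h f
  simp only [add_mul, sum_add_distrib] at h1
  rw [← mul_sum, h2] at h1
  linarith

lemma sum_erase_split {A : Finset V} {u v w' : V} (hr : Root A u v) (hw : w' ∈ inner A u v)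
    (g : V → ℝ) : ∑ w ∈ (inner A u v).erase w', g w =
      ∑ w ∈ inner A u w', g w + ∑ w ∈ inner A w' v, g w := by
  rw [← sum_union]
  · refine sum_congr ?_ (fun _ _ => rfl)
    ext w
    rw [mem_inner] at hw
    simp only [mem_erase, mem_union, mem_inner]
    have h := hw.2
    constructor
    · rintro ⟨h1, h2, h3⟩
      have : sb u w w' ∨ sb w' w v := by unfold sb at *; grind
      tauto
    · rintro (⟨h1, h2⟩ | ⟨h1, h2⟩)
      · refine ⟨?_, h1, ?_⟩ <;> (unfold sb at *; grind)
      · refine ⟨?_, h1, ?_⟩ <;> (unfold sb at *; grind)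
  · rw [disjoint_left]
    intro w h1 h2
    rw [mem_inner] at *
    obtain ⟨-, h1⟩ := h1
    obtain ⟨-, h2⟩ := h2
    obtain ⟨-, h3⟩ := hw
    unfold sb at *; grind

lemma Qd_sub_Om (A : Finset V) (p q r s : V) : Qd A p q r s ⊆ Om A p q r := filter_subset _ _

/-- flips control the difference of the two quad sums -/
lemma flip_diff {A : Finset V} {p q r s : V} (h1 : sb p q r) (h2 : sb r s p)
    (f : Finset (Sym2 V) → ℝ) :
    |∑ x ∈ Qd A p q r s, f x - ∑ x ∈ Qd A q r s p, f x| ≤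
      ∑ x ∈ Qd A p q r s, en f x (flip p q r s x) := by
  rw [sum_flip h1 h2, ← sum_sub_distrib]
  refine (abs_sum_le_sum_abs _ _).trans (sum_le_sum (fun x hx => ?_))
  unfold en
  rw [if_pos (flip_adj h1 h2 hx)]

lemma flip_card {A : Finset V} {p q r s : V} (h1 : sb p q r) (h2 : sb r s p) :
    ((Qd A p q r s).card : ℝ) = (Qd A q r s p).card := by
  have := sum_flip (A := A) h1 h2 (fun _ => (1 : ℝ))
  simp only [sum_const, nsmul_eq_mul, mul_one] at this
  exact this.symm

end energy

/-- abstract algebra behind the D-lemma -/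
lemma D_abstract {ι : Type*} [DecidableEq ι] (I : Finset ι) (ϕ N F : ι → ℝ) (G r : ι → ι → ℝ) (m : ι → ι → ℝ)
    (Z : ℝ) (hZ : Z = ∑ w ∈ I, N w) (hZ0 : 0 < Z) (hN : ∀ w ∈ I, 0 < N w)
    (hm : ∀ w ∈ I, ∀ w' ∈ I, w ≠ w' → 0 < m w w')
    (hr : ∀ w w', r w w' = N w * N w' / (Z * m w w')) 
    (hrs : ∀ w ∈ I, ∀ w' ∈ I, w ≠ w' → m w w' = m w' w)
    (hr1 : ∀ w ∈ I, ∀ w' ∈ I, w ≠ w' → r w w' ≤ 1)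
    (hϕ : ∀ w ∈ I, 0 ≤ ϕ w ∧ ϕ w ≤ 1) :
    ∑ w ∈ I, ϕ w * (F w - N w / Z * ∑ w' ∈ I, F w') ≤
      ∑ w' ∈ I, ∑ w ∈ I.erase w', (-((ϕ w' - ϕ w) * r w' w)) * (G w' w - m w' w / N w' * F w') +
      1 / 2 * ∑ w' ∈ I, ∑ w ∈ I.erase w', |G w' w - G w w'| := by
  have e1 : ∑ w ∈ I, ϕ w * (F w - N w / Z * ∑ w' ∈ I, F w') =
      ∑ w' ∈ I, ∑ w ∈ I.erase w', (ϕ w' - ϕ w) * (N w / Z) * F w' := by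
    have a1 : ∀ w' ∈ I, ∑ w ∈ I.erase w', (ϕ w' - ϕ w) * (N w / Z) * F w' =
        ∑ w ∈ I, (ϕ w' - ϕ w) * (N w / Z) * F w' := fun w' hw' => by
      rw [← add_sum_erase I _ hw']; simp
    rw [sum_congr rfl a1]
    have a2 : ∀ w' ∈ I, ∑ w ∈ I, (ϕ w' - ϕ w) * (N w / Z) * F w' =
       ϕ w' * F w' - ∑ w ∈ I, ϕ w * (N w / Z) * F w' := fun w' hw' => by
      have : ∑ w ∈ I, N w / Z = 1 := by rw [← sum_div, ← hZ, div_self hZ0.ne']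
      calc ∑ w ∈ I, (ϕ w' - ϕ w) * (N w / Z) * F w'
          = ∑ w ∈ I, (ϕ w' * F w' * (N w / Z) - ϕ w * (N w / Z) * F w') :=
            sum_congr rfl (fun w _ => by ring)
        _ = _ := by rw [sum_sub_distrib, ← mul_sum, this, mul_one]
    rw [sum_congr rfl a2, sum_sub_distrib, sum_comm]
    simp_rw [mul_sub, sum_sub_distrib, mul_sum]
    congr 1
    refine sum_congr rfl (fun w _ => sum_congr rfl (fun w' _ => by ring))
  have e2 : ∑ w' ∈ I, ∑ w ∈ I.erase w', (ϕ w' - ϕ w) * (N w / Z) * F w' =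
      ∑ w' ∈ I, ∑ w ∈ I.erase w', (-((ϕ w' - ϕ w) * r w' w)) * (G w' w - m w' w / N w' * F w') +
      ∑ w' ∈ I, ∑ w ∈ I.erase w', (ϕ w' - ϕ w) * r w' w * G w' w := by
    rw [← sum_add_distrib]
    refine sum_congr rfl (fun w' hw' => ?_)
    rw [← sum_add_distrib]
    refine sum_congr rfl (fun w hw => ?_)
    rw [mem_erase] at hw
    have h1 := hm w' hw' w hw.2 hw.1.symm
    have h2 := hN w' hw'
    rw [hr]
    field_simp
    ring
  rw [e1, e2]
  gcongr
  have e3 : ∑ w' ∈ I, ∑ w ∈ I.erase w', (ϕ w' - ϕ w) * r w' w * G w' w =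
      ∑ w' ∈ I, ∑ w ∈ I.erase w', -((ϕ w' - ϕ w) * r w' w * G w w') := by
    rw [sum_comm' (t' := I) (s' := fun w => I.erase w)]
    · refine sum_congr rfl (fun w' hw' => sum_congr rfl (fun w hw => ?_))
      rw [mem_erase] at hw
      have : r w w' = r w' w := by
        rw [hr, hr, hrs w hw.2 w' hw' hw.1, mul_comm (N w)]
      rw [this]; ring
    · intro x y; simp only [mem_erase]; tauto
  have e4 : ∑ w' ∈ I, ∑ w ∈ I.erase w', (ϕ w' - ϕ w) * r w' w * G w' w =
      1 / 2 * ∑ w' ∈ I, ∑ w ∈ I.erase w', (ϕ w' - ϕ w) * r w' w * (G w' w - G w w') := by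
    have : ∑ w' ∈ I, ∑ w ∈ I.erase w', (ϕ w' - ϕ w) * r w' w * (G w' w - G w w') =
      ∑ w' ∈ I, ∑ w ∈ I.erase w', (ϕ w' - ϕ w) * r w' w * G w' w +
      ∑ w' ∈ I, ∑ w ∈ I.erase w', -((ϕ w' - ϕ w) * r w' w * G w w') := by
      simp_rw [← sum_add_distrib]
      refine sum_congr rfl (fun w' hw' => sum_congr rfl (fun w hw => by ring))
    rw [this, ← e3]; ring
  rw [e4]
  gcongr with w' hw' w hw
  rw [mem_erase] at hw
  refine (le_abs_self _).trans ?_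
  rw [abs_mul]
  have h1 := hr1 w' hw' w hw.2 hw.1.symm
  have h0 : 0 ≤ r w' w := by
    rw [hr]
    have := hN w hw.2
    have := hN w' hw'
    have := hm w' hw' w hw.2 hw.1.symm
    positivity
  have : |(ϕ w' - ϕ w) * r w' w| ≤ 1 := by
    rw [abs_mul, abs_of_nonneg h0]
    have : |ϕ w' - ϕ w| ≤ 1 := by
      rw [abs_le]; have := hϕ w hw.2; have := hϕ w' hw'; constructor <;> linarith
    exact mul_le_one₀ this h0 h1
  calc _ ≤ 1 * |G w' w - G w w'| := by gcongr
    _ = _ := one_mul _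

end Assoc

namespace Assoc
open scoped Classical
set_option linter.all false

section Dlem
variable {V : Type*} [LinearOrder V]

lemma arc_card_lt {A : Finset V} {u v w : V} (hv : v ∈ A) (h : sb u w v) :
    (arc A u w).card < A.card := by
  apply card_lt_card
  have hs : arc A u w ⊆ A := filter_subset _ _
  rw [ssubset_iff_of_subset hs]
  refine ⟨v, hv, ?_⟩
  rw [mem_arc]; rintro ⟨-, h'⟩
  unfold inarc sb at *; grind

lemma cross_bound {A : Finset V} {u v w w' : V} (hw : w ∈ inner A u v) (hw' : w' ∈ inner A u v)
    (h : sb u w w') (f : Finset (Sym2 V) → ℝ) :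
    |∑ x ∈ Qd A v u w w', f x - ∑ x ∈ Qd A w' v u w, f x| ≤
      ∑ x ∈ Om A u w v, ∑ y ∈ Om A u w' v, en f x y := by
  rw [mem_inner] at hw hw'
  have h1 : sb v u w := sb_rot' hw.2
  have h2 : sb w w' v := (sb_trans h hw'.2).2
  rw [Qd_rot2 A w' v u w]
  refine (flip_diff h1 h2 f).trans ?_
  have s1 : Qd A v u w w' ⊆ Om A u w v := by
    rw [← Om_rot]; exact Qd_sub_Om _ _ _ _ _
  have s2 : Qd A u w w' v ⊆ Om A u w' v := by
    rw [Qd_rot2, Om_rot]; exact Qd_sub_Om _ _ _ _ _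
  calc ∑ x ∈ Qd A v u w w', en f x (flip v u w w' x)
      ≤ ∑ x ∈ Qd A v u w w', ∑ y ∈ Om A u w' v, en f x y :=
        sum_le_sum (fun x hx => single_le_sum (f := fun y => en f x y)
          (fun _ _ => en_nonneg _ _ _) (s2 (flip_mem h1 h2 hx)))
    _ ≤ _ := sum_le_sum_of_subset_of_nonneg s1
        (fun _ _ _ => sum_nonneg (fun _ _ => en_nonneg _ _ _))

lemma len_root {A : Finset V} {u v : V} (hr : Root A u v) : len A u v = A.card - 1 ∧ len A v u = 1 := by
  have hback : arc A v u = {u, v} := by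
    have := arc_back A hr.hu hr.hv
    rwa [hr.arc_eq] at this
  unfold len
  rw [hback, card_pair hr.ne, hr.arc_eq]
  simp

lemma root_two_le {A : Finset V} {u v : V} (hr : Root A u v) : 2 ≤ A.card := by
  have := two_le_arc hr.hu hr.hv hr.ne
  rwa [hr.arc_eq] at this

lemma card_ineq {A : Finset V} {u v w w' : V} (hr : Root A u v) (hw : w ∈ inner A u v)
    (hw' : w' ∈ inner A u v) (h : sb u w w') :
    ((Om A u w v).card : ℝ) * (Om A u w' v).card ≤ (Tri A).card * (Qd A v u w w').card := by
  have c1 := card_Om_root hr hw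
  have c2 := card_Om_root hr hw'
  have c3 := card_Tri (root_two_le hr)
  rw [mem_inner] at hw hw'
  have h1 : sb v u w := sb_rot' hw.2
  have h2 : sb w w' v := (sb_trans h hw'.2).2
  have c4 := card_Qd hr.hv hr.hu hw.1 hw'.1 h1 h2
  have l := len_root hr
  rw [← l.1] at c3
  rw [c1, c2, c3, c4, l.2, gam_one]
  have l1 := len_add hw.1 hw'.1 hr.hv h2
  have l2 := len_add hr.hu hw.1 hw'.1 h
  have l3 := len_add hr.hu hw.1 hr.hv hw.2
  have hp := len_pos hw.1 hw'.1 (sb_ne h).2.1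
  have lc := gam_logconv (len A w w') (len A u w) (len A w' v) hp
  rw [← l3, ← l1, ← l2]
  have e1 : len A w w' + len A w' v = len A w' v + len A w w' := by omega
  have e2 : len A u w + (len A w' v + len A w w') = len A u w + len A w' v + len A w w' := by omega
  rw [e1, e2]
  have p1 := gam_pos (len A u w)
  have p2 := gam_pos (len A w' v)
  have := mul_le_mul_of_nonneg_left lc (mul_pos p1 p2).le
  nlinarith

lemma En_root {A : Finset V} {u v : V} (hr : Root A u v) (hi : (inner A u v).Nonempty)
    (f : Finset (Sym2 V) → ℝ) :
    En (Tri A) f = ∑ w' ∈ inner A u v, (En (Om A u w' v) f +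
      ∑ w ∈ (inner A u v).erase w', ∑ x ∈ Om A u w' v, ∑ y ∈ Om A u w v, en f x y) := by
  unfold En
  rw [sum_root hr hi]
  refine sum_congr rfl (fun w' hw' => ?_)
  simp_rw [sum_root hr hi]
  rw [sum_comm, ← add_sum_erase _ _ hw']

theorem Dlemma : ∀ (n : ℕ) (A : Finset V) (u v : V), Root A u v → A.card = n → Dprop A u v := by
  intro n
  induction n using Nat.strong_induction_on with
  | _ n ih =>
    intro A u v hr hA f ϕ hϕ
    rcases (inner A u v).eq_empty_or_nonempty with h0 | hi
    · rw [h0, sum_empty]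
      have := En_nonneg (Tri A) f
      positivity
    set Q : V → V → Finset (Finset (Sym2 V)) := fun w' w =>
      if sb u w w' then Qd A w' v u w else Qd A v u w' w with hQ
    have Q1 : ∀ {w' w}, sb u w w' → Q w' w = Qd A w' v u w := fun h => by simp [hQ, h]
    have Q2 : ∀ {w' w}, sb u w' w → Q w' w = Qd A v u w' w := fun h => by
      simp only [hQ]; rw [if_neg (sb_asymm h)]
    have tot : ∀ w ∈ inner A u v, ∀ w' ∈ inner A u v, w ≠ w' → sb u w w' ∨ sb u w' w := by
      intro w hw w' hw' hne
      rw [mem_inner] at hw hw'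
      exact sb_total (sb_ne hw.2).1 hne (sb_ne hw'.2).1
    have Qcard : ∀ w ∈ inner A u v, ∀ w' ∈ inner A u v, sb u w w' →
        ((Qd A v u w w').card : ℝ) = (Qd A w' v u w).card := by
      intro w hw w' hw' h
      rw [mem_inner] at hw hw'
      rw [Qd_rot2 A w' v u w]
      exact flip_card (sb_rot' hw.2) (sb_trans h hw'.2).2
    have Qpos : ∀ w ∈ inner A u v, ∀ w' ∈ inner A u v, sb u w w' →
        (0 : ℝ) < (Qd A v u w w').card := by
      intro w hw w' hw' h
      rw [mem_inner] at hw hw'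
      exact Qd_card_pos hr.hv hr.hu hw.1 hw'.1 (sb_rot' hw.2) (sb_trans h hw'.2).2
    have Z0 := Tri_card_pos (root_two_le hr)
    have rb : ∀ w ∈ inner A u v, ∀ w' ∈ inner A u v, w ≠ w' →
        ((Om A u w v).card : ℝ) * (Om A u w' v).card / ((Tri A).card * (Q w w').card) ≤ 1 ∧
        0 ≤ ((Om A u w v).card : ℝ) * (Om A u w' v).card / ((Tri A).card * (Q w w').card) := by
      intro w hw w' hw' hne
      refine ⟨?_, by positivity⟩
      rcases tot w hw w' hw' hne with h | h
      · rw [Q2 h]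
        have := Qpos w hw w' hw' h
        rw [div_le_one (by positivity)]
        exact card_ineq hr hw hw' h
      · rw [Q1 h, ← Qcard w' hw' w hw h]
        have := Qpos w' hw' w hw h
        rw [div_le_one (by positivity), mul_comm]
        exact card_ineq hr hw' hw h
    have key := D_abstract (inner A u v) ϕ (fun w => ((Om A u w v).card : ℝ))
      (fun w => ∑ x ∈ Om A u w v, f x) (fun w' w => ∑ x ∈ Q w' w, f x)
      (fun w w' => ((Om A u w v).card : ℝ) * (Om A u w' v).card / ((Tri A).card * (Q w w').card))
      (fun w w' => ((Q w w').card : ℝ)) (Tri A).card ?_ Z0 ?_ ?_ ?_ ?_ ?_ hϕ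
    rotate_left
    · have := sum_root hr hi (fun _ => (1 : ℝ))
      simpa using this
    · intro w hw
      rw [mem_inner] at hw
      exact Om_card_pos hr.hu hw.1 hr.hv hw.2
    · intro w hw w' hw' hne
      rcases tot w hw w' hw' hne with h | h
      · rw [Q2 h]; exact Qpos w hw w' hw' h
      · rw [Q1 h, ← Qcard w' hw' w hw h]; exact Qpos w' hw' w hw h
    · intros; rfl
    · intro w hw w' hw' hne
      rcases tot w hw w' hw' hne with h | h
      · rw [Q2 h, Q1 h, Qcard w hw w' hw' h]
      · rw [Q1 h, Q2 h, Qcard w' hw' w hw h]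
    · intro w hw w' hw' hne
      exact (rb w hw w' hw' hne).1
    rw [← sum_root hr hi] at key
    refine key.trans ?_
    rw [En_root hr hi, mul_sum, mul_sum, ← sum_add_distrib]
    refine sum_le_sum (fun w' hw' => ?_)
    rw [mul_add]
    refine add_le_add ?_ ?_
    · have hwA := (mem_inner.1 hw').1
      have hws := (mem_inner.1 hw').2
      rw [sum_erase_split hr hw']
      have t1 := DPpsi0 hwA hr.hv hr.hu (sb_rot hws)
        (ih (arc A u w').card (by rw [← hA]; exact arc_card_lt hr.hv hws) _ u w'
          (root_arc hr.hu hwA (sb_ne hws).1) rfl) f (ϕ w')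
        (fun w => -((ϕ w' - ϕ w) * (((Om A u w' v).card : ℝ) * (Om A u w v).card / ((Tri A).card * (Q w' w).card)))) ?_
      have t2 := DPpsi0 hr.hv hr.hu hwA (sb_rot' hws)
        (ih (arc A w' v).card (by rw [← hA]; exact arc_card_lt hr.hu (sb_rot hws)) _ w' v
          (root_arc hwA hr.hv (sb_ne hws).2.1) rfl) f (ϕ w')
        (fun w => -((ϕ w' - ϕ w) * (((Om A u w' v).card : ℝ) * (Om A u w v).card / ((Tri A).card * (Q w' w).card)))) ?_
      · have hE := En_Om hr.hu hwA hr.hv hws f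
        have hP := P3_nonneg A u w' v f
        rw [← Om_rot A u w' v] at t1
        rw [Om_rot A v u w'] at t2
        have t1' : ∑ w ∈ inner A u w', -((ϕ w' - ϕ w) * (((Om A u w' v).card : ℝ) * (Om A u w v).card / ((Tri A).card * (Q w' w).card))) *
            (∑ x ∈ Q w' w, f x - ((Q w' w).card : ℝ) / (Om A u w' v).card * ∑ x ∈ Om A u w' v, f x) ≤
            1 / 2 * P3 A w' v u f := by
          refine le_trans (le_of_eq (sum_congr rfl (fun w hw => ?_))) t1
          rw [mem_inner] at hw
          rw [Q1 hw.2]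
        have t2' : ∑ w ∈ inner A w' v, -((ϕ w' - ϕ w) * (((Om A u w' v).card : ℝ) * (Om A u w v).card / ((Tri A).card * (Q w' w).card))) *
            (∑ x ∈ Q w' w, f x - ((Q w' w).card : ℝ) / (Om A u w' v).card * ∑ x ∈ Om A u w' v, f x) ≤
            1 / 2 * P3 A v u w' f := by
          refine le_trans (le_of_eq (sum_congr rfl (fun w hw => ?_))) t2
          rw [mem_inner] at hw
          have : sb u w' w := by
            have := hw.2
            unfold sb at *; grind
          rw [Q2 this]
        linarith
      · intro w hw
        have hw2 : w ∈ inner A u v ∧ w' ≠ w := by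
          rw [mem_inner] at hw ⊢
          have := hw.2
          refine ⟨⟨hw.1, ?_⟩, (sb_ne this).1⟩
          unfold sb at *; grind
        obtain ⟨b1, b2⟩ := rb w' hw' w hw2.1 hw2.2
        have := hϕ w hw2.1
        have := hϕ w' hw'
        constructor <;> nlinarith
      · intro w hw
        have hw2 : w ∈ inner A u v ∧ w' ≠ w := by
          rw [mem_inner] at hw ⊢
          have := hw.2
          refine ⟨⟨hw.1, ?_⟩, (sb_ne this).2.1.symm⟩
          unfold sb at *; grind
        obtain ⟨b1, b2⟩ := rb w' hw' w hw2.1 hw2.2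
        have := hϕ w hw2.1
        have := hϕ w' hw'
        constructor <;> nlinarith
    · refine mul_le_mul_of_nonneg_left (sum_le_sum (fun w hw => ?_)) (by norm_num)
      rw [mem_erase] at hw
      rcases tot w hw.2 w' hw' hw.1 with h | h
      · rw [Q1 h, Q2 h, abs_sub_comm]
        refine (cross_bound hw.2 hw' h f).trans (le_of_eq ?_)
        rw [sum_comm]
        exact sum_congr rfl (fun x _ => sum_congr rfl (fun y _ => en_comm _ _ _))
      · rw [Q1 h, Q2 h]
        exact cross_bound hw' hw.2 h f

lemma abs_trick {ι : Type*} (S : Finset ι) (g : ι → ℝ) (B : ℝ)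
    (h : ∀ ψ : ι → ℝ, (∀ w, 0 ≤ 1 / 2 + ψ w ∧ 1 / 2 + ψ w ≤ 1) → ∑ w ∈ S, ψ w * g w ≤ 1 / 2 * B) :
    ∑ w ∈ S, |g w| ≤ B := by
  have := h (fun w => if 0 ≤ g w then 1 / 2 else -1 / 2) (fun w => by split_ifs <;> norm_num)
  have e : ∑ w ∈ S, (if 0 ≤ g w then (1 / 2 : ℝ) else -1 / 2) * g w = 1 / 2 * ∑ w ∈ S, |g w| := by
    rw [mul_sum]
    refine sum_congr rfl (fun w _ => ?_)
    split_ifs with h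
    · rw [abs_of_nonneg h]
    · rw [abs_of_neg (not_le.1 h)]; ring
  rw [e] at this
  linarith

/-- the apex distribution over the side `r p` of the triangle `p q r` -/
lemma DP {A : Finset V} {p q r : V} (hp : p ∈ A) (hq : q ∈ A) (hr : r ∈ A) (h : sb p q r)
    (f : Finset (Sym2 V) → ℝ) :
    ∑ s ∈ inner A r p, |∑ x ∈ Qd A p q r s, f x -
      ((Qd A p q r s).card : ℝ) / (Om A p q r).card * ∑ x ∈ Om A p q r, f x| ≤ En (Om A p q r) f := by
  apply abs_trick
  intro ψ hψ
  have h1 := DPpsi0 hp hq hr h (Dlemma _ _ _ _ (root_arc hr hp (sb_ne h).2.2.symm) rfl) f (1 / 2) ψ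
    (fun w _ => hψ w)
  have h2 := En_Om hp hq hr h f
  have h3 := P3_nonneg A q r p f
  have h4 := P3_nonneg A r p q f
  linarith

lemma Droot {A : Finset V} {u v : V} (hr : Root A u v) (hi : (inner A u v).Nonempty)
    (f : Finset (Sym2 V) → ℝ) :
    ∑ w ∈ inner A u v, |∑ x ∈ Om A u w v, f x -
      ((Om A u w v).card : ℝ) / (Tri A).card * ∑ x ∈ Tri A, f x| ≤ En (Tri A) f := by
  apply abs_trick
  intro ψ hψ
  have h1 := Dlemma _ _ _ _ hr rfl f (fun w => 1 / 2 + ψ w) (fun w _ => hψ w)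
  simp only [add_mul, sum_add_distrib] at h1
  rw [← mul_sum] at h1
  have h2 : ∑ w ∈ inner A u v, (∑ x ∈ Om A u w v, f x -
      ((Om A u w v).card : ℝ) / (Tri A).card * ∑ x ∈ Tri A, f x) = 0 := by
    rw [sum_sub_distrib, ← sum_mul, ← sum_div, ← sum_root hr hi]
    have : ∑ w ∈ inner A u v, ((Om A u w v).card : ℝ) = (Tri A).card := by
      have := sum_root hr hi (fun _ => (1 : ℝ))
      simp only [sum_const, nsmul_eq_mul, mul_one] at this
      exact this.symm
    rw [this, div_self (Tri_card_pos (root_two_le hr)).ne']; ring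
  rw [h2] at h1
  linarith

end Dlem
end Assoc

namespace Assoc
open scoped Classical
set_option linter.all false

/-- total deviation from the average -/
noncomputable def dev {α : Type*} (S : Finset α) (f : α → ℝ) : ℝ :=
  ∑ x ∈ S, |f x - (∑ y ∈ S, f y) / S.card|

lemma tens {α β : Type*} (S : Finset α) (T : Finset β) (ES : (α → ℝ) → ℝ) (ET : (β → ℝ) → ℝ)
    (hT0 : (0 : ℝ) < T.card)
    (hS : ∀ f, dev S f ≤ ES f) (hT : ∀ f, dev T f ≤ ET f)
    (conv : ∀ g : α → β → ℝ, (T.card : ℝ) * ES (fun x => (∑ y ∈ T, g x y) / T.card) ≤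
      ∑ y ∈ T, ES (fun x => g x y)) (g : α → β → ℝ) :
    dev (S ×ˢ T) (fun z => g z.1 z.2) ≤ ∑ x ∈ S, ET (g x) + ∑ y ∈ T, ES (fun x => g x y) := by
  unfold dev
  rw [sum_product, sum_product, card_product]
  set M := (∑ x ∈ S, ∑ y ∈ T, g x y) / ((S.card * T.card : ℕ) : ℝ) with hM
  set G : α → ℝ := fun x => (∑ y ∈ T, g x y) / T.card with hG
  have hM' : M = (∑ x ∈ S, G x) / S.card := by
    rw [hM, hG, ← sum_div, div_div]; push_cast; rw [mul_comm (T.card : ℝ)]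
  calc ∑ x ∈ S, ∑ y ∈ T, |g x y - M|
      ≤ ∑ x ∈ S, ∑ y ∈ T, (|g x y - G x| + |G x - M|) := by
        refine sum_le_sum (fun x _ => sum_le_sum (fun y _ => ?_))
        exact abs_sub_le _ _ _
    _ = ∑ x ∈ S, dev T (g x) + T.card * dev S G := by
        simp_rw [sum_add_distrib, sum_const, nsmul_eq_mul]
        rw [← mul_sum, hM']; rfl
    _ ≤ ∑ x ∈ S, ET (g x) + T.card * ES G := by
        gcongr with x hx
        · exact hT _
        · exact hS _
    _ ≤ _ := by
        gcongr
        exact conv g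

section PI
variable {V : Type*} [LinearOrder V]

lemma En_conv {β : Type*} (S : Finset (Finset (Sym2 V))) (T : Finset β) (hT0 : (0 : ℝ) < T.card)
    (g : Finset (Sym2 V) → β → ℝ) :
    (T.card : ℝ) * En S (fun x => (∑ y ∈ T, g x y) / T.card) ≤ ∑ y ∈ T, En S (fun x => g x y) := by
  unfold En
  rw [mul_sum, sum_comm]
  refine sum_le_sum (fun x _ => ?_)
  rw [mul_sum, sum_comm]
  refine sum_le_sum (fun y _ => ?_)
  unfold en
  split_ifs
  · rw [← sub_div, abs_div, abs_of_pos hT0, mul_div_cancel₀ _ hT0.ne', ← sum_sub_distrib]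
    exact abs_sum_le_sum_abs _ _
  · simp

/-- L1 Poincare inequality -/
def PI (S : Finset (Finset (Sym2 V))) (K : ℝ) : Prop := ∀ f, dev S f ≤ K * En S f

lemma PI.mono {S : Finset (Finset (Sym2 V))} {K K' : ℝ} (h : PI S K) (hK : K ≤ K') : PI S K' :=
  fun f => (h f).trans (mul_le_mul_of_nonneg_right hK (En_nonneg _ _))

lemma PI_Om {A : Finset V} {p q r : V} (hp : p ∈ A) (hq : q ∈ A) (hr : r ∈ A) (h : sb p q r) {K : ℝ}
    (hK : 0 ≤ K)
    (h1 : PI (Tri (arc A p q)) K) (h2 : PI (Tri (arc A q r)) K) (h3 : PI (Tri (arc A r p)) K) :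
    PI (Om A p q r) K := by
  intro f
  have c1 := Tri_arc_card_pos hp hq (sb_ne h).1
  have c2 := Tri_arc_card_pos hq hr (sb_ne h).2.1
  have c3 := Tri_arc_card_pos hr hp (sb_ne h).2.2.symm
  set S1 := Tri (arc A p q)
  set S2 := Tri (arc A q r)
  set S3 := Tri (arc A r p)
  have cv : ∀ {β : Type _} (S : Finset (Finset (Sym2 V))) (T : Finset β) (hT0 : (0 : ℝ) < T.card)
    (g : Finset (Sym2 V) → β → ℝ),
    (T.card : ℝ) * (K * En S (fun x => (∑ y ∈ T, g x y) / T.card)) ≤ ∑ y ∈ T, K * En S (fun x => g x y) := by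
    intro β S T hT0 g
    rw [← mul_sum, mul_left_comm]
    exact mul_le_mul_of_nonneg_left (En_conv S T hT0 g) hK
  have t23 : ∀ g : Finset (Sym2 V) × Finset (Sym2 V) → ℝ, dev (S2 ×ˢ S3) g ≤
      ∑ x ∈ S2, K * En S3 (fun y => g (x, y)) + ∑ y ∈ S3, K * En S2 (fun x => g (x, y)) := fun g =>
    tens S2 S3 (fun f => K * En S2 f) (fun f => K * En S3 f) c3 h2 h3 (cv S2 S3 c3) (fun x y => g (x, y))
  have c23 : (0 : ℝ) < (S2 ×ˢ S3).card := by rw [card_product]; push_cast; positivity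
  have t := tens S1 (S2 ×ˢ S3) (fun f => K * En S1 f) _ c23 h1 t23 (cv S1 _ c23)
    (fun x1 z => f (x1 ∪ z.1 ∪ z.2))
  have e1 : dev (Om A p q r) f = dev (S1 ×ˢ (S2 ×ˢ S3)) (fun z => f (z.1 ∪ z.2.1 ∪ z.2.2)) := by
    have hc : ((Om A p q r).card : ℝ) = ((S1 ×ˢ (S2 ×ˢ S3)).card : ℝ) := by
      have := sum_Om hp hq hr h (fun _ => (1 : ℝ))
      simp only [sum_const, nsmul_eq_mul, mul_one] at this
      rw [this, card_product, card_product]; push_cast; rfl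
    unfold dev
    rw [hc, sum_Om hp hq hr h, sum_Om hp hq hr h f]
    simp_rw [sum_product]
    rfl
  rw [e1]
  refine t.trans ?_
  have e := En_Om hp hq hr h f
  refine le_trans (le_of_eq ?_) (mul_le_mul_of_nonneg_left e hK)
  rw [sum_add_distrib, mul_add, mul_add]
  simp_rw [sum_product]
  have u1 : ∀ x1 x2 x3 : Finset (Sym2 V), x2 ∪ x3 ∪ x1 = x1 ∪ x2 ∪ x3 := fun x1 x2 x3 => by
    rw [union_comm, ← union_assoc]
  have u2 : ∀ x1 x2 x3 : Finset (Sym2 V), x3 ∪ x1 ∪ x2 = x1 ∪ x2 ∪ x3 := fun x1 x2 x3 => by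
    rw [← u1 x3 x1 x2]
  have a1 : K * P3 A p q r f = ∑ x1 ∈ S1, ∑ x2 ∈ S2, K * En S3 (fun x3 => f (x1 ∪ x2 ∪ x3)) := by
    unfold P3; simp_rw [mul_sum]; rfl
  have a2 : K * P3 A q r p f = ∑ x2 ∈ S2, ∑ x3 ∈ S3, K * En S1 (fun x1 => f (x1 ∪ x2 ∪ x3)) := by
    unfold P3; simp_rw [mul_sum, u1]; rfl
  have a3 : K * P3 A r p q f = ∑ x1 ∈ S1, ∑ x3 ∈ S3, K * En S2 (fun x2 => f (x1 ∪ x2 ∪ x3)) := by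
    unfold P3; rw [sum_comm]; simp_rw [mul_sum, u2]; rfl
  rw [a1, a2, a3]
  ring

lemma dev_single {α : Type*} (a : α) (f : α → ℝ) : dev {a} f = 0 := by
  simp [dev]

lemma inner_empty {A : Finset V} {u v : V} (hr : Root A u v) (h : inner A u v = ∅) : A = {u, v} := by
  ext w
  rw [mem_insert, mem_singleton]
  constructor
  · intro hw
    have := hr.all w hw
    rcases this with h1 | h1 | h1
    · exact Or.inl h1
    · exact Or.inr h1
    · have : w ∈ inner A u v := mem_inner.2 ⟨hw, h1⟩
      rw [h] at this; simp at this
  · rintro (rfl | rfl)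
    · exact hr.hu
    · exact hr.hv

theorem PI_base : ∀ (n : ℕ) (A : Finset V), 2 ≤ A.card → A.card = n → PI (Tri A) n := by
  intro n
  induction n using Nat.strong_induction_on with
  | _ n ih =>
    intro A h2 hA f
    obtain ⟨u, v, hr⟩ := exists_root h2
    rcases (inner A u v).eq_empty_or_nonempty with h0 | hi
    · have e := inner_empty hr h0
      rw [e, Tri_pair, dev_single]
      have := En_nonneg {({u, v} : Finset V).sym2} f
      positivity
    have hn1 : (0 : ℝ) ≤ (n : ℝ) - 1 := by
      have : 1 ≤ n := by omega
      have : (1 : ℝ) ≤ n := by exact_mod_cast this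
      linarith
    have hOm : ∀ w ∈ inner A u v, PI (Om A u w v) ((n : ℝ) - 1) := by
      intro w hw
      have hwA := (mem_inner.1 hw).1
      have hws := (mem_inner.1 hw).2
      have key : ∀ a b c, a ∈ A → b ∈ A → c ∈ A → sb a b c → PI (Tri (arc A a b)) ((n : ℝ) - 1) := by
        intro a b c ha hb hc habc
        have hl := arc_card_lt hc habc
        refine (ih _ (by omega) (arc A a b) (two_le_arc ha hb (sb_ne habc).1) rfl).mono ?_
        have : (arc A a b).card + 1 ≤ n := by omega
        have : ((arc A a b).card : ℝ) + 1 ≤ n := by exact_mod_cast this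
        linarith
      exact PI_Om hr.hu hwA hr.hv hws hn1 (key _ _ _ hr.hu hwA hr.hv hws)
        (key _ _ _ hwA hr.hv hr.hu (sb_rot hws)) (key _ _ _ hr.hv hr.hu hwA (sb_rot' hws))
    have hD := Droot hr hi f
    have hE := En_root hr hi f
    have hE' : ∑ w ∈ inner A u v, En (Om A u w v) f ≤ En (Tri A) f := by
      rw [hE]
      refine sum_le_sum (fun w hw => ?_)
      have : 0 ≤ ∑ w_1 ∈ (inner A u v).erase w, ∑ x ∈ Om A u w v, ∑ y ∈ Om A u w_1 v, en f x y :=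
        sum_nonneg (fun _ _ => sum_nonneg (fun _ _ => sum_nonneg (fun _ _ => en_nonneg _ _ _)))
      linarith
    have h1 : dev (Tri A) f ≤ ∑ w ∈ inner A u v, dev (Om A u w v) f +
        ∑ w ∈ inner A u v, |∑ x ∈ Om A u w v, f x -
      ((Om A u w v).card : ℝ) / (Tri A).card * ∑ x ∈ Tri A, f x| := by
      unfold dev
      rw [sum_root hr hi (fun x => |f x - (∑ y ∈ Tri A, f y) / (Tri A).card|), ← sum_add_distrib]
      refine sum_le_sum (fun w hw => ?_)
      have hpos := Om_card_pos hr.hu (mem_inner.1 hw).1 hr.hv (mem_inner.1 hw).2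
      set N : ℝ := ((Om A u w v).card : ℝ) with hN
      set F := ∑ x ∈ Om A u w v, f x
      set Z : ℝ := ((Tri A).card : ℝ)
      set FF := ∑ y ∈ Tri A, f y
      calc ∑ x ∈ Om A u w v, |f x - FF / Z| ≤ ∑ x ∈ Om A u w v, (|f x - F / N| + |F / N - FF / Z|) :=
            sum_le_sum (fun x _ => abs_sub_le _ _ _)
        _ = ∑ x ∈ Om A u w v, |f x - F / N| + N * |F / N - FF / Z| := by
            rw [sum_add_distrib, sum_const, nsmul_eq_mul]
        _ = _ := by
            congr 1
            rw [← abs_of_pos hpos, ← abs_mul, abs_of_pos hpos]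
            congr 1
            field_simp
    have h3 : ∑ w ∈ inner A u v, dev (Om A u w v) f ≤ ((n : ℝ) - 1) * En (Tri A) f := by
      refine le_trans ?_ (mul_le_mul_of_nonneg_left hE' hn1)
      rw [mul_sum]
      exact sum_le_sum (fun w hw => hOm w hw f)
    linarith

end PI
end Assoc

namespace Assoc
open scoped Classical
set_option linter.all false

section median
variable {V : Type*} [LinearOrder V]

/-- half open arc `[u,v)` -/
def ha (u v e : V) : Prop := e = u ∨ sb u e v

/-- half open arc `(u,v]` -/
def ho (u v e : V) : Prop := e = v ∨ sb u e v

lemma pos1 {p q r e1 e2 e3 : V} (h : sb p q r) (he : sb e1 e2 e3) (h1 : ha r p e1) (h2 : ha p q e2)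
     : ho e1 e2 p := by
  unfold ha ho sb at *; grind (splits := 30)

lemma pos_cross {p p' q r' e1 e2 e3 : V} (he : sb e1 e2 e3) (h1 : ho e1 e2 p) (h1' : ho e1 e2 p')
    (h2 : ho e2 e3 q) (h3 : ho e3 e1 r') (h : sb e1 p p') : cr p q p' r' := by
  have a1 : sb e1 p q := by
    unfold ho sb at *; grind (splits := 30)
  have a2 : sb e1 p' q := by
    unfold ho sb at *; grind (splits := 30)
  have a3 : r' = e1 ∨ sb e1 q r' := by
    unfold ho sb at *; grind (splits := 30)
  clear h1 h1' h2 h3 he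
  unfold cr
  constructor
  · unfold sb at *; grind
  · unfold sb at *; grind

lemma med_step1 {u v w e1 e2 e3 : V} (he : sb e1 e2 e3) (h1 : ha v u e1) (h2 : ha u v e2)
    (h3 : ha u v e3) (hw : sb u w v) : (ha u w e2 ∧ ha w v e3) ∨ (ha w v e2 ∧ ha w v e3) ∨ 
    (ha u w e2 ∧ ha u w e3) := by
  unfold ha sb at *; grind (splits := 30)

lemma med_step2 {u v w e1 : V} (h1 : ha v u e1) (hw : sb u w v) : ha v w e1 ∧ ha w u e1 := by
  unfold ha sb at *; grind (splits := 30)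

lemma med_step3 {u v e1 e2 e3 : V} (he : sb e1 e2 e3) (h1 : ha v u e1) (h2 : ha u v e2)
    (h3 : ha u v e3) : sb u e3 v := by
  unfold ha sb at *; grind (splits := 30)

lemma med_exists_aux {A : Finset V} {x : Finset (Sym2 V)} (hx : x ∈ Tri A) {e1 e2 e3 : V}
    (he3 : e3 ∈ A) (he : sb e1 e2 e3) : ∀ (n : ℕ) (u v : V), len A u v = n → s(u, v) ∈ x →
    ha v u e1 → ha u v e2 → ha u v e3 →
    ∃ p q r, sb p q r ∧ x ∈ Om A p q r ∧ ha r p e1 ∧ ha p q e2 ∧ ha q r e3 := by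
  intro n
  induction n using Nat.strong_induction_on with
  | _ n ih =>
    intro u v hn huv h1 h2 h3
    have hm := Tri.mem hx huv
    obtain ⟨w, hw, hs, c1, c2⟩ := exists_apex hx huv he3 (med_step3 he h1 h2 h3)
    have hl := len_add hm.1 hw hm.2 hs
    have l1 := len_pos hm.1 hw (sb_ne hs).1
    have l2 := len_pos hw hm.2 (sb_ne hs).2.1
    have h4 := med_step2 h1 hs
    rcases med_step1 he h1 h2 h3 hs with h | h | h
    · exact ⟨u, w, v, hs, mem_Om.2 ⟨hx, c1, c2, by rw [Sym2.eq_swap]; exact huv⟩, h1, h.1, h.2⟩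
    · exact ih (len A w v) (by omega) w v rfl c2 h4.1 h.1 h.2
    · exact ih (len A u w) (by omega) u w rfl c1 h4.2 h.1 h.2

lemma med_exists {A : Finset V} {x : Finset (Sym2 V)} (hx : x ∈ Tri A) {e1 e2 e3 : V}
    (he1 : e1 ∈ A) (he2 : e2 ∈ A) (he3 : e3 ∈ A) (he : sb e1 e2 e3) :
    ∃ p q r, sb p q r ∧ x ∈ Om A p q r ∧ ha r p e1 ∧ ha p q e2 ∧ ha q r e3 := by
  have hne := sb_ne he
  obtain ⟨u, hu, hmin⟩ := Finset.exists_min_image (A.erase e1) (fun u => (arc A e1 u).card)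
    ⟨e2, mem_erase.2 ⟨hne.1.symm, he2⟩⟩
  rw [mem_erase] at hu
  have hno : ∀ c ∈ A, ¬ sb e1 c u := by
    intro c hc h
    have := hmin c (mem_erase.2 ⟨(sb_ne h).1.symm, hc⟩)
    have := card_arc_lt hu.2 h
    omega
  have hin : ∀ c ∈ A, c ≠ e1 → ha u e1 c := by
    intro c hc hce
    by_cases hcu : c = u
    · exact Or.inl hcu
    · rcases sb_total hce.symm hcu hu.1.symm with h | h
      · exact absurd h (hno c hc)
      · exact Or.inr (sb_rot h)
  refine med_exists_aux hx he3 he _ u e1 rfl ?_ (Or.inl rfl) (hin _ he2 hne.1.symm) (hin _ he3 hne.2.2.symm)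
  rw [Sym2.eq_swap]
  exact Tri.side hx he1 hu.2 hno

lemma med_unique {A : Finset V} {x : Finset (Sym2 V)} {e1 e2 e3 p q r p' q' r' : V}
    (he : sb e1 e2 e3)
    (h : sb p q r) (hx : x ∈ Om A p q r) (h1 : ha r p e1) (h2 : ha p q e2) (h3 : ha q r e3)
    (h' : sb p' q' r') (hx' : x ∈ Om A p' q' r') (h1' : ha r' p' e1) (h2' : ha p' q' e2)
    (h3' : ha q' r' e3) : p = p' ∧ q = q' ∧ r = r' := by
  have P := pos1 h he h1 h2
  have Q := pos1 (sb_rot h) (sb_rot he) h2 h3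
  have R := pos1 (sb_rot' h) (sb_rot' he) h3 h1
  have P' := pos1 h' he h1' h2'
  have Q' := pos1 (sb_rot h') (sb_rot he) h2' h3'
  have R' := pos1 (sb_rot' h') (sb_rot' he) h3' h1'
  rw [mem_Om] at hx hx'
  have ne : ∀ {a b c p : V}, sb a b c → ho a b p → a ≠ p := by
    intro a b c p h1 h2
    rcases h2 with rfl | h2
    · exact (sb_ne h1).1
    · exact (sb_ne h2).1
  have hT := hx.1
  refine ⟨?_, ?_, ?_⟩
  · by_contra hne
    rcases sb_total (ne he P) hne (ne he P') with c | c
    · exact Tri.nc hT hx.2.1 (by rw [Sym2.eq_swap]; exact hx'.2.2.2) (pos_cross he P P' Q R' c)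
    · exact Tri.nc hT hx'.2.1 (by rw [Sym2.eq_swap]; exact hx.2.2.2) (pos_cross he P' P Q' R c)
  · by_contra hne
    rcases sb_total (ne (sb_rot he) Q) hne (ne (sb_rot he) Q') with c | c
    · exact Tri.nc hT hx.2.2.1 (by rw [Sym2.eq_swap]; exact hx'.2.1) (pos_cross (sb_rot he) Q Q' R P' c)
    · exact Tri.nc hT hx'.2.2.1 (by rw [Sym2.eq_swap]; exact hx.2.1) (pos_cross (sb_rot he) Q' Q R' P c)
  · by_contra hne
    rcases sb_total (ne (sb_rot' he) R) hne (ne (sb_rot' he) R') with c | c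
    · exact Tri.nc hT hx.2.2.2 (by rw [Sym2.eq_swap]; exact hx'.2.2.1) (pos_cross (sb_rot' he) R R' P Q' c)
    · exact Tri.nc hT hx'.2.2.2 (by rw [Sym2.eq_swap]; exact hx.2.2.1) (pos_cross (sb_rot' he) R' R P' Q c)

/-- labelled triangles -/
noncomputable def lbl (A : Finset V) : Finset (V × V × V) :=
  (A ×ˢ A ×ˢ A).filter (fun t => sb t.1 t.2.1 t.2.2)

lemma mem_lbl {A : Finset V} {t : V × V × V} : t ∈ lbl A ↔
    (t.1 ∈ A ∧ t.2.1 ∈ A ∧ t.2.2 ∈ A) ∧ sb t.1 t.2.1 t.2.2 := by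
  simp [lbl]

/-- number of elements of `E` in `[u,v)` -/
noncomputable def cn (E : Finset V) (u v : V) : ℝ := ((E.filter (ha u v)).card : ℝ)

lemma cn_nonneg (E : Finset V) (u v : V) : 0 ≤ cn E u v := Nat.cast_nonneg _

lemma cn_eq (E : Finset V) (u v : V) : cn E u v = ∑ e ∈ E, if ha u v e then (1 : ℝ) else 0 := by
  simp [cn]

lemma bud_count {A : Finset V} {x : Finset (Sym2 V)} (hx : x ∈ Tri A) {E1 E2 E3 : Finset V}
    (h1 : E1 ⊆ A) (h2 : E2 ⊆ A) (h3 : E3 ⊆ A) 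
    (h : ∀ e1 ∈ E1, ∀ e2 ∈ E2, ∀ e3 ∈ E3, sb e1 e2 e3) :
    ∑ t ∈ lbl A, (if x ∈ Om A t.1 t.2.1 t.2.2 then
      cn E1 t.2.2 t.1 * cn E2 t.1 t.2.1 * cn E3 t.2.1 t.2.2 else 0) =
      (E1.card : ℝ) * E2.card * E3.card := by
  have e1 : ∀ t ∈ lbl A, (if x ∈ Om A t.1 t.2.1 t.2.2 then
      cn E1 t.2.2 t.1 * cn E2 t.1 t.2.1 * cn E3 t.2.1 t.2.2 else 0) =
      ∑ e1 ∈ E1, ∑ e2 ∈ E2, ∑ e3 ∈ E3, if (x ∈ Om A t.1 t.2.1 t.2.2 ∧ ha t.2.2 t.1 e1 ∧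
        ha t.1 t.2.1 e2 ∧ ha t.2.1 t.2.2 e3) then (1 : ℝ) else 0 := by
    intro t _
    by_cases hxt : x ∈ Om A t.1 t.2.1 t.2.2
    · simp only [hxt, if_true, true_and, cn_eq]
      rw [mul_assoc, sum_mul]
      refine sum_congr rfl (fun e1 _ => ?_)
      rw [sum_mul, mul_sum]
      refine sum_congr rfl (fun e2 _ => ?_)
      rw [mul_sum, mul_sum]
      refine sum_congr rfl (fun e3 _ => ?_)
      split_ifs <;> simp_all
    · simp [hxt]
  rw [sum_congr rfl e1, sum_comm]
  have e2 : ∀ e1 ∈ E1, ∑ t ∈ lbl A, ∑ e2 ∈ E2, ∑ e3 ∈ E3, (if (x ∈ Om A t.1 t.2.1 t.2.2 ∧ ha t.2.2 t.1 e1 ∧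
        ha t.1 t.2.1 e2 ∧ ha t.2.1 t.2.2 e3) then (1 : ℝ) else 0) = ∑ e2 ∈ E2, ∑ e3 ∈ E3, 1 := by
    intro e1 he1
    rw [sum_comm]
    refine sum_congr rfl (fun e2 he2 => ?_)
    rw [sum_comm]
    refine sum_congr rfl (fun e3 he3 => ?_)
    have he := h e1 he1 e2 he2 e3 he3
    obtain ⟨p, q, r, hs, hO, a1, a2, a3⟩ := med_exists hx (h1 he1) (h2 he2) (h3 he3) he
    have hO' := mem_Om.1 hO
    rw [sum_eq_single (p, q, r)]
    · rw [if_pos ⟨hO, a1, a2, a3⟩]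
    · rintro ⟨p', q', r'⟩ ht hne
      rw [if_neg]
      rintro ⟨hO'', b1, b2, b3⟩
      obtain ⟨rfl, rfl, rfl⟩ := med_unique he hs hO a1 a2 a3 (mem_lbl.1 ht).2 hO'' b1 b2 b3
      exact hne rfl
    · intro hn
      exact absurd (mem_lbl.2 ⟨⟨(Tri.mem hO'.1 hO'.2.1).1, (Tri.mem hO'.1 hO'.2.1).2,
        (Tri.mem hO'.1 hO'.2.2.1).2⟩, hs⟩) hn
  rw [sum_congr rfl e2]
  simp [mul_assoc]

/-- budget condition -/
def bud (A : Finset V) (κ : V → V → V → ℝ) : Prop :=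
  (∀ p q r, 0 ≤ κ p q r) ∧ ∀ x ∈ Tri A, ∑ t ∈ lbl A,
    (if x ∈ Om A t.1 t.2.1 t.2.2 then κ t.1 t.2.1 t.2.2 else 0) ≤ 1

lemma wsum {A : Finset V} (κ : V → V → V → ℝ) (g : Finset (Sym2 V) → ℝ) :
    ∑ t ∈ lbl A, κ t.1 t.2.1 t.2.2 * ∑ x ∈ Om A t.1 t.2.1 t.2.2, g x =
    ∑ x ∈ Tri A, (∑ t ∈ lbl A, (if x ∈ Om A t.1 t.2.1 t.2.2 then κ t.1 t.2.1 t.2.2 else 0)) * g x := by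
  simp_rw [sum_mul]
  rw [sum_comm]
  refine sum_congr rfl (fun t _ => ?_)
  rw [mul_sum]
  have : Om A t.1 t.2.1 t.2.2 = (Tri A).filter (fun x => x ∈ Om A t.1 t.2.1 t.2.2) := by
    ext x; rw [mem_filter]; constructor
    · intro h; exact ⟨(mem_Om.1 h).1, h⟩
    · exact fun h => h.2
  rw [this, sum_filter]
  refine sum_congr rfl (fun x _ => ?_)
  rw [← this]
  split_ifs <;> simp

lemma bud.sum_le {A : Finset V} {κ : V → V → V → ℝ} (h : bud A κ) (g : Finset (Sym2 V) → ℝ)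
    (hg : ∀ x, 0 ≤ g x) :
    ∑ t ∈ lbl A, κ t.1 t.2.1 t.2.2 * ∑ x ∈ Om A t.1 t.2.1 t.2.2, g x ≤ ∑ x ∈ Tri A, g x := by
  rw [wsum]
  refine sum_le_sum (fun x hx => ?_)
  have := mul_le_mul_of_nonneg_right (h.2 x hx) (hg x)
  linarith

lemma bud.rot {A : Finset V} {κ : V → V → V → ℝ} (h : bud A κ) : bud A (fun q r p => κ p q r) := by
  refine ⟨fun _ _ _ => h.1 _ _ _, fun x hx => le_trans (le_of_eq ?_) (h.2 x hx)⟩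
  refine sum_nbij' (fun t => (t.2.2, t.1, t.2.1)) (fun t => (t.2.1, t.2.2, t.1)) ?_ ?_ ?_ ?_ ?_
  · intro t ht
    rw [mem_lbl] at ht ⊢
    exact ⟨⟨ht.1.2.2, ht.1.1, ht.1.2.1⟩, sb_rot' ht.2⟩
  · intro t ht
    rw [mem_lbl] at ht ⊢
    exact ⟨⟨ht.1.2.1, ht.1.2.2, ht.1.1⟩, sb_rot ht.2⟩
  · intros; rfl
  · intros; rfl
  · intro t _
    simp only
    rw [Om_rot A t.2.2]

lemma bud.En_le {A : Finset V} {κ : V → V → V → ℝ} (h : bud A κ) (f : Finset (Sym2 V) → ℝ) :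
    ∑ t ∈ lbl A, κ t.1 t.2.1 t.2.2 * En (Om A t.1 t.2.1 t.2.2) f ≤ En (Tri A) f := by
  refine le_trans ?_ (h.sum_le (fun x => ∑ y ∈ Tri A, en f x y)
    (fun x => sum_nonneg (fun _ _ => en_nonneg _ _ _)))
  refine sum_le_sum (fun t _ => mul_le_mul_of_nonneg_left ?_ (h.1 _ _ _))
  unfold En
  exact sum_le_sum (fun x _ => sum_le_sum_of_subset_of_nonneg (filter_subset _ _)
    (fun _ _ _ => en_nonneg _ _ _))

/-- sum of apex deviations -/
lemma DPsum {A : Finset V} {κ : V → V → V → ℝ} (h : bud A κ) (f : Finset (Sym2 V) → ℝ) :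
    ∑ t ∈ lbl A, ∑ s ∈ inner A t.2.2 t.1, κ t.1 t.2.1 t.2.2 * |∑ x ∈ Qd A t.1 t.2.1 t.2.2 s, f x -
      ((Qd A t.1 t.2.1 t.2.2 s).card : ℝ) / (Om A t.1 t.2.1 t.2.2).card * ∑ x ∈ Om A t.1 t.2.1 t.2.2, f x|
      ≤ En (Tri A) f := by
  refine le_trans (sum_le_sum (fun t ht => ?_)) (h.En_le f)
  rw [mem_lbl] at ht
  rw [← mul_sum]
  exact mul_le_mul_of_nonneg_left (DP ht.1.1 ht.1.2.1 ht.1.2.2 ht.2 f) (h.1 _ _ _)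

/-- sum of flip differences -/
lemma FPsum {A : Finset V} {κ : V → V → V → ℝ} (h : bud A κ) (f : Finset (Sym2 V) → ℝ) :
    ∑ t ∈ lbl A, ∑ s ∈ inner A t.2.2 t.1, κ t.1 t.2.1 t.2.2 * |∑ x ∈ Qd A t.1 t.2.1 t.2.2 s, f x -
      ∑ x ∈ Qd A t.2.1 t.2.2 s t.1, f x| ≤ En (Tri A) f := by
  refine le_trans (sum_le_sum (fun t ht => ?_)) (h.sum_le (fun x => ∑ y ∈ Tri A, en f x y)
    (fun x => sum_nonneg (fun _ _ => en_nonneg _ _ _)))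
  rw [mem_lbl] at ht
  rw [← mul_sum]
  refine mul_le_mul_of_nonneg_left ?_ (h.1 _ _ _)
  rcases (inner A t.2.2 t.1).eq_empty_or_nonempty with h0 | hi
  · rw [h0, sum_empty]
    exact sum_nonneg (fun _ _ => sum_nonneg (fun _ _ => en_nonneg _ _ _))
  rw [sum_Qd hi]
  refine sum_le_sum (fun s hs => ?_)
  rw [mem_inner] at hs
  refine (flip_diff ht.2 hs.2 f).trans (sum_le_sum (fun x hx => ?_))
  exact single_le_sum (f := fun y => en f x y) (fun _ _ => en_nonneg _ _ _)
    (mem_Qd.1 (flip_mem ht.2 hs.2 hx)).1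

/-- average over the triangulations containing a triangle -/
noncomputable def H (A : Finset V) (f : Finset (Sym2 V) → ℝ) (p q r : V) : ℝ :=
  (∑ x ∈ Om A p q r, f x) / (Om A p q r).card

lemma H_rot (A : Finset V) (f : Finset (Sym2 V) → ℝ) (p q r : V) : H A f p q r = H A f q r p := by
  unfold H; rw [Om_rot]

lemma quad_reindex {A : Finset V} (g : V → V → V → V → ℝ) :
    ∑ t ∈ lbl A, ∑ s ∈ inner A t.2.2 t.1, g t.1 t.2.1 t.2.2 s =
    ∑ t ∈ lbl A, ∑ p ∈ inner A t.2.2 t.1, g p t.1 t.2.1 t.2.2 := by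
  rw [sum_sigma', sum_sigma']
  refine sum_nbij' (fun z => ⟨(z.1.2.1, z.1.2.2, z.2), z.1.1⟩) (fun z => ⟨(z.2, z.1.1, z.1.2.1), z.1.2.2⟩)
    ?_ ?_ ?_ ?_ ?_
  · rintro ⟨⟨p, q, r⟩, s⟩ hz
    simp only [mem_sigma, mem_lbl, mem_inner] at hz ⊢
    obtain ⟨⟨⟨h1, h2, h3⟩, h4⟩, h5, h6⟩ := hz
    have := sb_quad h4 h6
    exact ⟨⟨⟨h2, h3, h5⟩, this.1⟩, h1, this.2⟩
  · rintro ⟨⟨p, q, r⟩, s⟩ hz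
    simp only [mem_sigma, mem_lbl, mem_inner] at hz ⊢
    obtain ⟨⟨⟨h1, h2, h3⟩, h4⟩, h5, h6⟩ := hz
    have h7 : sb s p q ∧ sb q r s := by
      unfold sb at *; grind
    exact ⟨⟨⟨h5, h1, h2⟩, h7.1⟩, h3, h7.2⟩
  · intros; rfl
  · intros; rfl
  · intros; rfl

lemma quad_abs (m N N' F F' G G' : ℝ) (hm : 0 < m) :
    m * |F / N - F' / N'| ≤ |G - m / N * F| + |G - G'| + |G' - m / N' * F'| := by
  rw [← abs_of_pos hm, ← abs_mul, abs_of_pos hm]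
  have e : m * (F / N - F' / N') = -(G - m / N * F) + (G - G') + (G' - m / N' * F') := by ring
  rw [e]
  refine (abs_add_le _ _).trans (add_le_add_left ((abs_add_le _ _).trans ?_) _)
  rw [abs_neg]

lemma MOVEd {A : Finset V} {κ κ' : V → V → V → ℝ} (h : bud A κ) (h' : bud A κ') 
    (f : Finset (Sym2 V) → ℝ) (K : ℝ) (hK : 0 ≤ K) (w : V → V → V → V → ℝ)
    (h0 : ∀ p q r s, 0 ≤ w p q r s)
    (h1 : ∀ t ∈ lbl A, ∀ s ∈ inner A t.2.2 t.1, 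
      w t.1 t.2.1 t.2.2 s ≤ K * κ t.1 t.2.1 t.2.2 * (Qd A t.1 t.2.1 t.2.2 s).card)
    (h2 : ∀ t ∈ lbl A, ∀ s ∈ inner A t.2.2 t.1, 
      w t.1 t.2.1 t.2.2 s ≤ K * κ' s t.2.1 t.2.2 * (Qd A t.1 t.2.1 t.2.2 s).card) :
    ∑ t ∈ lbl A, ∑ s ∈ inner A t.2.2 t.1, w t.1 t.2.1 t.2.2 s *
      |H A f t.1 t.2.1 t.2.2 - H A f s t.2.1 t.2.2| ≤ 3 * K * En (Tri A) f := by
  have d1 := DPsum h f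
  have d2 := FPsum h f
  have d3 := DPsum h'.rot f
  rw [← quad_reindex (fun p q r s => κ' s q r * |∑ x ∈ Qd A q r s p, f x -
      ((Qd A q r s p).card : ℝ) / (Om A q r s).card * ∑ x ∈ Om A q r s, f x|)] at d3
  have key : ∑ t ∈ lbl A, ∑ s ∈ inner A t.2.2 t.1, w t.1 t.2.1 t.2.2 s *
      |H A f t.1 t.2.1 t.2.2 - H A f s t.2.1 t.2.2| ≤
      ∑ t ∈ lbl A, ∑ s ∈ inner A t.2.2 t.1, (K * (κ t.1 t.2.1 t.2.2 * |∑ x ∈ Qd A t.1 t.2.1 t.2.2 s, f x -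
      ((Qd A t.1 t.2.1 t.2.2 s).card : ℝ) / (Om A t.1 t.2.1 t.2.2).card * ∑ x ∈ Om A t.1 t.2.1 t.2.2, f x|)
      + K * (κ t.1 t.2.1 t.2.2 * |∑ x ∈ Qd A t.1 t.2.1 t.2.2 s, f x -
      ∑ x ∈ Qd A t.2.1 t.2.2 s t.1, f x|)
      + K * (κ' s t.2.1 t.2.2 * |∑ x ∈ Qd A t.2.1 t.2.2 s t.1, f x -
      ((Qd A t.2.1 t.2.2 s t.1).card : ℝ) / (Om A t.2.1 t.2.2 s).card * ∑ x ∈ Om A t.2.1 t.2.2 s, f x|)) := by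
    refine sum_le_sum (fun t ht => sum_le_sum (fun s hs => ?_))
    have i1 := h1 t ht s hs
    have i2 := h2 t ht s hs
    obtain ⟨p, q, r⟩ := t
    rw [mem_lbl] at ht
    rw [mem_inner] at hs
    simp only at ht hs i1 i2 ⊢
    obtain ⟨⟨hp, hq, hr⟩, hpq⟩ := ht
    have hm := Qd_card_pos hp hq hr hs.1 hpq hs.2
    rw [← flip_card (A := A) hpq hs.2, H_rot A f s q r]
    unfold H
    have qa := quad_abs _ ((Om A p q r).card : ℝ) ((Om A q r s).card : ℝ) (∑ x ∈ Om A p q r, f x)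
      (∑ x ∈ Om A q r s, f x) (∑ x ∈ Qd A p q r s, f x) (∑ x ∈ Qd A q r s p, f x) hm
    set m : ℝ := ((Qd A p q r s).card : ℝ)
    set D := |(∑ x ∈ Om A p q r, f x) / ((Om A p q r).card : ℝ) - (∑ x ∈ Om A q r s, f x) / ((Om A q r s).card : ℝ)|
    set X := |∑ x ∈ Qd A p q r s, f x - m / ((Om A p q r).card : ℝ) * ∑ x ∈ Om A p q r, f x|
    set Y := |∑ x ∈ Qd A p q r s, f x - ∑ x ∈ Qd A q r s p, f x|
    set Z := |∑ x ∈ Qd A q r s p, f x - m / ((Om A q r s).card : ℝ) * ∑ x ∈ Om A q r s, f x|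
    have hX : 0 ≤ X := abs_nonneg _
    have hY : 0 ≤ Y := abs_nonneg _
    have hZ : 0 ≤ Z := abs_nonneg _
    have hv0 : 0 ≤ w p q r s / m := div_nonneg (h0 _ _ _ _) hm.le
    have j1 : w p q r s / m ≤ K * κ p q r := by rw [div_le_iff₀ hm]; exact i1
    have j2 : w p q r s / m ≤ K * κ' s q r := by rw [div_le_iff₀ hm]; exact i2
    have e : w p q r s * D = w p q r s / m * (m * D) := by field_simp
    rw [e]
    have k1 := mul_le_mul_of_nonneg_left qa hv0
    have k2 := mul_le_mul_of_nonneg_right j1 hX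
    have k3 := mul_le_mul_of_nonneg_right j1 hY
    have k4 := mul_le_mul_of_nonneg_right j2 hZ
    linarith
  refine key.trans ?_
  simp_rw [sum_add_distrib, ← mul_sum]
  have k1 := mul_le_mul_of_nonneg_left d1 hK
  have k2 := mul_le_mul_of_nonneg_left d2 hK
  have k3 := mul_le_mul_of_nonneg_left d3 hK
  simp_rw [mul_sum] at k1 k2 k3 ⊢
  linarith

lemma len_le {A : Finset V} {u v : V} (hu : u ∈ A) : len A u v ≤ A.card := by
  have : (arc A u v).card ≤ A.card := card_le_card (filter_subset _ _)
  unfold len; omega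

lemma Om_le_Qd {A : Finset V} {p q r s : V} (hp : p ∈ A) (hq : q ∈ A) (hr : r ∈ A) (hs : s ∈ A)
    (h : sb p q r) (h' : sb r s p) :
    ((Om A p q r).card : ℝ) ≤ 16 * th A.card * (Qd A p q r s).card ∧ 
    ((Om A s q r).card : ℝ) ≤ 16 * th A.card * (Qd A p q r s).card := by
  have hs1 := sb_quad h h'
  rw [card_Qd hp hq hr hs h h', card_Om hp hq hr h, card_Om hs hq hr (sb_rot' hs1.1)]
  have g1 := gam_pos (len A p q)
  have g2 := gam_pos (len A q r)
  have g3 := gam_pos (len A r s)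
  have g4 := gam_pos (len A s p)
  have l1 := len_add hr hs hp h'
  have l2 := len_add hs hp hq hs1.2
  have s1 := gam_split (len A r s) (len A s p) A.card (len_pos hr hs (sb_ne h').1)
    (len_pos hs hp (sb_ne h').2.1) (l1 ▸ len_le hr)
  have s2 := gam_split (len A s p) (len A p q) A.card (len_pos hs hp (sb_ne h').2.1)
     (len_pos hp hq (sb_ne h).1) (l2 ▸ len_le hs)
  rw [l1] at s1
  rw [l2] at s2
  constructor
  · have := mul_le_mul_of_nonneg_left s1 (mul_pos g1 g2).le
    linarith
  · have := mul_le_mul_of_nonneg_left s2 (mul_pos g2 g3).le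
    linarith

lemma inner_split {A : Finset V} {p q r : V} (hp : p ∈ A) (h : sb p q r) (g : V → ℝ) (hg : g p = 0) :
    ∑ s ∈ inner A r q, g s = ∑ s ∈ inner A r p, g s + ∑ s ∈ inner A p q, g s := by
  have e : inner A r q = insert p (inner A r p ∪ inner A p q) := by
    ext s
    simp only [mem_insert, mem_union, mem_inner]
    constructor
    · rintro ⟨hs, h1⟩
      by_cases hsp : s = p
      · exact Or.inl hsp
      · right
        have : sb r s p ∨ sb p s q := by unfold sb at *; grind
        tauto
    · rintro (rfl | ⟨hs, h1⟩ | ⟨hs, h1⟩)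
      · exact ⟨hp, sb_rot' h⟩
      · exact ⟨hs, by unfold sb at *; grind⟩
      · exact ⟨hs, by unfold sb at *; grind⟩
  have hd : Disjoint (inner A r p) (inner A p q) := by
    rw [Finset.disjoint_left]
    intro s h1 h2
    rw [mem_inner] at h1 h2
    have := h1.2
    have := h2.2
    unfold sb at *; grind
  rw [e, sum_insert, sum_union hd, hg, zero_add]
  intro h1
  rw [mem_union, mem_inner, mem_inner] at h1
  rcases h1 with h1 | h1
  · exact (sb_ne h1.2).2.1 rfl
  · exact (sb_ne h1.2).1 rfl

lemma swap_reindex {A : Finset V} (g : V → V → V → V → ℝ) :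
    ∑ t ∈ lbl A, ∑ s ∈ inner A t.1 t.2.1, g t.1 t.2.1 t.2.2 s =
    ∑ t ∈ lbl A, ∑ p ∈ inner A t.2.2 t.1, g p t.2.1 t.2.2 t.1 := by
  rw [sum_sigma', sum_sigma']
  refine sum_nbij' (fun z => ⟨(z.2, z.1.2.1, z.1.2.2), z.1.1⟩) (fun z => ⟨(z.2, z.1.2.1, z.1.2.2), z.1.1⟩)
    ?_ ?_ ?_ ?_ ?_
  · rintro ⟨⟨p, q, r⟩, s⟩ hz
    simp only [mem_sigma, mem_lbl, mem_inner] at hz ⊢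
    obtain ⟨⟨⟨h1, h2, h3⟩, h4⟩, h5, h6⟩ := hz
    have h7 : sb s q r ∧ sb r p s := by
      unfold sb at *; grind
    exact ⟨⟨⟨h5, h2, h3⟩, h7.1⟩, h1, h7.2⟩
  · rintro ⟨⟨p, q, r⟩, s⟩ hz
    simp only [mem_sigma, mem_lbl, mem_inner] at hz ⊢
    obtain ⟨⟨⟨h1, h2, h3⟩, h4⟩, h5, h6⟩ := hz
    have h7 : sb s q r ∧ sb s p q := by
      unfold sb at *; grind
    exact ⟨⟨⟨h5, h2, h3⟩, h7.1⟩, h1, h7.2⟩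
  · intros; rfl
  · intros; rfl
  · intros; rfl

/-- moving one vertex of the triangle -/
theorem MOVE {A : Finset V} {κ κ' : V → V → V → ℝ} (h : bud A κ) (h' : bud A κ') 
    (f : Finset (Sym2 V) → ℝ) (K : ℝ) (hK : 0 ≤ K) (w : V → V → V → V → ℝ)
    (h0 : ∀ p q r s, 0 ≤ w p q r s)
    (h1 : ∀ p q r s, p ∈ A → q ∈ A → r ∈ A → s ∈ A → sb p q r → sb s q r → 
      w p q r s ≤ K * κ p q r * (Om A p q r).card)
    (h2 : ∀ p q r s, p ∈ A → q ∈ A → r ∈ A → s ∈ A → sb p q r → sb s q r → 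
      w p q r s ≤ K * κ' s q r * (Om A p q r).card) :
    ∑ t ∈ lbl A, ∑ s ∈ inner A t.2.2 t.2.1, w t.1 t.2.1 t.2.2 s *
      |H A f t.1 t.2.1 t.2.2 - H A f s t.2.1 t.2.2| ≤ 96 * K * th A.card * En (Tri A) f := by
  have hth : 0 ≤ th A.card := by unfold th; positivity
  have e : ∑ t ∈ lbl A, ∑ s ∈ inner A t.2.2 t.2.1, w t.1 t.2.1 t.2.2 s *
      |H A f t.1 t.2.1 t.2.2 - H A f s t.2.1 t.2.2| = 
      ∑ t ∈ lbl A, ∑ s ∈ inner A t.2.2 t.1, w t.1 t.2.1 t.2.2 s *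
      |H A f t.1 t.2.1 t.2.2 - H A f s t.2.1 t.2.2| + 
      ∑ t ∈ lbl A, ∑ s ∈ inner A t.2.2 t.1, w s t.2.1 t.2.2 t.1 *
      |H A f t.1 t.2.1 t.2.2 - H A f s t.2.1 t.2.2| := by
    have e2 := swap_reindex (A := A) (fun p q r s => w p q r s * |H A f p q r - H A f s q r|)
    simp only [abs_sub_comm (H A f _ _ _) (H A f (Prod.fst _) _ _)] at e2 ⊢
    rw [← e2, ← sum_add_distrib]
    refine sum_congr rfl (fun t ht => ?_)
    rw [mem_lbl] at ht
    exact inner_split ht.1.1 ht.2 _ (by simp)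
  rw [e]
  have K16 : 0 ≤ 16 * K * th A.card := by positivity
  have geom : ∀ {p q r s : V}, sb p q r → sb r s p → sb s q r := fun a b => by
    unfold sb at *; grind
  have m1 := MOVEd h h' f (16 * K * th A.card) K16 w h0 (by
    rintro ⟨p, q, r⟩ ht s hs
    rw [mem_lbl] at ht
    rw [mem_inner] at hs
    simp only at ht hs ⊢
    refine (h1 p q r s ht.1.1 ht.1.2.1 ht.1.2.2 hs.1 ht.2 (geom ht.2 hs.2)).trans ?_
    have := (Om_le_Qd ht.1.1 ht.1.2.1 ht.1.2.2 hs.1 ht.2 hs.2).1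
    have := mul_le_mul_of_nonneg_left this (mul_nonneg hK (h.1 p q r))
    linarith) (by
    rintro ⟨p, q, r⟩ ht s hs
    rw [mem_lbl] at ht
    rw [mem_inner] at hs
    simp only at ht hs ⊢
    refine (h2 p q r s ht.1.1 ht.1.2.1 ht.1.2.2 hs.1 ht.2 (geom ht.2 hs.2)).trans ?_
    have := (Om_le_Qd ht.1.1 ht.1.2.1 ht.1.2.2 hs.1 ht.2 hs.2).1
    have := mul_le_mul_of_nonneg_left this (mul_nonneg hK (h'.1 s q r))
    linarith)
  have m2 := MOVEd h' h f (16 * K * th A.card) K16 (fun p q r s => w s q r p) (fun _ _ _ _ => h0 _ _ _ _) (by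
    rintro ⟨p, q, r⟩ ht s hs
    rw [mem_lbl] at ht
    rw [mem_inner] at hs
    simp only at ht hs ⊢
    refine (h2 s q r p hs.1 ht.1.2.1 ht.1.2.2 ht.1.1 (geom ht.2 hs.2) ht.2).trans ?_
    have := (Om_le_Qd ht.1.1 ht.1.2.1 ht.1.2.2 hs.1 ht.2 hs.2).2
    have := mul_le_mul_of_nonneg_left this (mul_nonneg hK (h'.1 p q r))
    linarith) (by
    rintro ⟨p, q, r⟩ ht s hs
    rw [mem_lbl] at ht
    rw [mem_inner] at hs
    simp only at ht hs ⊢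
    refine (h1 s q r p hs.1 ht.1.2.1 ht.1.2.2 ht.1.1 (geom ht.2 hs.2) ht.2).trans ?_
    have := (Om_le_Qd ht.1.1 ht.1.2.1 ht.1.2.2 hs.1 ht.2 hs.2).2
    have := mul_le_mul_of_nonneg_left this (mul_nonneg hK (h.1 s q r))
    linarith)
  linarith

end median
end Assoc

namespace Assoc
open scoped Classical
set_option linter.all false

section blocks
variable {V : Type*} [LinearOrder V]

/-- index of a vertex -/
noncomputable def idx (A : Finset V) (v : V) : ℕ := (A.filter (· < v)).card

lemma idx_lt {A : Finset V} {u v : V} (hu : u ∈ A) (h : u < v) : idx A u < idx A v := by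
  apply card_lt_card
  rw [ssubset_iff_of_subset]
  · exact ⟨u, by simp [hu, h], by simp⟩
  · intro w hw
    rw [mem_filter] at hw ⊢
    exact ⟨hw.1, hw.2.trans h⟩

lemma idx_lt_iff {A : Finset V} {u v : V} (hu : u ∈ A) (hv : v ∈ A) : idx A u < idx A v ↔ u < v := by
  refine ⟨fun h => ?_, idx_lt hu⟩
  by_contra hn
  rcases (not_lt.1 hn).lt_or_eq with h1 | rfl
  · have := idx_lt hv h1; omega
  · omega

lemma idx_inj {A : Finset V} {u v : V} (hu : u ∈ A) (hv : v ∈ A) : u = v ↔ idx A u = idx A v := by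
  refine ⟨fun h => by rw [h], fun h => ?_⟩
  rcases lt_trichotomy u v with h1 | h1 | h1
  · have := idx_lt hu h1; omega
  · exact h1
  · have := idx_lt hv h1; omega

lemma idx_bound {A : Finset V} {u : V} (hu : u ∈ A) : idx A u < A.card := by
  apply card_lt_card
  rw [ssubset_iff_of_subset (filter_subset _ _)]
  exact ⟨u, hu, by simp⟩

lemma sb_idx {A : Finset V} {u v w : V} (hu : u ∈ A) (hv : v ∈ A) (hw : w ∈ A) :
    sb u v w ↔ sb (idx A u) (idx A v) (idx A w) := by
  unfold sb
  rw [idx_lt_iff hu hv, idx_lt_iff hv hw, idx_lt_iff hw hu]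

lemma ha_idx {A : Finset V} {u v w : V} (hu : u ∈ A) (hv : v ∈ A) (hw : w ∈ A) :
    ha u v w ↔ ha (idx A u) (idx A v) (idx A w) := by
  unfold ha
  rw [sb_idx hu hw hv, idx_inj hw hu]

lemma ho_idx {A : Finset V} {u v w : V} (hu : u ∈ A) (hv : v ∈ A) (hw : w ∈ A) :
    ho u v w ↔ ho (idx A u) (idx A v) (idx A w) := by
  unfold ho
  rw [sb_idx hu hw hv, idx_inj hw hv]

/-- block of vertices by index -/
noncomputable def blk (A : Finset V) (a b : ℕ) : Finset V :=
  A.filter (fun v => a ≤ idx A v ∧ idx A v < b)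

lemma mem_blk {A : Finset V} {a b : ℕ} {v : V} : v ∈ blk A a b ↔ v ∈ A ∧ a ≤ idx A v ∧ idx A v < b := by
  simp [blk]

lemma card_blk {A : Finset V} {a b : ℕ} (hb : b ≤ A.card) : (blk A a b).card = b - a := by
  have himg : A.image (idx A) = range A.card := by
    apply eq_of_subset_of_card_le
    · intro i hi
      rw [mem_image] at hi
      obtain ⟨v, hv, rfl⟩ := hi
      exact mem_range.2 (idx_bound hv)
    · rw [card_range, card_image_of_injOn]
      intro u hu v hv h
      exact (idx_inj hu hv).2 h
  rw [← Nat.card_Ico]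
  apply card_bij (fun v _ => idx A v)
  · intro v hv
    rw [mem_blk] at hv
    exact mem_Ico.2 hv.2
  · intro u hu v hv h
    rw [mem_blk] at hu hv
    exact (idx_inj hu.1 hv.1).2 h
  · intro i hi
    rw [mem_Ico] at hi
    have : i ∈ A.image (idx A) := by rw [himg]; exact mem_range.2 (by omega)
    rw [mem_image] at this
    obtain ⟨v, hv, rfl⟩ := this
    exact ⟨v, mem_blk.2 ⟨hv, hi⟩, rfl⟩

lemma cn_lower {A : Finset V} {E : Finset V} {a b : ℕ} {u v : V} (hb : b ≤ A.card) (hu : u ∈ A) (hv : v ∈ A)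
    (hE : blk A a b ⊆ E) (h : ∀ i, a ≤ i → i < b → ha (idx A u) (idx A v) i) :
    ((b - a : ℕ) : ℝ) ≤ cn E u v := by
  unfold cn
  rw [← card_blk hb]
  exact_mod_cast card_le_card (fun e he => by
    have h1 := mem_blk.1 he
    exact mem_filter.2 ⟨hE he, (ha_idx hu hv h1.1).2 (h _ h1.2.1 h1.2.2)⟩)

lemma cn_le_card (E : Finset V) (u v : V) : cn E u v ≤ E.card := by
  unfold cn; exact_mod_cast card_le_card (filter_subset _ _)

lemma cn_mono {E E' : Finset V} (h : E ⊆ E') (u v : V) : cn E u v ≤ cn E' u v := by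
  unfold cn; exact_mod_cast card_le_card (filter_subset_filter _ h)

lemma cn_le_len {A E : Finset V} (hE : E ⊆ A) {u v : V} (hv : v ∈ A) (h : u ≠ v) :
    cn E u v ≤ len A u v := by
  unfold cn len
  have h1 : E.filter (ha u v) ⊆ (arc A u v).erase v := by
    intro e he
    rw [mem_filter] at he
    rw [mem_erase, mem_arc]
    refine ⟨?_, hE he.1, ?_⟩
    · rcases he.2 with rfl | h2
      · exact h
      · exact (sb_ne h2).2.1
    · unfold inarc; have := he.2; unfold ha at this; tauto
  have h2 : v ∈ arc A u v := mem_arc.2 ⟨hv, Or.inr (Or.inl rfl)⟩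
  have := card_le_card h1
  rw [card_erase_of_mem h2] at this
  exact_mod_cast this

lemma cn_pos {E : Finset V} {u v : V} (h : 0 < cn E u v) : ∃ e ∈ E, ha u v e := by
  unfold cn at h
  have : 0 < (E.filter (ha u v)).card := by exact_mod_cast h
  obtain ⟨e, he⟩ := card_pos.1 this
  exact ⟨e, (mem_filter.1 he).1, (mem_filter.1 he).2⟩

/-- valid labelled triangles -/
structure Vd (A : Finset V) (s : ℕ) (p q r : V) : Prop where
  hp : p ∈ A
  hq : q ∈ A
  hr : r ∈ A
  h : sb p q r
  h1 : 0 < cn (blk A s (2 * s)) r p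
  h2 : 0 < cn (blk A (5 * s) (6 * s)) p q
  h3 : 0 < cn (blk A (9 * s) (10 * s)) q r

lemma Vd.pos {A : Finset V} {s : ℕ} {p q r : V} (hv : Vd A s p q r) :
    (s < idx A p ∧ idx A p < 6 * s) ∧ (5 * s < idx A q ∧ idx A q < 10 * s) ∧
    (9 * s < idx A r ∨ idx A r < 2 * s) := by
  obtain ⟨e1, he1, a1⟩ := cn_pos hv.h1
  obtain ⟨e2, he2, a2⟩ := cn_pos hv.h2
  obtain ⟨e3, he3, a3⟩ := cn_pos hv.h3
  rw [mem_blk] at he1 he2 he3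
  have he : sb e1 e2 e3 := by
    rw [sb_idx he1.1 he2.1 he3.1]; unfold sb; omega
  have P := pos1 hv.h he a1 a2
  have Q := pos1 (sb_rot hv.h) (sb_rot he) a2 a3
  have R := pos1 (sb_rot' hv.h) (sb_rot' he) a3 a1
  rw [ho_idx he1.1 he2.1 hv.hp] at P
  rw [ho_idx he2.1 he3.1 hv.hq] at Q
  rw [ho_idx he3.1 he1.1 hv.hr] at R
  unfold ho sb at P Q R
  omega

variable {A : Finset V} {s : ℕ}

lemma blk_sub (a b : ℕ) : blk A a b ⊆ A := filter_subset _ _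

lemma F1 (hs : 1 ≤ s) (hm : 12 * s ≤ A.card) {p q r p' : V} (hv : Vd A s p q r) (hp' : p' ∈ blk A (3 * s) (4 * s)) :
    sb p' q r ∧ (s : ℝ) ≤ cn (blk A 0 (3 * s)) r p' ∧ (s : ℝ) ≤ cn (blk A (4 * s) (7 * s)) p' q ∧
    cn (blk A (9 * s) (10 * s)) q r ≤ cn (blk A (8 * s) (11 * s)) q r := by
  have hpos := hv.pos
  have hsb := (sb_idx hv.hp hv.hq hv.hr).1 hv.h
  rw [mem_blk] at hp'
  unfold sb at hsb
  refine ⟨?_, ?_, ?_, ?_⟩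
  · rw [sb_idx hp'.1 hv.hq hv.hr]; unfold sb; omega
  · have := cn_lower (A := A) (E := blk A 0 (3 * s)) (a := 2 * s) (b := 3 * s) (u := r) (v := p')
      (by omega) hv.hr hp'.1 (fun e he => by rw [mem_blk] at he ⊢; exact ⟨he.1, by omega, by omega⟩)
      (fun i _ _ => by unfold ha sb; omega)
    rwa [show 3 * s - 2 * s = s by omega] at this
  · have := cn_lower (A := A) (E := blk A (4 * s) (7 * s)) (a := 4 * s) (b := 5 * s) (u := p') (v := q)
      (by omega) hp'.1 hv.hq (fun e he => by rw [mem_blk] at he ⊢; exact ⟨he.1, by omega, by omega⟩)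
      (fun i _ _ => by unfold ha sb; omega)
    rwa [show 5 * s - 4 * s = s by omega] at this
  · exact cn_mono (fun e he => by rw [mem_blk] at he ⊢; exact ⟨he.1, by omega, by omega⟩) _ _

lemma F2 (hs : 1 ≤ s) (hm : 12 * s ≤ A.card) {p q r p' q' : V} (hv : Vd A s p q r) (hp' : p' ∈ blk A (3 * s) (4 * s))
    (hq' : q' ∈ blk A (7 * s) (8 * s)) :
    sb p' q' r ∧ (s : ℝ) ≤ cn (blk A 0 (3 * s)) r p' ∧ 3 * (s : ℝ) ≤ cn (blk A (4 * s) (7 * s)) p' q' ∧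
    (s : ℝ) ≤ cn (blk A (8 * s) (11 * s)) q' r := by
  have hpos := hv.pos
  have hsb := (sb_idx hv.hp hv.hq hv.hr).1 hv.h
  have h1 := (F1 hs hm hv hp').2.1
  rw [mem_blk] at hp' hq'
  unfold sb at hsb
  refine ⟨?_, h1, ?_, ?_⟩
  · rw [sb_idx hp'.1 hq'.1 hv.hr]; unfold sb; omega
  · have := cn_lower (A := A) (E := blk A (4 * s) (7 * s)) (a := 4 * s) (b := 7 * s) (u := p') (v := q')
      (by omega) hp'.1 hq'.1 (fun e he => by rw [mem_blk] at he ⊢; exact ⟨he.1, by omega, by omega⟩)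
      (fun i _ _ => by unfold ha sb; omega)
    rw [show 7 * s - 4 * s = 3 * s by omega] at this
    exact_mod_cast this
  · have := cn_lower (A := A) (E := blk A (8 * s) (11 * s)) (a := 8 * s) (b := 9 * s) (u := q') (v := r)
      (by omega) hq'.1 hv.hr (fun e he => by rw [mem_blk] at he ⊢; exact ⟨he.1, by omega, by omega⟩)
      (fun i _ _ => by unfold ha sb; omega)
    rwa [show 9 * s - 8 * s = s by omega] at this

lemma F3 (hs : 1 ≤ s) (hm : 12 * s ≤ A.card) {p' q' r' : V} (hp' : p' ∈ blk A (3 * s) (4 * s))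
    (hq' : q' ∈ blk A (7 * s) (8 * s)) (hr' : r' ∈ blk A (11 * s) (12 * s)) :
    sb p' q' r' ∧ 3 * (s : ℝ) ≤ cn (blk A 0 (3 * s)) r' p' ∧ 3 * (s : ℝ) ≤ cn (blk A (4 * s) (7 * s)) p' q' ∧
    3 * (s : ℝ) ≤ cn (blk A (8 * s) (11 * s)) q' r' := by
  rw [mem_blk] at hp' hq' hr'
  refine ⟨?_, ?_, ?_, ?_⟩
  · rw [sb_idx hp'.1 hq'.1 hr'.1]; unfold sb; omega
  · have := cn_lower (A := A) (E := blk A 0 (3 * s)) (a := 0) (b := 3 * s) (u := r') (v := p')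
      (by omega) hr'.1 hp'.1 (fun e he => by rw [mem_blk] at he ⊢; exact ⟨he.1, by omega, by omega⟩)
      (fun i _ _ => by unfold ha sb; omega)
    rw [show 3 * s - 0 = 3 * s by omega] at this
    exact_mod_cast this
  · have := cn_lower (A := A) (E := blk A (4 * s) (7 * s)) (a := 4 * s) (b := 7 * s) (u := p') (v := q')
      (by omega) hp'.1 hq'.1 (fun e he => by rw [mem_blk] at he ⊢; exact ⟨he.1, by omega, by omega⟩)
      (fun i _ _ => by unfold ha sb; omega)
    rw [show 7 * s - 4 * s = 3 * s by omega] at this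
    exact_mod_cast this
  · have := cn_lower (A := A) (E := blk A (8 * s) (11 * s)) (a := 8 * s) (b := 11 * s) (u := q') (v := r')
      (by omega) hq'.1 hr'.1 (fun e he => by rw [mem_blk] at he ⊢; exact ⟨he.1, by omega, by omega⟩)
      (fun i _ _ => by unfold ha sb; omega)
    rw [show 11 * s - 8 * s = 3 * s by omega] at this
    exact_mod_cast this


lemma F5 (hs : 1 ≤ s) (hm : 12 * s ≤ A.card) {p q r : V} (hv : Vd A s p q r) :
    (arc A p q).card + s ≤ A.card + 1 ∧ (arc A q r).card + s ≤ A.card + 1 ∧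
    (arc A r p).card + s ≤ A.card + 1 := by
  have hpos := hv.pos
  have hsb := (sb_idx hv.hp hv.hq hv.hr).1 hv.h
  have hne := sb_ne hv.h
  unfold sb at hsb
  have key : ∀ {u v : V} (a b : ℕ), u ∈ A → v ∈ A → u ≠ v → b ≤ A.card → s ≤ b - a →
      (∀ i, a ≤ i → i < b → ha (idx A v) (idx A u) i) → (arc A u v).card + s ≤ A.card + 1 := by
    intro u v a b hu hv huv hb hab hi
    have h1 := cn_lower (A := A) (E := A) (a := a) (b := b) (u := v) (v := u) hb hv hu (blk_sub _ _) hi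
    have h2 := cn_le_len (A := A) (E := A) (Subset.refl _) hu huv.symm
    have h3 := arc_compl_card hu hv huv
    have h4 := two_le_arc hu hv huv
    have h5 : b - a ≤ len A v u := by exact_mod_cast h1.trans h2
    unfold len at h5
    omega
  refine ⟨key (11 * s) (12 * s) hv.hp hv.hq hne.1 hm (by omega) (fun i _ _ => by unfold ha sb; omega),
    key (3 * s) (4 * s) hv.hq hv.hr hne.2.1 (by omega) (by omega) ?_,
    key (7 * s) (8 * s) hv.hr hv.hp hne.2.2.symm (by omega) (by omega) ?_⟩
  · intro i _ _; unfold ha sb; omega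
  · intro i _ _; unfold ha sb; omega

end blocks
end Assoc

namespace Assoc
open scoped Classical
set_option linter.all false

section main
variable {V : Type*} [LinearOrder V]

lemma sum_lbl {A : Finset V} (φ : V → V → V → ℝ) :
    ∑ t ∈ lbl A, φ t.1 t.2.1 t.2.2 = ∑ p ∈ A, ∑ q ∈ A, ∑ r ∈ A, if sb p q r then φ p q r else 0 := by
  unfold lbl
  rw [sum_filter, sum_product]
  refine sum_congr rfl (fun p _ => ?_)
  rw [sum_product]

/-- averaging step -/
lemma avg_abs {α : Type*} (S : Finset α) (g k : α → ℝ) (hg : ∀ a ∈ S, 0 ≤ g a) (h1 : ∑ a ∈ S, g a = 1) (c : ℝ) :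
    |c - ∑ a ∈ S, g a * k a| ≤ ∑ a ∈ S, g a * |c - k a| := by
  have : c - ∑ a ∈ S, g a * k a = ∑ a ∈ S, g a * (c - k a) := by
    simp_rw [mul_sub]; rw [sum_sub_distrib, ← sum_mul, h1, one_mul]
  rw [this]
  refine (abs_sum_le_sum_abs _ _).trans (sum_le_sum (fun a ha => ?_))
  rw [abs_mul, abs_of_nonneg (hg a ha)]

lemma tele {α : Type*} (A : Finset α) (W : α → α → α → ℝ) (hW : ∀ p q r, 0 ≤ W p q r) (g1 g2 g3 : α → ℝ)
    (p1 : ∀ a ∈ A, 0 ≤ g1 a) (p2 : ∀ a ∈ A, 0 ≤ g2 a) (p3 : ∀ a ∈ A, 0 ≤ g3 a)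
    (s1 : ∑ a ∈ A, g1 a = 1) (s2 : ∑ a ∈ A, g2 a = 1) (s3 : ∑ a ∈ A, g3 a = 1) (h : α → α → α → ℝ) :
    ∃ μ : ℝ, ∑ p ∈ A, ∑ q ∈ A, ∑ r ∈ A, W p q r * |h p q r - μ| ≤
      ∑ p ∈ A, ∑ q ∈ A, ∑ r ∈ A, ∑ p' ∈ A, W p q r * g1 p' * |h p q r - h p' q r| +
      ∑ q ∈ A, ∑ r ∈ A, ∑ p' ∈ A, ∑ q' ∈ A, (∑ p ∈ A, W p q r) * g1 p' * g2 q' * |h p' q r - h p' q' r| +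
      ∑ r ∈ A, ∑ p' ∈ A, ∑ q' ∈ A, ∑ r' ∈ A, (∑ q ∈ A, ∑ p ∈ A, W p q r) * g1 p' * g2 q' * g3 r' *
        |h p' q' r - h p' q' r'| := by
  set h1 : α → α → ℝ := fun q r => ∑ p' ∈ A, g1 p' * h p' q r with hh1
  set h2 : α → ℝ := fun r => ∑ q' ∈ A, g2 q' * h1 q' r with hh2
  set μ : ℝ := ∑ r' ∈ A, g3 r' * h2 r' with hμ
  refine ⟨μ, ?_⟩
  have b1 : ∀ p q r, |h p q r - h1 q r| ≤ ∑ p' ∈ A, g1 p' * |h p q r - h p' q r| :=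
    fun p q r => avg_abs A g1 _ p1 s1 _
  have c1 : ∀ q r q' r', |h1 q r - h1 q' r'| ≤ ∑ p' ∈ A, g1 p' * |h p' q r - h p' q' r'| := by
    intro q r q' r'
    rw [hh1]; simp only
    rw [← sum_sub_distrib]
    refine (abs_sum_le_sum_abs _ _).trans (sum_le_sum (fun a ha => ?_))
    rw [← mul_sub, abs_mul, abs_of_nonneg (p1 a ha)]
  have b2 : ∀ q r, |h1 q r - h2 r| ≤ ∑ p' ∈ A, ∑ q' ∈ A, g1 p' * g2 q' * |h p' q r - h p' q' r| := by
    intro q r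
    refine (avg_abs A g2 (fun q' => h1 q' r) p2 s2 (h1 q r)).trans ?_
    rw [sum_comm]
    refine sum_le_sum (fun q' hq' => ?_)
    refine (mul_le_mul_of_nonneg_left (c1 q r q' r) (p2 _ hq')).trans (le_of_eq ?_)
    rw [mul_sum]; refine sum_congr rfl (fun _ _ => by ring)
  have c2 : ∀ r r', |h2 r - h2 r'| ≤ ∑ p' ∈ A, ∑ q' ∈ A, g1 p' * g2 q' * |h p' q' r - h p' q' r'| := by
    intro r r'
    rw [hh2]; simp only
    rw [← sum_sub_distrib, sum_comm]
    refine (abs_sum_le_sum_abs _ _).trans (sum_le_sum (fun q' hq' => ?_))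
    rw [← mul_sub, abs_mul, abs_of_nonneg (p2 q' hq')]
    refine (mul_le_mul_of_nonneg_left (c1 q' r q' r') (p2 _ hq')).trans (le_of_eq ?_)
    rw [mul_sum]; refine sum_congr rfl (fun _ _ => by ring)
  have b3 : ∀ r, |h2 r - μ| ≤ ∑ p' ∈ A, ∑ q' ∈ A, ∑ r' ∈ A, g1 p' * g2 q' * g3 r' * |h p' q' r - h p' q' r'| := by
    intro r
    refine (avg_abs A g3 h2 p3 s3 (h2 r)).trans ?_
    have : ∑ p' ∈ A, ∑ q' ∈ A, ∑ r' ∈ A, g1 p' * g2 q' * g3 r' * |h p' q' r - h p' q' r'| =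
        ∑ r' ∈ A, g3 r' * ∑ p' ∈ A, ∑ q' ∈ A, g1 p' * g2 q' * |h p' q' r - h p' q' r'| := by
      simp_rw [mul_sum]
      rw [sum_comm (s := A) (t := A) (f := fun r' p' => ∑ q' ∈ A, g3 r' * (g1 p' * g2 q' * |h p' q' r - h p' q' r'|))]
      refine sum_congr rfl (fun p' _ => ?_)
      rw [sum_comm]
      refine sum_congr rfl (fun _ _ => sum_congr rfl (fun _ _ => by ring))
    rw [this]
    exact sum_le_sum (fun r' hr' => mul_le_mul_of_nonneg_left (c2 r r') (p3 _ hr'))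
  have main : ∑ p ∈ A, ∑ q ∈ A, ∑ r ∈ A, W p q r * |h p q r - μ| ≤ 
      ∑ p ∈ A, ∑ q ∈ A, ∑ r ∈ A, (W p q r * (∑ p' ∈ A, g1 p' * |h p q r - h p' q r|) + 
       W p q r * (∑ p' ∈ A, ∑ q' ∈ A, g1 p' * g2 q' * |h p' q r - h p' q' r|) +
       W p q r * (∑ p' ∈ A, ∑ q' ∈ A, ∑ r' ∈ A, g1 p' * g2 q' * g3 r' * |h p' q' r - h p' q' r'|)) := by
    refine sum_le_sum (fun p _ => sum_le_sum (fun q _ => sum_le_sum (fun r _ => ?_)))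
    rw [← mul_add, ← mul_add]
    refine mul_le_mul_of_nonneg_left ?_ (hW _ _ _)
    have e1 := abs_sub_le (h p q r) (h1 q r) μ
    have e2 := abs_sub_le (h1 q r) (h2 r) μ
    linarith [b1 p q r, b2 q r, b3 r]
  refine main.trans (le_of_eq ?_)
  simp_rw [sum_add_distrib]
  congr 1
  · congr 1
    · refine sum_congr rfl (fun p _ => sum_congr rfl (fun q _ => sum_congr rfl (fun r _ => ?_)))
      rw [mul_sum]; refine sum_congr rfl (fun _ _ => by ring)
    · rw [sum_comm]
      refine sum_congr rfl (fun q _ => ?_)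
      rw [sum_comm]
      refine sum_congr rfl (fun r _ => ?_)
      rw [← sum_mul, mul_sum]
      refine sum_congr rfl (fun p' _ => ?_)
      rw [mul_sum]
      refine sum_congr rfl (fun _ _ => by ring)
  · rw [sum_comm]
    simp_rw [sum_comm (s := A) (t := A) (f := fun p r => W p _ r * _)]
    rw [sum_comm]
    refine sum_congr rfl (fun r _ => ?_)
    simp_rw [← sum_mul]
    rw [mul_sum]
    refine sum_congr rfl (fun p' _ => ?_)
    rw [mul_sum]
    refine sum_congr rfl (fun q' _ => ?_)
    rw [mul_sum]
    refine sum_congr rfl (fun _ _ => by ring)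

/-- unrestricted form of MOVE -/
lemma MOVE' {A : Finset V} {κ κ' : V → V → V → ℝ} (h : bud A κ) (h' : bud A κ') 
    (f : Finset (Sym2 V) → ℝ) (K : ℝ) (hK : 0 ≤ K) (w : V → V → V → V → ℝ)
    (h0 : ∀ p q r s, 0 ≤ w p q r s)
    (h1 : ∀ p q r s, p ∈ A → q ∈ A → r ∈ A → s ∈ A → 0 < w p q r s → sb p q r ∧ sb s q r ∧
      w p q r s ≤ K * κ p q r * (Om A p q r).card ∧ w p q r s ≤ K * κ' s q r * (Om A p q r).card) :
    ∑ p ∈ A, ∑ q ∈ A, ∑ r ∈ A, ∑ s ∈ A, w p q r s *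
      |H A f p q r - H A f s q r| ≤ 96 * K * th A.card * En (Tri A) f := by
  have hz : ∀ p q r s, 0 ≤ K * κ p q r * ((Om A p q r).card : ℝ) ∧ 0 ≤ K * κ' s q r * ((Om A p q r).card : ℝ) := by
    intro p q r s
    have := h.1 p q r
    have := h'.1 s q r
    constructor <;> positivity
  have hM := MOVE h h' f K hK w h0 (fun p q r s hp hq hr hs _ _ => by
      rcases (h0 p q r s).lt_or_eq with hh | hh
      · exact (h1 p q r s hp hq hr hs hh).2.2.1
      · rw [← hh]; exact (hz p q r s).1) (fun p q r s hp hq hr hs _ _ => by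
      rcases (h0 p q r s).lt_or_eq with hh | hh
      · exact (h1 p q r s hp hq hr hs hh).2.2.2
      · rw [← hh]; exact (hz p q r s).2)
  rw [sum_lbl (fun p q r => ∑ s ∈ inner A r q, w p q r s * |H A f p q r - H A f s q r|)] at hM
  refine le_trans (le_of_eq ?_) hM
  refine sum_congr rfl (fun p hp => sum_congr rfl (fun q hq => sum_congr rfl (fun r hr => ?_)))
  split_ifs with hs
  · symm
    apply sum_subset (filter_subset _ _)
    intro s hsA hsn
    rcases (h0 p q r s).lt_or_eq with hh | hh
    · exact absurd (mem_inner.2 ⟨hsA, sb_rot' (h1 p q r s hp hq hr hsA hh).2.1⟩) hsn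
    · rw [← hh, zero_mul]
  · apply sum_eq_zero
    intro s hsA
    rcases (h0 p q r s).lt_or_eq with hh | hh
    · exact absurd (h1 p q r s hp hq hr hsA hh).1 hs
    · rw [← hh, zero_mul]

/-- sum of inverse square roots -/
lemma sum_inv_sqrt (N : ℕ) : ∑ k ∈ Icc 1 N, (Real.sqrt k)⁻¹ ≤ 2 * Real.sqrt N := by
  induction N with
  | zero => simp
  | succ n ih =>
    rw [sum_Icc_succ_top (by omega)]
    have h1 : (0 : ℝ) ≤ n := Nat.cast_nonneg _
    have ha := Real.sq_sqrt h1
    have hb := Real.sq_sqrt (show (0 : ℝ) ≤ (n + 1 : ℕ) by positivity)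
    have hb0 : 0 < Real.sqrt ((n + 1 : ℕ) : ℝ) := Real.sqrt_pos.2 (by positivity)
    have ha0 := Real.sqrt_nonneg (n : ℝ)
    have : (Real.sqrt ((n + 1 : ℕ) : ℝ))⁻¹ ≤ 2 * Real.sqrt ((n + 1 : ℕ) : ℝ) - 2 * Real.sqrt n := by
      rw [inv_le_iff_one_le_mul₀ hb0]
      have hc : ((n + 1 : ℕ) : ℝ) = n + 1 := by push_cast; rfl
      nlinarith [sq_nonneg (Real.sqrt ((n + 1 : ℕ) : ℝ) - Real.sqrt n)]
    linarith

lemma sum_inj_le {α : Type*} (B : Finset α) (ℓ : α → ℕ) (N : ℕ) (hi : ∀ a ∈ B, ∀ b ∈ B, ℓ a = ℓ b → a = b)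
    (hr : ∀ a ∈ B, 1 ≤ ℓ a ∧ ℓ a ≤ N) : ∑ a ∈ B, (Real.sqrt (ℓ a))⁻¹ ≤ 2 * Real.sqrt N := by
  refine le_trans ?_ (sum_inv_sqrt N)
  rw [← sum_image (s := B) (g := ℓ) (f := fun k : ℕ => (Real.sqrt (k : ℝ))⁻¹) (fun a ha b hb h => hi a ha b hb h)]
  refine sum_le_sum_of_subset_of_nonneg ?_ (fun _ _ _ => by positivity)
  intro k hk
  rw [mem_image] at hk
  obtain ⟨a, ha, rfl⟩ := hk
  exact mem_Icc.2 (hr a ha)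

lemma len_inj_right {A : Finset V} {r a b : V} (hr : r ∈ A) (ha : a ∈ A) (hb : b ∈ A) (har : a ≠ r) (hbr : b ≠ r)
    (h : len A r a = len A r b) : a = b := by
  by_contra hab
  rcases sb_total har.symm hab hbr.symm with h1 | h1
  · have := len_add hr ha hb h1
    have := len_pos ha hb hab
    omega
  · have := len_add hr hb ha h1
    have := len_pos hb ha (Ne.symm hab)
    omega

lemma len_inj_left {A : Finset V} {r a b : V} (hr : r ∈ A) (ha : a ∈ A) (hb : b ∈ A) (har : a ≠ r) (hbr : b ≠ r)
    (h : len A a r = len A b r) : a = b := by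
  by_contra hab
  rcases sb_total har.symm hab hbr.symm with h1 | h1
  · have := len_add ha hb hr (sb_rot h1)
    have := len_pos ha hb hab
    omega
  · have := len_add hb ha hr (sb_rot h1)
    have := len_pos hb ha (Ne.symm hab)
    omega

lemma sum_two {A : Finset V} {r q : V} (hr : r ∈ A) (hq : q ∈ A) (hrq : r ≠ q) : 
    ∑ p ∈ inner A r q, (Real.sqrt (len A r p))⁻¹ * (Real.sqrt (len A p q))⁻¹ ≤ 4 := by
  set L := len A r q
  have hL : 1 ≤ L := len_pos hr hq hrq
  have hLs : 0 < Real.sqrt L := Real.sqrt_pos.2 (by exact_mod_cast hL)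
  have hl : ∀ p ∈ inner A r q, len A r p + len A p q = L ∧ 1 ≤ len A r p ∧ 1 ≤ len A p q := by
    intro p hp
    rw [mem_inner] at hp
    exact ⟨len_add hr hp.1 hq hp.2, len_pos hr hp.1 (sb_ne hp.2).1, len_pos hp.1 hq (sb_ne hp.2).2.1⟩
  have s1 : ∑ p ∈ inner A r q, (Real.sqrt (len A r p))⁻¹ ≤ 2 * Real.sqrt L := by
    refine sum_inj_le _ (fun p => len A r p) L (fun a ha b hb h => ?_) (fun a ha => ?_)
    · rw [mem_inner] at ha hb
      exact len_inj_right hr ha.1 hb.1 (sb_ne ha.2).1.symm (sb_ne hb.2).1.symm h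
    · have := hl a ha; omega
  have s2 : ∑ p ∈ inner A r q, (Real.sqrt (len A p q))⁻¹ ≤ 2 * Real.sqrt L := by
    refine sum_inj_le _ (fun p => len A p q) L (fun a ha b hb h => ?_) (fun a ha => ?_)
    · rw [mem_inner] at ha hb
      exact len_inj_left hq ha.1 hb.1 (sb_ne ha.2).2.1 (sb_ne hb.2).2.1 h
    · have := hl a ha; omega
  have s3 : ∑ p ∈ inner A r q, (Real.sqrt (len A r p))⁻¹ * (Real.sqrt (len A p q))⁻¹ ≤
      ∑ p ∈ inner A r q, ((Real.sqrt (len A r p))⁻¹ + (Real.sqrt (len A p q))⁻¹) / Real.sqrt L := by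
    refine sum_le_sum (fun p hp => ?_)
    obtain ⟨h1, h2, h3⟩ := hl p hp
    set x := Real.sqrt (len A r p)
    set y := Real.sqrt (len A p q)
    have hx : 0 < x := Real.sqrt_pos.2 (by exact_mod_cast h2)
    have hy : 0 < y := Real.sqrt_pos.2 (by exact_mod_cast h3)
    have hxy : Real.sqrt L ≤ x + y := by
      rw [← h1]; push_cast
      rw [Real.sqrt_le_left (by positivity)]
      have e1 := Real.sq_sqrt (Nat.cast_nonneg (α := ℝ) (len A r p))
      have e2 := Real.sq_sqrt (Nat.cast_nonneg (α := ℝ) (len A p q))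
      have e3 : 0 < x * y := mul_pos hx hy
      show _ ≤ (x + y) ^ 2
      nlinarith
    rw [le_div_iff₀ hLs]
    have : x⁻¹ + y⁻¹ = x⁻¹ * y⁻¹ * (x + y) := by field_simp; ring
    rw [this]
    exact mul_le_mul_of_nonneg_left hxy (by positivity)
  refine s3.trans ?_
  rw [← sum_div, sum_add_distrib, div_le_iff₀ hLs]
  linarith

end main
end Assoc

namespace Assoc
open scoped Classical
set_option linter.all false

section main2
variable {V : Type*} [LinearOrder V]

noncomputable def ka (A : Finset V) (s : ℕ) (p q r : V) : ℝ :=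
  cn (blk A s (2 * s)) r p * cn (blk A (5 * s) (6 * s)) p q * cn (blk A (9 * s) (10 * s)) q r / (s : ℝ) ^ 3

noncomputable def kb (A : Finset V) (s : ℕ) (p q r : V) : ℝ :=
  cn (blk A 0 (3 * s)) r p * cn (blk A (4 * s) (7 * s)) p q * cn (blk A (8 * s) (11 * s)) q r / (27 * (s : ℝ) ^ 3)

lemma ka_nonneg (A : Finset V) (s : ℕ) (p q r : V) : 0 ≤ ka A s p q r := by
  unfold ka
  have := cn_nonneg (blk A s (2 * s)) r p
  have := cn_nonneg (blk A (5 * s) (6 * s)) p q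
  have := cn_nonneg (blk A (9 * s) (10 * s)) q r
  positivity

lemma kb_nonneg (A : Finset V) (s : ℕ) (p q r : V) : 0 ≤ kb A s p q r := by
  unfold kb
  have := cn_nonneg (blk A 0 (3 * s)) r p
  have := cn_nonneg (blk A (4 * s) (7 * s)) p q
  have := cn_nonneg (blk A (8 * s) (11 * s)) q r
  positivity

lemma sb_blk {A : Finset V} {a1 b1 a2 b2 a3 b3 : ℕ} (h1 : b1 ≤ a2) (h2 : b2 ≤ a3) (h3 : a1 ≤ b1) :
    ∀ e1 ∈ blk A a1 b1, ∀ e2 ∈ blk A a2 b2, ∀ e3 ∈ blk A a3 b3, sb e1 e2 e3 := by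
  intro e1 he1 e2 he2 e3 he3
  rw [mem_blk] at he1 he2 he3
  rw [sb_idx he1.1 he2.1 he3.1]
  unfold sb; omega

variable {A : Finset V} {s : ℕ}

lemma ka_sum (hs : 1 ≤ s) (hm : 12 * s ≤ A.card) {x : Finset (Sym2 V)} (hx : x ∈ Tri A) : 
    ∑ t ∈ lbl A, (if x ∈ Om A t.1 t.2.1 t.2.2 then ka A s t.1 t.2.1 t.2.2 else 0) = 1 := by
  have h := bud_count hx (blk_sub s (2 * s)) (blk_sub (5 * s) (6 * s)) (blk_sub (9 * s) (10 * s))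
    (sb_blk (by omega) (by omega) (by omega))
  rw [card_blk (by omega), card_blk (by omega), card_blk (by omega), show 2 * s - s = s by omega,
    show 6 * s - 5 * s = s by omega, show 10 * s - 9 * s = s by omega] at h
  have hs0 : (0 : ℝ) < s := by exact_mod_cast hs
  have e : ∀ t ∈ lbl A, (if x ∈ Om A t.1 t.2.1 t.2.2 then ka A s t.1 t.2.1 t.2.2 else 0) =
    (if x ∈ Om A t.1 t.2.1 t.2.2 then cn (blk A s (2 * s)) t.2.2 t.1 * cn (blk A (5 * s) (6 * s)) t.1 t.2.1 * cn (blk A (9 * s) (10 * s)) t.2.1 t.2.2 else 0) / (s : ℝ) ^ 3 := by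
    intro t _; unfold ka; split_ifs <;> simp
  rw [sum_congr rfl e, ← sum_div, h]
  field_simp

lemma kb_sum (hs : 1 ≤ s) (hm : 12 * s ≤ A.card) {x : Finset (Sym2 V)} (hx : x ∈ Tri A) : 
    ∑ t ∈ lbl A, (if x ∈ Om A t.1 t.2.1 t.2.2 then kb A s t.1 t.2.1 t.2.2 else 0) = 1 := by
  have h := bud_count hx (blk_sub 0 (3 * s)) (blk_sub (4 * s) (7 * s)) (blk_sub (8 * s) (11 * s))
    (sb_blk (by omega) (by omega) (by omega))
  rw [card_blk (by omega), card_blk (by omega), card_blk (by omega), show 3 * s - 0 = 3 * s by omega,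
    show 7 * s - 4 * s = 3 * s by omega, show 11 * s - 8 * s = 3 * s by omega] at h
  have hs0 : (0 : ℝ) < s := by exact_mod_cast hs
  have e : ∀ t ∈ lbl A, (if x ∈ Om A t.1 t.2.1 t.2.2 then kb A s t.1 t.2.1 t.2.2 else 0) =
    (if x ∈ Om A t.1 t.2.1 t.2.2 then cn (blk A 0 (3 * s)) t.2.2 t.1 * cn (blk A (4 * s) (7 * s)) t.1 t.2.1 * cn (blk A (8 * s) (11 * s)) t.2.1 t.2.2 else 0) / (27 * (s : ℝ) ^ 3) := by
    intro t _; unfold kb; split_ifs <;> simp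
  rw [sum_congr rfl e, ← sum_div, h]
  push_cast
  field_simp
  norm_num

lemma bud_ka (hs : 1 ≤ s) (hm : 12 * s ≤ A.card) : bud A (ka A s) :=
  ⟨ka_nonneg A s, fun x hx => (ka_sum hs hm hx).le⟩

lemma bud_kb (hs : 1 ≤ s) (hm : 12 * s ≤ A.card) : bud A (kb A s) :=
  ⟨kb_nonneg A s, fun x hx => (kb_sum hs hm hx).le⟩

lemma kb_le_one (hs : 1 ≤ s) (hm : 12 * s ≤ A.card) (p q r : V) : kb A s p q r ≤ 1 := by
  have hs0 : (0 : ℝ) < s := by exact_mod_cast hs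
  unfold kb
  rw [div_le_one (by positivity)]
  have h1 := cn_le_card (blk A 0 (3 * s)) r p
  have h2 := cn_le_card (blk A (4 * s) (7 * s)) p q
  have h3 := cn_le_card (blk A (8 * s) (11 * s)) q r
  rw [card_blk (by omega)] at h1 h2 h3
  rw [show 3 * s - 0 = 3 * s by omega] at h1
  rw [show 7 * s - 4 * s = 3 * s by omega] at h2
  rw [show 11 * s - 8 * s = 3 * s by omega] at h3
  push_cast at h1 h2 h3
  have := mul_le_mul (mul_le_mul h1 h2 (cn_nonneg _ _ _) (by positivity)) h3 (cn_nonneg _ _ _) (by positivity)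
  linarith

lemma ka_Vd {p q r : V} (hp : p ∈ A) (hq : q ∈ A) (hr : r ∈ A) (h : sb p q r) (hk : 0 < ka A s p q r) :
    Vd A s p q r := by
  have a1 := cn_nonneg (blk A s (2 * s)) r p
  have a2 := cn_nonneg (blk A (5 * s) (6 * s)) p q
  have a3 := cn_nonneg (blk A (9 * s) (10 * s)) q r
  unfold ka at hk
  refine ⟨hp, hq, hr, h, ?_, ?_, ?_⟩
  · rcases a1.lt_or_eq with b | b
    · exact b
    · rw [← b] at hk; simp at hk
  · rcases a2.lt_or_eq with b | b
    · exact b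
    · rw [← b] at hk; simp at hk
  · rcases a3.lt_or_eq with b | b
    · exact b
    · rw [← b] at hk; simp at hk

/-- weights -/
noncomputable def Wt (A : Finset V) (s : ℕ) (p q r : V) : ℝ :=
  if sb p q r then ka A s p q r * (Om A p q r).card else 0

lemma Wt_nonneg (A : Finset V) (s : ℕ) (p q r : V) : 0 ≤ Wt A s p q r := by
  unfold Wt; have := ka_nonneg A s p q r; split_ifs <;> positivity

lemma Wt_Vd {p q r : V} (hp : p ∈ A) (hq : q ∈ A) (hr : r ∈ A) (hk : 0 < Wt A s p q r) :
    Vd A s p q r ∧ Wt A s p q r = ka A s p q r * (Om A p q r).card := by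
  unfold Wt at hk ⊢
  split_ifs at hk ⊢ with h
  · refine ⟨ka_Vd hp hq hr h ?_, rfl⟩
    rcases (ka_nonneg A s p q r).lt_or_eq with b | b
    · exact b
    · rw [← b] at hk; simp at hk
  · exact absurd hk (lt_irrefl _)

noncomputable def R2 (A : Finset V) (s : ℕ) (q r : V) : ℝ := ∑ p ∈ A, Wt A s p q r
noncomputable def R3 (A : Finset V) (s : ℕ) (r : V) : ℝ := ∑ q ∈ A, ∑ p ∈ A, Wt A s p q r

lemma R2_nonneg (A : Finset V) (s : ℕ) (q r : V) : 0 ≤ R2 A s q r := sum_nonneg (fun _ _ => Wt_nonneg _ _ _ _ _)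
lemma R3_nonneg (A : Finset V) (s : ℕ) (r : V) : 0 ≤ R3 A s r := sum_nonneg (fun _ _ => R2_nonneg _ _ _ _)

lemma exists_of_sum_pos {α : Type*} {S : Finset α} {f : α → ℝ} (h : 0 < ∑ a ∈ S, f a) : ∃ a ∈ S, 0 < f a := by
  by_contra hn
  push Not at hn
  exact absurd (sum_nonpos hn) (not_le.2 h)

lemma R2_Vd {q r : V} (hq : q ∈ A) (hr : r ∈ A) (h : 0 < R2 A s q r) : ∃ p, Vd A s p q r := by
  obtain ⟨p, hp, h⟩ := exists_of_sum_pos h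
  exact ⟨p, (Wt_Vd hp hq hr h).1⟩

lemma R3_Vd {r : V} (hr : r ∈ A) (h : 0 < R3 A s r) : ∃ p q, Vd A s p q r := by
  obtain ⟨q, hq, h⟩ := exists_of_sum_pos h
  obtain ⟨p, h⟩ := R2_Vd hq hr h
  exact ⟨p, q, h⟩

lemma th_eq (k : ℕ) : th k = k * Real.sqrt k := rfl

lemma th_mul_le {a c m : ℕ} (ha : a ≤ m) (hc : c ≤ m) : th a * th c ≤ (m : ℝ) ^ 3 := by
  rw [← th_sq, sq]
  exact mul_le_mul (th_mono ha) (th_mono hc) (by unfold th; positivity) (by unfold th; positivity)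

/-- comparing triangle counts when moving one vertex -/
lemma Om_compare {p q r p' : V} (hp : p ∈ A) (hq : q ∈ A) (hr : r ∈ A) (hp' : p' ∈ A)
    (h : sb p q r) (h' : sb p' q r) :
    ((Om A p q r).card : ℝ) * (th (len A r p) * th (len A p q)) ≤
      4 * (A.card : ℝ) ^ 3 * (Om A p' q r).card := by
  have n := sb_ne h
  have n' := sb_ne h'
  have g := gam_compare (len A r p) (len A p q) (len A r p') (len A p' q)
    (len_pos hr hp n.2.2.symm) (len_pos hp hq n.1) (len_pos hr hp' n'.2.2.symm) (len_pos hp' hq n'.1)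
    (by rw [len_add hr hp hq (sb_rot' h), len_add hr hp' hq (sb_rot' h')])
  have t := th_mul_le (len_le (v := p') hr) (len_le (v := q) hp')
  rw [card_Om hp hq hr h, card_Om hp' hq hr h']
  have g1 := gam_pos (len A r p')
  have g2 := gam_pos (len A p' q)
  have g3 := gam_pos (len A q r)
  calc gam (len A p q) * gam (len A q r) * gam (len A r p) * (th (len A r p) * th (len A p q))
      = (gam (len A r p) * gam (len A p q) * (th (len A r p) * th (len A p q))) * gam (len A q r) := by ring
    _ ≤ (4 * (gam (len A r p') * gam (len A p' q)) * (A.card : ℝ) ^ 3) * gam (len A q r) := by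
        refine mul_le_mul_of_nonneg_right (g.trans ?_) g3.le
        exact mul_le_mul_of_nonneg_left t (by positivity)
    _ = _ := by ring

lemma R2_bound (hs : 1 ≤ s) (hm : 12 * s ≤ A.card) (hm' : A.card ≤ 24 * s) {q r p' : V} (hq : q ∈ A) (hr : r ∈ A)
    (hp' : p' ∈ A) (h' : sb p' q r) :
    R2 A s q r ≤ 221184 * cn (blk A (9 * s) (10 * s)) q r * (Om A p' q r).card := by
  have hs0 : (0 : ℝ) < s := by exact_mod_cast hs
  have hmm : (A.card : ℝ) ≤ 24 * s := by exact_mod_cast hm'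
  have hc3 := cn_nonneg (blk A (9 * s) (10 * s)) q r
  set c3 := cn (blk A (9 * s) (10 * s)) q r with hc3d
  have hm3 : (A.card : ℝ) ^ 3 ≤ 13824 * (s : ℝ) ^ 3 := by
    have := pow_le_pow_left₀ (Nat.cast_nonneg _) hmm 3
    linarith
  have hne : r ≠ q := (sb_ne h').2.1.symm
  have key : ∀ p ∈ inner A r q, Wt A s p q r ≤ 
      55296 * c3 * (Om A p' q r).card * ((Real.sqrt (len A r p))⁻¹ * (Real.sqrt (len A p q))⁻¹) := by
    intro p hp
    rw [mem_inner] at hp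
    have h : sb p q r := sb_rot hp.2
    have n := sb_ne h
    have hOm := Om_compare hp.1 hq hr hp' h h'
    have la := len_pos hr hp.1 n.2.2.symm
    have lc := len_pos hp.1 hq n.1
    have k1 := cn_le_len (E := blk A s (2 * s)) (blk_sub _ _) hp.1 n.2.2.symm
    have k2 := cn_le_len (E := blk A (5 * s) (6 * s)) (blk_sub _ _) hq n.1
    unfold Wt; rw [if_pos h]
    unfold ka
    rw [← hc3d]
    have n1 := cn_nonneg (blk A s (2 * s)) r p
    have n2 := cn_nonneg (blk A (5 * s) (6 * s)) p q
    have hx : 0 < Real.sqrt (len A r p) := Real.sqrt_pos.2 (by exact_mod_cast la)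
    have hy : 0 < Real.sqrt (len A p q) := Real.sqrt_pos.2 (by exact_mod_cast lc)
    rw [th_eq, th_eq] at hOm
    have k3 := mul_le_mul k1 k2 n2 (by positivity)
    set x := Real.sqrt (len A r p)
    set y := Real.sqrt (len A p q)
    calc _ = (cn (blk A s (2 * s)) r p * cn (blk A (5 * s) (6 * s)) p q) * (c3 / (s : ℝ) ^ 3 * (Om A p q r).card) := by ring
      _ ≤ ((len A r p : ℝ) * (len A p q : ℝ)) * (c3 / (s : ℝ) ^ 3 * (Om A p q r).card) :=
          mul_le_mul_of_nonneg_right k3 (by positivity)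
      _ = ((Om A p q r).card * (len A r p * x * (len A p q * y))) * (c3 / (s : ℝ) ^ 3 * (x⁻¹ * y⁻¹)) := by
          field_simp
      _ ≤ (4 * (A.card : ℝ) ^ 3 * (Om A p' q r).card) * (c3 / (s : ℝ) ^ 3 * (x⁻¹ * y⁻¹)) :=
          mul_le_mul_of_nonneg_right hOm (by positivity)
      _ ≤ (4 * (13824 * (s : ℝ) ^ 3) * (Om A p' q r).card) * (c3 / (s : ℝ) ^ 3 * (x⁻¹ * y⁻¹)) := by
          gcongr
      _ = _ := by field_simp; ring
  have e : R2 A s q r = ∑ p ∈ inner A r q, Wt A s p q r := by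
    symm
    apply sum_subset (filter_subset _ _)
    intro p hp hn
    unfold Wt
    rw [if_neg]
    intro h
    exact hn (mem_inner.2 ⟨hp, sb_rot' h⟩)
  rw [e]
  refine (sum_le_sum key).trans ?_
  rw [← mul_sum]
  refine (mul_le_mul_of_nonneg_left (sum_two hr hq hne) (by positivity)).trans (le_of_eq ?_)
  ring

lemma R2_bound' (hs : 1 ≤ s) (hm : 12 * s ≤ A.card) (hm' : A.card ≤ 24 * s) {p q r p' : V} (hv : Vd A s p q r)
    (hp' : p' ∈ blk A (3 * s) (4 * s)) :
    R2 A s q r ≤ 27 * 221184 * s * kb A s p' q r * (Om A p' q r).card := by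
  have hs0 : (0 : ℝ) < s := by exact_mod_cast hs
  obtain ⟨h1, h2, h3, h4⟩ := F1 hs hm hv hp'
  refine (R2_bound hs hm hm' hv.hq hv.hr (mem_blk.1 hp').1 h1).trans ?_
  have h5 : cn (blk A (9 * s) (10 * s)) q r ≤ 27 * s * kb A s p' q r := by
    unfold kb
    have := mul_le_mul (mul_le_mul h2 h3 hs0.le (cn_nonneg _ _ _)) h4 (cn_nonneg _ _ _)
      (mul_nonneg (cn_nonneg _ _ _) (cn_nonneg _ _ _))
    have e : 27 * (s : ℝ) * (cn (blk A 0 (3 * s)) r p' * cn (blk A (4 * s) (7 * s)) p' q * cn (blk A (8 * s) (11 * s)) q r / (27 * (s : ℝ) ^ 3)) =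
      (cn (blk A 0 (3 * s)) r p' * cn (blk A (4 * s) (7 * s)) p' q * cn (blk A (8 * s) (11 * s)) q r) / (s : ℝ) ^ 2 := by
      field_simp
    rw [e, le_div_iff₀ (by positivity)]
    linarith
  calc _ ≤ 221184 * (27 * s * kb A s p' q r) * (Om A p' q r).card := by gcongr
    _ = _ := by ring

lemma R3_bound (hs : 1 ≤ s) (hm : 12 * s ≤ A.card) (hm' : A.card ≤ 24 * s) {r p' q' : V} (hr : r ∈ A)
    (hp' : p' ∈ blk A (3 * s) (4 * s)) (hq' : q' ∈ A) (h' : sb p' q' r) :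
    R3 A s r ≤ 221184 * 552960 * (s : ℝ) ^ 2 * (Om A p' q' r).card := by
  have hs0 : (0 : ℝ) < s := by exact_mod_cast hs
  have hmm : (A.card : ℝ) ≤ 24 * s := by exact_mod_cast hm'
  have hp'A := (mem_blk.1 hp').1
  have ths := th_pos hs
  have key : ∀ q ∈ A, R2 A s q r ≤ if q = r then 0 else 
      (221184 * (4 * (A.card : ℝ) ^ 3 * (Om A p' q' r).card) * (th s)⁻¹) * (Real.sqrt (len A q r))⁻¹ := by
    intro q hq
    rcases (R2_nonneg A s q r).lt_or_eq with h0 | h0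
    · obtain ⟨p, hv⟩ := R2_Vd hq hr h0
      obtain ⟨h1, h2, h3, h4⟩ := F1 hs hm hv hp'
      have n := sb_ne h1
      rw [if_neg n.2.1]
      refine (R2_bound hs hm hm' hq hr hp'A h1).trans ?_
      have k1 := cn_le_len (E := blk A (9 * s) (10 * s)) (blk_sub _ _) hr n.2.1
      have k2 := cn_le_len (E := blk A (4 * s) (7 * s)) (blk_sub _ _) hq n.1
      have k3 : s ≤ len A p' q := by exact_mod_cast h3.trans k2
      have hth := th_mono k3
      have hOm := Om_compare hq hr hp'A hq' (sb_rot h1) (sb_rot h')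
      rw [← Om_rot A p' q r, ← Om_rot A p' q' r, th_eq (len A q r)] at hOm
      have hy : 0 < Real.sqrt (len A q r) := Real.sqrt_pos.2 (by exact_mod_cast len_pos hq hr n.2.1)
      set y := Real.sqrt (len A q r)
      calc 221184 * cn (blk A (9 * s) (10 * s)) q r * (Om A p' q r).card 
          ≤ 221184 * (len A q r) * (Om A p' q r).card := by gcongr
        _ = 221184 * (((Om A p' q r).card * (th s * (len A q r * y))) * ((th s)⁻¹ * y⁻¹)) := by
            field_simp
        _ ≤ 221184 * (((Om A p' q r).card * (th (len A p' q) * (len A q r * y))) * ((th s)⁻¹ * y⁻¹)) := by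
            gcongr
        _ ≤ 221184 * ((4 * (A.card : ℝ) ^ 3 * (Om A p' q' r).card) * ((th s)⁻¹ * y⁻¹)) := by gcongr
        _ = _ := by ring
    · rw [← h0]
      split_ifs
      · exact le_refl _
      · positivity
  have e : R3 A s r = ∑ q ∈ A, R2 A s q r := rfl
  rw [e]
  refine (sum_le_sum key).trans ?_
  rw [← sum_filter_not_add_sum_filter A (fun q => q = r)]
  rw [sum_congr rfl (fun q hq => if_neg (mem_filter.1 hq).2), sum_congr rfl (fun q hq => if_pos (mem_filter.1 hq).2)]
  rw [sum_const_zero, add_zero, ← mul_sum]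
  have s1 : ∑ q ∈ A.filter (fun q => ¬ q = r), (Real.sqrt (len A q r))⁻¹ ≤ 2 * Real.sqrt A.card := by
    refine sum_inj_le _ (fun q => len A q r) A.card (fun a ha b hb h => ?_) (fun a ha => ?_)
    · rw [mem_filter] at ha hb
      exact len_inj_left hr ha.1 hb.1 ha.2 hb.2 h
    · rw [mem_filter] at ha
      exact ⟨len_pos ha.1 hr ha.2, len_le ha.1⟩
  refine (mul_le_mul_of_nonneg_left s1 (by positivity)).trans ?_
  have s2 : Real.sqrt A.card ≤ 5 * Real.sqrt s := by
    rw [Real.sqrt_le_left (by positivity), mul_pow, Real.sq_sqrt hs0.le]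
    linarith
  have hss : 0 < Real.sqrt s := Real.sqrt_pos.2 hs0
  have m3 : (A.card : ℝ) ^ 3 ≤ 13824 * (s : ℝ) ^ 3 := by
    have := pow_le_pow_left₀ (Nat.cast_nonneg _) hmm 3
    linarith
  calc _ ≤ 221184 * (4 * (13824 * (s : ℝ) ^ 3) * (Om A p' q' r).card) * (th s)⁻¹ * (2 * (5 * Real.sqrt s)) := by gcongr
    _ = _ := by rw [th_eq]; field_simp; ring

end main2
end Assoc

namespace Assoc
open scoped Classical
set_option linter.all false

section main3
variable {V : Type*} [LinearOrder V] {A : Finset V} {s : ℕ}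

noncomputable def gw (B : Finset V) (s : ℕ) (v : V) : ℝ := if v ∈ B then (s : ℝ)⁻¹ else 0

lemma gw_nonneg (B : Finset V) (s : ℕ) (v : V) : 0 ≤ gw B s v := by
  unfold gw; split_ifs <;> positivity

lemma gw_pos {B : Finset V} {v : V} (h : 0 < gw B s v) : v ∈ B ∧ gw B s v = (s : ℝ)⁻¹ := by
  unfold gw at h ⊢
  split_ifs at h ⊢ with h1
  · exact ⟨h1, rfl⟩
  · exact absurd h (lt_irrefl _)

lemma gw_sum (hs : 1 ≤ s) {a b : ℕ} (hb : b ≤ A.card) (hab : b - a = s) : ∑ v ∈ A, gw (blk A a b) s v = 1 := by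
  have hs0 : (s : ℝ) ≠ 0 := by positivity
  unfold gw
  rw [← sum_filter]
  have : A.filter (fun v => v ∈ blk A a b) = blk A a b := by
    ext v; rw [mem_filter, mem_blk]; tauto
  rw [this, sum_const, card_blk hb, hab, nsmul_eq_mul, mul_inv_cancel₀ hs0]

lemma pos_of_mul {x y : ℝ} (hx : 0 ≤ x) (hy : 0 ≤ y) (h : 0 < x * y) : 0 < x ∧ 0 < y := by
  refine ⟨lt_of_le_of_ne hx ?_, lt_of_le_of_ne hy ?_⟩
  · rintro rfl; simp at h
  · rintro rfl; simp at h

lemma T1 (hs : 1 ≤ s) (hm : 12 * s ≤ A.card) (f : Finset (Sym2 V) → ℝ) :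
    ∑ p ∈ A, ∑ q ∈ A, ∑ r ∈ A, ∑ p' ∈ A, Wt A s p q r * gw (blk A (3 * s) (4 * s)) s p' * |H A f p q r - H A f p' q r|
     ≤ 96 * (27 * (s : ℝ)⁻¹) * th A.card * En (Tri A) f := by
  have hs0 : (0 : ℝ) < s := by exact_mod_cast hs
  refine MOVE' (bud_ka hs hm) (bud_kb hs hm) f _ (by positivity)
    (fun p q r p' => Wt A s p q r * gw (blk A (3 * s) (4 * s)) s p')
    (fun p q r p' => mul_nonneg (Wt_nonneg _ _ _ _ _) (gw_nonneg _ _ _)) ?_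
  intro p q r p' hp hq hr hp' h
  obtain ⟨h1, h2⟩ := pos_of_mul (Wt_nonneg _ _ _ _ _) (gw_nonneg _ _ _) h
  obtain ⟨hv, hW⟩ := Wt_Vd hp hq hr h1
  obtain ⟨hg, hge⟩ := gw_pos h2
  obtain ⟨f1, f2, f3, f4⟩ := F1 hs hm hv hg
  have hk := ka_nonneg A s p q r
  refine ⟨hv.h, f1, ?_, ?_⟩
  · simp only [hW, hge]
    have : 0 ≤ ka A s p q r * (Om A p q r).card * (s : ℝ)⁻¹ := by positivity
    linarith
  · simp only [hW, hge]
    have : ka A s p q r ≤ 27 * kb A s p' q r := by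
      have c1 := cn_le_card (blk A s (2 * s)) r p
      have c2 := cn_le_card (blk A (5 * s) (6 * s)) p q
      rw [card_blk (by omega)] at c1 c2
      rw [show 2 * s - s = s by omega] at c1
      rw [show 6 * s - 5 * s = s by omega] at c2
      have e : 27 * kb A s p' q r = cn (blk A 0 (3 * s)) r p' * cn (blk A (4 * s) (7 * s)) p' q * cn (blk A (8 * s) (11 * s)) q r / (s : ℝ) ^ 3 := by
        unfold kb; field_simp
      rw [e]
      unfold ka
      refine div_le_div_of_nonneg_right ?_ (by positivity)
      exact mul_le_mul (mul_le_mul (c1.trans f2) (c2.trans f3) (cn_nonneg _ _ _) (cn_nonneg _ _ _)) f4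
        (cn_nonneg _ _ _) (mul_nonneg (cn_nonneg _ _ _) (cn_nonneg _ _ _))
    calc _ ≤ 27 * kb A s p' q r * (Om A p q r).card * (s : ℝ)⁻¹ := by gcongr
      _ = _ := by ring

lemma kb_lower (hs : 1 ≤ s) {p q r : V} {x y z : ℝ} (hx : 0 ≤ x) (hy : 0 ≤ y) (hz : 0 ≤ z)
    (h1 : x * s ≤ cn (blk A 0 (3 * s)) r p) (h2 : y * s ≤ cn (blk A (4 * s) (7 * s)) p q)
    (h3 : z * s ≤ cn (blk A (8 * s) (11 * s)) q r) : x * y * z / 27 ≤ kb A s p q r := by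
  have hs0 : (0 : ℝ) < s := by exact_mod_cast hs
  unfold kb
  rw [le_div_iff₀ (by positivity)]
  have := mul_le_mul (mul_le_mul h1 h2 (by positivity) (cn_nonneg _ _ _)) h3 (by positivity)
      (mul_nonneg (cn_nonneg _ _ _) (cn_nonneg _ _ _))
  refine le_trans (le_of_eq ?_) this
  ring

lemma T2 (hs : 1 ≤ s) (hm : 12 * s ≤ A.card) (hm' : A.card ≤ 24 * s) (f : Finset (Sym2 V) → ℝ) :
    ∑ q ∈ A, ∑ r ∈ A, ∑ p' ∈ A, ∑ q' ∈ A, (∑ p ∈ A, Wt A s p q r) * gw (blk A (3 * s) (4 * s)) s p' *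
      gw (blk A (7 * s) (8 * s)) s q' * |H A f p' q r - H A f p' q' r|
     ≤ 96 * (9 * 27 * 221184 * (s : ℝ)⁻¹) * th A.card * En (Tri A) f := by
  have hs0 : (0 : ℝ) < s := by exact_mod_cast hs
  have hb := (bud_kb hs hm).rot
  have := MOVE' hb hb f (9 * 27 * 221184 * (s : ℝ)⁻¹) (by positivity)
    (fun q r p' q' => R2 A s q r * gw (blk A (3 * s) (4 * s)) s p' * gw (blk A (7 * s) (8 * s)) s q')
    (fun q r p' q' => mul_nonneg (mul_nonneg (R2_nonneg _ _ _ _) (gw_nonneg _ _ _)) (gw_nonneg _ _ _)) ?_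
  · refine le_trans (le_of_eq ?_) this
    refine sum_congr rfl (fun q _ => sum_congr rfl (fun r _ => sum_congr rfl (fun p' _ => sum_congr rfl (fun q' _ => ?_))))
    rw [H_rot A f p' q r, H_rot A f p' q' r]
    rfl
  intro q r p' q' hq hr hp' hq' h
  obtain ⟨h1, h3⟩ := pos_of_mul (mul_nonneg (R2_nonneg _ _ _ _) (gw_nonneg _ _ _)) (gw_nonneg _ _ _) h
  obtain ⟨h1, h2⟩ := pos_of_mul (R2_nonneg _ _ _ _) (gw_nonneg _ _ _) h1
  obtain ⟨p, hv⟩ := R2_Vd hq hr h1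
  obtain ⟨hg, hge⟩ := gw_pos h2
  obtain ⟨hg', hge'⟩ := gw_pos h3
  have f1 := (F1 hs hm hv hg).1
  obtain ⟨e1, e2, e3, e4⟩ := F2 hs hm hv hg hg'
  have hR := R2_bound' hs hm hm' hv hg
  have k1 : 1 / 9 ≤ kb A s p' q' r := by
    have := kb_lower hs (x := 1) (y := 3) (z := 1) (by norm_num) (by norm_num) (by norm_num) (by rwa [one_mul]) e3 (by rwa [one_mul])
    linarith
  have k2 := kb_le_one hs hm p' q r
  have k0 := kb_nonneg A s p' q r
  have base : R2 A s q r * (s : ℝ)⁻¹ * (s : ℝ)⁻¹ ≤ 27 * 221184 * (s : ℝ)⁻¹ * kb A s p' q r * (Om A q r p').card := by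
    rw [Om_rot] at hR
    calc _ ≤ (27 * 221184 * s * kb A s p' q r * (Om A q r p').card) * (s : ℝ)⁻¹ * (s : ℝ)⁻¹ := by gcongr
      _ = _ := by field_simp
  refine ⟨sb_rot f1, sb_rot e1, ?_, ?_⟩
  · simp only [hge, hge']
    refine base.trans ?_
    have : 0 ≤ 27 * 221184 * (s : ℝ)⁻¹ * kb A s p' q r * (Om A q r p').card := by positivity
    linarith
  · simp only [hge, hge']
    refine base.trans ?_
    have : kb A s p' q r ≤ 9 * kb A s p' q' r := by linarith
    calc _ ≤ 27 * 221184 * (s : ℝ)⁻¹ * (9 * kb A s p' q' r) * (Om A q r p').card := by gcongr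
      _ = _ := by ring

lemma T3 (hs : 1 ≤ s) (hm : 12 * s ≤ A.card) (hm' : A.card ≤ 24 * s) (f : Finset (Sym2 V) → ℝ) :
    ∑ r ∈ A, ∑ p' ∈ A, ∑ q' ∈ A, ∑ r' ∈ A, (∑ q ∈ A, ∑ p ∈ A, Wt A s p q r) * gw (blk A (3 * s) (4 * s)) s p' *
      gw (blk A (7 * s) (8 * s)) s q' * gw (blk A (11 * s) (12 * s)) s r' * |H A f p' q' r - H A f p' q' r'|
     ≤ 96 * (9 * 221184 * 552960 * (s : ℝ)⁻¹) * th A.card * En (Tri A) f := by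
  have hs0 : (0 : ℝ) < s := by exact_mod_cast hs
  have hb := (bud_kb hs hm).rot.rot
  have := MOVE' hb hb f (9 * 221184 * 552960 * (s : ℝ)⁻¹) (by positivity)
    (fun r p' q' r' => R3 A s r * gw (blk A (3 * s) (4 * s)) s p' * gw (blk A (7 * s) (8 * s)) s q' *
      gw (blk A (11 * s) (12 * s)) s r')
    (fun r p' q' r' => mul_nonneg (mul_nonneg (mul_nonneg (R3_nonneg _ _ _) (gw_nonneg _ _ _)) (gw_nonneg _ _ _)) (gw_nonneg _ _ _)) ?_
  · refine le_trans (le_of_eq ?_) this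
    refine sum_congr rfl (fun r _ => sum_congr rfl (fun p' _ => sum_congr rfl (fun q' _ => sum_congr rfl (fun r' _ => ?_))))
    rw [← H_rot A f r p' q', ← H_rot A f r' p' q']
    rfl
  intro r p' q' r' hr hp' hq' hr' h
  obtain ⟨h1, h4⟩ := pos_of_mul (mul_nonneg (mul_nonneg (R3_nonneg _ _ _) (gw_nonneg _ _ _)) (gw_nonneg _ _ _)) (gw_nonneg _ _ _) h
  obtain ⟨h1, h3⟩ := pos_of_mul (mul_nonneg (R3_nonneg _ _ _) (gw_nonneg _ _ _)) (gw_nonneg _ _ _) h1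
  obtain ⟨h1, h2⟩ := pos_of_mul (R3_nonneg _ _ _) (gw_nonneg _ _ _) h1
  obtain ⟨p, q, hv⟩ := R3_Vd hr h1
  obtain ⟨hg, hge⟩ := gw_pos h2
  obtain ⟨hg', hge'⟩ := gw_pos h3
  obtain ⟨hg'', hge''⟩ := gw_pos h4
  obtain ⟨e1, e2, e3, e4⟩ := F2 hs hm hv hg hg'
  obtain ⟨d1, d2, d3, d4⟩ := F3 hs hm hg hg' hg''
  have hR := R3_bound hs hm hm' hr hg hq' e1
  have k1 : 1 / 9 ≤ kb A s p' q' r := by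
    have := kb_lower hs (x := 1) (y := 3) (z := 1) (by norm_num) (by norm_num) (by norm_num) (by rwa [one_mul]) e3 (by rwa [one_mul])
    linarith
  have k2 : 1 ≤ kb A s p' q' r' := by
    have := kb_lower hs (x := 3) (y := 3) (z := 3) (by norm_num) (by norm_num) (by norm_num) d2 d3 d4
    linarith
  have base : R3 A s r * (s : ℝ)⁻¹ * (s : ℝ)⁻¹ * (s : ℝ)⁻¹ ≤ 221184 * 552960 * (s : ℝ)⁻¹ * (Om A r p' q').card := by
    rw [← Om_rot] at hR
    calc _ ≤ (221184 * 552960 * (s : ℝ) ^ 2 * (Om A r p' q').card) * (s : ℝ)⁻¹ * (s : ℝ)⁻¹ * (s : ℝ)⁻¹ := by gcongr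
      _ = _ := by field_simp
  have fin : ∀ k : ℝ, 1 / 9 ≤ k → 221184 * 552960 * (s : ℝ)⁻¹ * (Om A r p' q').card ≤ 
      9 * 221184 * 552960 * (s : ℝ)⁻¹ * k * (Om A r p' q').card := by
    intro k hk
    have h9 : 1 ≤ 9 * k := by linarith
    have h0 : 0 ≤ 221184 * 552960 * (s : ℝ)⁻¹ * (Om A r p' q').card := by positivity
    have := mul_le_mul_of_nonneg_left h9 h0
    linarith
  refine ⟨sb_rot' e1, sb_rot' d1, ?_, ?_⟩
  · simp only [hge, hge', hge'']
    exact base.trans (fin _ k1)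
  · simp only [hge, hge', hge'']
    exact base.trans (fin _ (by linarith))

noncomputable def C0 : ℝ := 2 * (96 * 24) * (27 + 9 * 27 * 221184 + 9 * 221184 * 552960)

theorem main_step (hs : 1 ≤ s) (hm : 12 * s ≤ A.card) (hm' : A.card ≤ 24 * s) (K : ℝ) (hK : 0 ≤ K)
    (hrec : ∀ u v, u ∈ A → v ∈ A → u ≠ v → (arc A u v).card + s ≤ A.card + 1 → PI (Tri (arc A u v)) K) :
    PI (Tri A) (K + C0 * Real.sqrt A.card) := by
  intro f
  have hs0 : (0 : ℝ) < s := by exact_mod_cast hs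
  have hA2 : 2 ≤ A.card := by omega
  have hT := Tri_card_pos hA2
  set c := (∑ x ∈ Tri A, f x) / (Tri A).card with hc
  have hone : ∀ g : Finset (Sym2 V) → ℝ, ∑ t ∈ lbl A, ka A s t.1 t.2.1 t.2.2 * ∑ x ∈ Om A t.1 t.2.1 t.2.2, g x =
      ∑ x ∈ Tri A, g x := by
    intro g
    rw [wsum]
    refine sum_congr rfl (fun x hx => ?_)
    rw [ka_sum hs hm hx, one_mul]
  have hE := En_nonneg (Tri A) f
  -- split
  have split1 : dev (Tri A) f ≤ ∑ t ∈ lbl A, ka A s t.1 t.2.1 t.2.2 * dev (Om A t.1 t.2.1 t.2.2) f +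
      ∑ t ∈ lbl A, ka A s t.1 t.2.1 t.2.2 * ((Om A t.1 t.2.1 t.2.2).card * |H A f t.1 t.2.1 t.2.2 - c|) := by
    have e : dev (Tri A) f = ∑ x ∈ Tri A, |f x - c| := rfl
    rw [e, ← hone (fun x => |f x - c|), ← sum_add_distrib]
    refine sum_le_sum (fun t _ => ?_)
    rw [← mul_add]
    refine mul_le_mul_of_nonneg_left ?_ (ka_nonneg _ _ _ _ _)
    have : dev (Om A t.1 t.2.1 t.2.2) f + (Om A t.1 t.2.1 t.2.2).card * |H A f t.1 t.2.1 t.2.2 - c| =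
        ∑ x ∈ Om A t.1 t.2.1 t.2.2, (|f x - H A f t.1 t.2.1 t.2.2| + |H A f t.1 t.2.1 t.2.2 - c|) := by
      rw [sum_add_distrib, sum_const, nsmul_eq_mul]; rfl
    rw [this]
    exact sum_le_sum (fun x _ => abs_sub_le _ _ _)
  have part1 : ∑ t ∈ lbl A, ka A s t.1 t.2.1 t.2.2 * dev (Om A t.1 t.2.1 t.2.2) f ≤ K * En (Tri A) f := by
    refine le_trans ?_ (mul_le_mul_of_nonneg_left ((bud_ka hs hm).En_le f) hK)
    rw [mul_sum]
    refine sum_le_sum (fun t ht => ?_)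
    rw [mem_lbl] at ht
    rcases (ka_nonneg A s t.1 t.2.1 t.2.2).lt_or_eq with h | h
    · have hv := ka_Vd ht.1.1 ht.1.2.1 ht.1.2.2 ht.2 h
      obtain ⟨a1, a2, a3⟩ := F5 hs hm hv
      have n := sb_ne hv.h
      have := PI_Om hv.hp hv.hq hv.hr hv.h hK (hrec _ _ hv.hp hv.hq n.1 a1) (hrec _ _ hv.hq hv.hr n.2.1 a2)
        (hrec _ _ hv.hr hv.hp n.2.2.symm a3) f
      have := mul_le_mul_of_nonneg_left this h.le
      linarith
    · rw [← h]; simp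
  have part2e : ∑ t ∈ lbl A, ka A s t.1 t.2.1 t.2.2 * ((Om A t.1 t.2.1 t.2.2).card * |H A f t.1 t.2.1 t.2.2 - c|) =
      ∑ p ∈ A, ∑ q ∈ A, ∑ r ∈ A, Wt A s p q r * |H A f p q r - c| := by
    rw [sum_lbl (fun p q r => ka A s p q r * ((Om A p q r).card * |H A f p q r - c|))]
    refine sum_congr rfl (fun p _ => sum_congr rfl (fun q _ => sum_congr rfl (fun r _ => ?_)))
    unfold Wt; split_ifs <;> ring
  have sumW : ∑ p ∈ A, ∑ q ∈ A, ∑ r ∈ A, Wt A s p q r = (Tri A).card := by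
    have h := hone (fun _ => 1)
    rw [sum_lbl (fun p q r => ka A s p q r * ∑ x ∈ Om A p q r, (1 : ℝ))] at h
    simp only [sum_const, nsmul_eq_mul, mul_one] at h
    exact h
  have sumWH : ∑ p ∈ A, ∑ q ∈ A, ∑ r ∈ A, Wt A s p q r * H A f p q r = ∑ x ∈ Tri A, f x := by
    rw [← hone f, sum_lbl (fun p q r => ka A s p q r * ∑ x ∈ Om A p q r, f x)]
    refine sum_congr rfl (fun p hp => sum_congr rfl (fun q hq => sum_congr rfl (fun r hr => ?_)))
    unfold Wt H
    split_ifs with h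
    · have := Om_card_pos hp hq hr h
      field_simp
    · simp
  obtain ⟨μ, hμ⟩ := tele A (Wt A s) (Wt_nonneg A s) (gw (blk A (3 * s) (4 * s)) s) (gw (blk A (7 * s) (8 * s)) s)
    (gw (blk A (11 * s) (12 * s)) s) (fun _ _ => gw_nonneg _ _ _) (fun _ _ => gw_nonneg _ _ _) (fun _ _ => gw_nonneg _ _ _)
    (gw_sum hs (by omega) (by omega)) (gw_sum hs (by omega) (by omega)) (gw_sum hs (by omega) (by omega)) (H A f)
  set X := ∑ p ∈ A, ∑ q ∈ A, ∑ r ∈ A, Wt A s p q r * |H A f p q r - μ| with hX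
  have hdiff : (Tri A).card * |μ - c| ≤ X := by
    have e : (Tri A).card * (μ - c) = ∑ p ∈ A, ∑ q ∈ A, ∑ r ∈ A, Wt A s p q r * (μ - H A f p q r) := by
      have e1 : ((Tri A).card : ℝ) * c = ∑ x ∈ Tri A, f x := by rw [hc]; field_simp
      rw [mul_sub, e1, ← sumWH, ← sumW]
      simp_rw [sum_mul, ← sum_sub_distrib, ← mul_sub]
    have e2 : (Tri A).card * |μ - c| = |∑ p ∈ A, ∑ q ∈ A, ∑ r ∈ A, Wt A s p q r * (μ - H A f p q r)| := by
      rw [← e, abs_mul, abs_of_pos hT]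
    rw [e2]
    refine (abs_sum_le_sum_abs _ _).trans (sum_le_sum (fun p _ => ?_))
    refine (abs_sum_le_sum_abs _ _).trans (sum_le_sum (fun q _ => ?_))
    refine (abs_sum_le_sum_abs _ _).trans (sum_le_sum (fun r _ => ?_))
    rw [abs_mul, abs_of_nonneg (Wt_nonneg A s p q r), abs_sub_comm]
  have part2 : ∑ p ∈ A, ∑ q ∈ A, ∑ r ∈ A, Wt A s p q r * |H A f p q r - c| ≤ 2 * X := by
    have : ∑ p ∈ A, ∑ q ∈ A, ∑ r ∈ A, Wt A s p q r * |H A f p q r - c| ≤ X + (Tri A).card * |μ - c| := by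
      rw [← sumW, hX]
      simp_rw [sum_mul, ← sum_add_distrib, ← mul_add]
      refine sum_le_sum (fun p _ => sum_le_sum (fun q _ => sum_le_sum (fun r _ => ?_)))
      exact mul_le_mul_of_nonneg_left (abs_sub_le _ _ _) (Wt_nonneg _ _ _ _ _)
    linarith
  have t1 := T1 hs hm f
  have t2 := T2 hs hm hm' f
  have t3 := T3 hs hm hm' f
  have hth : (s : ℝ)⁻¹ * th A.card ≤ 24 * Real.sqrt A.card := by
    rw [th_eq]
    have hmm : (A.card : ℝ) ≤ 24 * s := by exact_mod_cast hm'
    have : (s : ℝ)⁻¹ * A.card ≤ 24 := by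
      rw [inv_mul_le_iff₀ hs0]; linarith
    calc _ = ((s : ℝ)⁻¹ * A.card) * Real.sqrt A.card := by ring
      _ ≤ _ := by gcongr
  have hX2 : X ≤ 96 * (27 + 9 * 27 * 221184 + 9 * 221184 * 552960) * ((s : ℝ)⁻¹ * th A.card) * En (Tri A) f := by
    linarith
  have hX3 : X ≤ 96 * (27 + 9 * 27 * 221184 + 9 * 221184 * 552960) * (24 * Real.sqrt A.card) * En (Tri A) f := by
    refine hX2.trans ?_
    gcongr
  unfold C0
  rw [part2e] at split1
  nlinarith

end main3
end Assoc

namespace Assoc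
open scoped Classical
set_option linter.all false

section rec
variable {V : Type*} [LinearOrder V]

lemma C0_pos : 1 ≤ C0 := by unfold C0; norm_num

theorem PI_main : ∀ (n : ℕ) (A : Finset V), 2 ≤ A.card → A.card = n → PI (Tri A) (96 * C0 * Real.sqrt n) := by
  intro n
  induction n using Nat.strong_induction_on with
  | _ n ih =>
    intro A hA hn
    have hC := C0_pos
    have hn2 : (2 : ℝ) ≤ n := by exact_mod_cast hn ▸ hA
    by_cases h48 : n < 48
    · refine (PI_base n A hA hn).mono ?_
      have h1 : (n : ℝ) ≤ 48 := by exact_mod_cast h48.le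
      have h2 : 1 ≤ Real.sqrt n := by rw [Real.one_le_sqrt]; linarith
      nlinarith
    · push Not at h48
      obtain ⟨s, hs⟩ : ∃ s, s = n / 12 := ⟨_, rfl⟩
      have hst := main_step (A := A) (s := s) (by omega) (by omega) (by omega)
        (96 * C0 * Real.sqrt ((n + 1 - s : ℕ) : ℝ)) (by positivity) (by
          intro u v hu hv huv hc
          have h2 := two_le_arc hu hv huv
          refine (ih (arc A u v).card (by omega) _ h2 rfl).mono ?_
          have : ((arc A u v).card : ℝ) ≤ ((n + 1 - s : ℕ) : ℝ) := by
            exact_mod_cast (by omega : (arc A u v).card ≤ n + 1 - s)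
          have := Real.sqrt_le_sqrt this
          gcongr)
      refine hst.mono ?_
      rw [hn]
      have h1 : ((n + 1 - s : ℕ) : ℝ) ≤ n * (47 / 48) := by
        have : 48 * (n + 1 - s) ≤ 47 * n := by omega
        have : (48 : ℝ) * ((n + 1 - s : ℕ) : ℝ) ≤ 47 * n := by exact_mod_cast this
        linarith
      have h2 : Real.sqrt ((n + 1 - s : ℕ) : ℝ) ≤ (95 / 96) * Real.sqrt n := by
        rw [Real.sqrt_le_left (by positivity), mul_pow, Real.sq_sqrt (Nat.cast_nonneg _)]
        nlinarith
      have h3 := mul_le_mul_of_nonneg_left h2 (show 0 ≤ 96 * C0 by positivity)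
      linarith

end rec
end Assoc

namespace Assoc
open scoped Classical
set_option linter.all false

section trans
variable {n : ℕ}

lemma fin_sub_val {m : ℕ} (x a : Fin m) : (x - a).val = if a.val ≤ x.val then x.val - a.val else m + x.val - a.val := by
  split_ifs with h
  · exact Fin.coe_sub_iff_le.2 h
  · exact Fin.coe_sub_iff_lt.2 (by rw [Fin.lt_def]; omega)

lemma cyc_iff {m : ℕ} (a b x : Fin m) : CycBtw a b x ↔ sb a x b := by
  unfold CycBtw sb
  rw [fin_sub_val, fin_sub_val]
  simp only [Fin.lt_def]
  have := a.2; have := b.2; have := x.2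
  split_ifs <;> omega

lemma adj_no {m : ℕ} {a b : Fin m} (h : (b - a).val = 1) (c : Fin m) : ¬ sb a c b := by
  rw [← cyc_iff]; unfold CycBtw; omega

lemma polyAdj_cr {m : ℕ} {a b : Fin m} (h : PolyAdj a b) (c d : Fin m) : ¬ cr a b c d := by
  rintro ⟨h1, h2⟩
  rcases h with h | h
  · exact adj_no h _ h1
  · exact adj_no h _ h2

lemma nd_cr {m : ℕ} {a b : Fin m} (h : ¬ IsDiagonal s(a, b)) (c d : Fin m) : ¬ cr a b c d := by
  unfold IsDiagonal at h
  by_cases hab : a = b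
  · subst hab; exact not_cr_self
  · have : ∃ a' b' : Fin m, s(a, b) = s(a', b') ∧ PolyAdj a' b' := by
      by_contra hn
      push Not at hn
      exact h ⟨by simpa using hab, hn⟩
    obtain ⟨a', b', he, hp⟩ := this
    rw [Sym2.eq_iff] at he
    rcases he with ⟨rfl, rfl⟩ | ⟨rfl, rfl⟩
    · exact polyAdj_cr hp c d
    · rw [cr_swap]; exact polyAdj_cr hp d c

lemma crosses_iff {m : ℕ} (a b c d : Fin m) : Crosses s(a, b) s(c, d) ↔ cr a b c d ∨ cr a b d c := by
  constructor
  · intro h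
    obtain ⟨c1, d1, e1, x1⟩ := h a b rfl
    obtain ⟨c2, d2, e2, x2⟩ := h b a Sym2.eq_swap
    simp only [cyc_iff] at x1 x2
    have y1 : Xor' (sb a c b) (sb a d b) := by
      rw [Sym2.eq_iff] at e1
      rcases e1 with ⟨rfl, rfl⟩ | ⟨rfl, rfl⟩
      · exact x1
      · exact (by rcases x1 with h | h; exacts [Or.inr h, Or.inl h])
    have y2 : Xor' (sb b c a) (sb b d a) := by
      rw [Sym2.eq_iff] at e2
      rcases e2 with ⟨rfl, rfl⟩ | ⟨rfl, rfl⟩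
      · exact x2
      · exact (by rcases x2 with h | h; exacts [Or.inr h, Or.inl h])
    have z : ∀ {u : Fin m}, sb a u b → ¬ sb b u a := fun h1 h2 => sb_asymm h1 (sb_rot' h2)
    unfold cr
    rcases y1 with ⟨u1, u2⟩ | ⟨u1, u2⟩ <;> rcases y2 with ⟨v1, v2⟩ | ⟨v1, v2⟩
    · exact absurd v1 (z u1)
    · exact Or.inl ⟨u1, v1⟩
    · exact Or.inr ⟨u1, v1⟩
    · exact absurd v1 (z u1)
  · have key : ∀ {a b c d : Fin m}, cr a b c d → Xor' (CycBtw a b c) (CycBtw a b d) := by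
      intro a b c d h
      rw [cyc_iff, cyc_iff]
      exact Or.inl ⟨h.1, fun h1 => sb_asymm h1 (sb_rot' h.2)⟩
    intro h a' b' he
    rw [Sym2.eq_iff] at he
    rcases he with ⟨rfl, rfl⟩ | ⟨rfl, rfl⟩
    · rcases h with h | h
      · exact ⟨c, d, rfl, key h⟩
      · exact ⟨d, c, Sym2.eq_swap, key h⟩
    · rcases h with h | h
      · exact ⟨d, c, Sym2.eq_swap, key (cr_swap.1 h)⟩
      · exact ⟨c, d, rfl, key (cr_swap.1 h)⟩

/-- add loops and sides -/
noncomputable def Phi (n : ℕ) (t : Triangulation n) : Finset (Sym2 (Fin (n + 2))) :=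
  t.val ∪ univ.filter (fun e => ¬ IsDiagonal e)

lemma mem_Phi {t : Triangulation n} {e : Sym2 (Fin (n + 2))} : e ∈ Phi n t ↔ e ∈ t.val ∨ ¬ IsDiagonal e := by
  simp [Phi]

lemma Phi_diag {t : Triangulation n} {e : Sym2 (Fin (n + 2))} (he : IsDiagonal e) : e ∈ Phi n t ↔ e ∈ t.val := by
  rw [mem_Phi]; tauto

lemma Phi_mem (t : Triangulation n) : Phi n t ∈ Tri (univ : Finset (Fin (n + 2))) := by
  obtain ⟨h1, h2, h3⟩ := t.2
  refine mem_Tri.2 ⟨fun _ _ _ => ⟨mem_univ _, mem_univ _⟩, fun a _ b _ => ⟨fun h c d hcd hc => ?_, fun h => ?_⟩⟩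
  · rw [mem_Phi] at h hcd
    rcases h with h | h
    · rcases hcd with hcd | hcd
      · exact h2 _ h _ hcd ((crosses_iff _ _ _ _).2 (Or.inl hc))
      · exact nd_cr hcd _ _ (cr_symm hc)
    · exact nd_cr h _ _ hc
  · rw [mem_Phi]
    by_contra hn
    push Not at hn
    refine hn.1 (h3 _ hn.2 ?_)
    intro e he
    induction e using Sym2.ind with
    | _ c d =>
      rw [crosses_iff]
      rintro (hc | hc)
      · exact h c d (mem_Phi.2 (Or.inl he)) hc
      · exact h d c (mem_Phi.2 (Or.inl (by rw [Sym2.eq_swap]; exact he))) hc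

lemma Phi_inj {s t : Triangulation n} (h : Phi n s = Phi n t) : s = t := by
  apply Subtype.ext
  ext e
  constructor
  · intro he
    have hd := s.2.1 e he
    rw [← Phi_diag hd, ← h, Phi_diag hd]; exact he
  · intro he
    have hd := t.2.1 e he
    rw [← Phi_diag hd, h, Phi_diag hd]; exact he

lemma Phi_surj {x : Finset (Sym2 (Fin (n + 2)))} (hx : x ∈ Tri (univ : Finset (Fin (n + 2)))) :
    ∃ t : Triangulation n, Phi n t = x := by
  have hT : IsTriangulation n (x.filter (fun e => IsDiagonal e)) := by
    refine ⟨?_, ?_, ?_⟩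
    · intro e he; exact (mem_filter.1 he).2
    · intro e he f hf
      have h1 := (mem_filter.1 he).1
      have h2 := (mem_filter.1 hf).1
      clear he hf
      induction e using Sym2.ind with
      | _ a b =>
        induction f using Sym2.ind with
        | _ c d =>
          rw [crosses_iff]
          rintro (h | h)
          · exact Tri.nc hx h1 h2 h
          · exact Tri.nc hx h1 (by rw [Sym2.eq_swap]; exact h2) h
    · intro e he h
      rw [mem_filter]
      refine ⟨?_, he⟩
      induction e using Sym2.ind with
      | _ a b =>
        refine Tri.max hx (mem_univ _) (mem_univ _) (fun c d hcd hc => ?_)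
        by_cases hd : IsDiagonal s(c, d)
        · exact h _ (mem_filter.2 ⟨hcd, hd⟩) ((crosses_iff _ _ _ _).2 (Or.inl hc))
        · exact nd_cr hd _ _ (cr_symm hc)
  refine ⟨⟨_, hT⟩, ?_⟩
  · ext e
    refine mem_Phi.trans ?_
    simp only [mem_filter]
    constructor
    · rintro (h | h)
      · exact h.1
      · induction e using Sym2.ind with
        | _ a b => exact Tri.max hx (mem_univ _) (mem_univ _) (fun c d _ => nd_cr h c d)
    · intro h; by_cases hd : IsDiagonal e
      · exact Or.inl ⟨h, hd⟩
      · exact Or.inr hd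

lemma Phi_sdiff (s t : Triangulation n) : Phi n s \ Phi n t = s.val \ t.val := by
  ext e
  rw [mem_sdiff, mem_sdiff, mem_Phi, mem_Phi]
  have := s.2.1 e
  tauto

lemma Phi_adj (s t : Triangulation n) : adj (Phi n s) (Phi n t) ↔ (assocGraph n).Adj s t := by
  have e : (assocGraph n).Adj s t ↔ (s.val \ t.val).card = 1 ∧ (t.val \ s.val).card = 1 := Iff.rfl
  rw [e, ← Phi_sdiff, ← Phi_sdiff]
  unfold adj
  constructor
  · intro h; convert h
  · intro h; convert h

lemma sum_Phi (g : Finset (Sym2 (Fin (n + 2))) → ℝ) :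
    ∑ x ∈ Tri (univ : Finset (Fin (n + 2))), g x = ∑ t : Triangulation n, g (Phi n t) := by
  symm
  refine sum_bij (fun t _ => Phi n t) (fun t _ => Phi_mem t) (fun _ _ _ _ h => Phi_inj h) ?_ (fun _ _ => rfl)
  intro x hx
  obtain ⟨t, ht⟩ := Phi_surj hx
  exact ⟨t, mem_univ _, ht⟩

lemma boundary_bound (S : Set (Triangulation n)) :
    (((univ : Finset (Triangulation n × Triangulation n)).filter (fun u => (assocGraph n).Adj u.1 u.2 ∧ u.1 ∈ S ∧ u.2 ∉ S)).card : ℝ) ≤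
      ((edgeBoundary (assocGraph n) S).ncard : ℝ) := by
  refine Nat.cast_le.2 ?_
  rw [← Set.ncard_coe_finset]
  refine Set.ncard_le_ncard_of_injOn (fun u : Triangulation n × Triangulation n => s(u.1, u.2)) ?_ ?_ (Set.toFinite _)
  · intro u hu
    have hu := (mem_filter.1 (mem_coe.1 hu)).2
    exact ⟨hu.1, u.1, u.2, rfl, hu.2.1, hu.2.2⟩
  · intro u hu v hv h
    have hu := (mem_filter.1 (mem_coe.1 hu)).2
    have hv := (mem_filter.1 (mem_coe.1 hv)).2
    simp only [Sym2.eq_iff] at h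
    rcases h with h | h
    · exact Prod.ext h.1 h.2
    · exact absurd (h.1 ▸ hu.2.1) hv.2.2

lemma expansion (S : Set (Triangulation n)) (hS : 2 * S.ncard ≤ Nat.card (Triangulation n)) :
    (S.ncard : ℝ) ≤ 384 * C0 * Real.sqrt ((n + 2 : ℕ) : ℝ) * ((edgeBoundary (assocGraph n) S).ncard : ℝ) := by
  set B := ((edgeBoundary (assocGraph n) S).ncard : ℝ)
  set f : Finset (Sym2 (Fin (n + 2))) → ℝ := fun x => if ∃ t ∈ S, Phi n t = x then 1 else 0 with hf
  have hfP : ∀ t, f (Phi n t) = if t ∈ S then 1 else 0 := by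
    intro t
    rw [hf]; simp only
    congr 1
    rw [eq_iff_iff]
    constructor
    · rintro ⟨u, hu, h⟩; rw [← Phi_inj h]; exact hu
    · intro h; exact ⟨t, h, rfl⟩
  have hP := PI_main (n + 2) (univ : Finset (Fin (n + 2))) (by simp) (by simp) f
  have hSc : S.ncard = (univ.filter (fun t => t ∈ S)).card := by
    rw [← Set.ncard_coe_finset]; congr 1; ext t; simp
  have hN : ((Tri (univ : Finset (Fin (n + 2)))).card : ℝ) = Nat.card (Triangulation n) := by
    have := sum_Phi (n := n) (fun _ => (1 : ℝ))
    simpa using this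
  have hNpos := Tri_card_pos (A := (univ : Finset (Fin (n + 2)))) (by simp)
  have hsum : ∑ x ∈ Tri (univ : Finset (Fin (n + 2))), f x = S.ncard := by
    rw [sum_Phi, hSc]; simp [hfP]
  have hdev : (S.ncard : ℝ) / 2 ≤ dev (Tri (univ : Finset (Fin (n + 2)))) f := by
    unfold dev
    rw [hsum, sum_Phi]
    have hle : (S.ncard : ℝ) / ((Tri (univ : Finset (Fin (n + 2)))).card : ℝ) ≤ 1 / 2 := by
      rw [div_le_iff₀ hNpos, hN]
      have : (2 : ℝ) * S.ncard ≤ Nat.card (Triangulation n) := by exact_mod_cast hS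
      linarith
    set ρ := (S.ncard : ℝ) / ((Tri (univ : Finset (Fin (n + 2)))).card : ℝ)
    calc (S.ncard : ℝ) / 2 = ∑ t : Triangulation n, if t ∈ S then (1 / 2 : ℝ) else 0 := by
          rw [← sum_filter, sum_const, nsmul_eq_mul, ← hSc]; ring
      _ ≤ _ := by
          refine sum_le_sum (fun t _ => ?_)
          rw [hfP]
          split_ifs
          · exact le_trans (by linarith) (le_abs_self _)
          · exact abs_nonneg _
  have hEn : En (Tri (univ : Finset (Fin (n + 2)))) f ≤ 2 * B := by
    unfold En
    simp_rw [sum_Phi]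
    have key : ∀ s t : Triangulation n, en f (Phi n s) (Phi n t) ≤ 
        (if (assocGraph n).Adj s t ∧ s ∈ S ∧ t ∉ S then 1 else 0) + 
        (if (assocGraph n).Adj t s ∧ t ∈ S ∧ s ∉ S then 1 else 0) := by
      intro s t
      unfold en
      rw [hfP, hfP, Phi_adj, (assocGraph n).adj_comm t s]
      by_cases h1 : (assocGraph n).Adj s t <;> by_cases h2 : s ∈ S <;> by_cases h3 : t ∈ S <;> simp [h1, h2, h3]
    refine (sum_le_sum (fun s _ => sum_le_sum (fun t _ => key s t))).trans ?_
    have e1 : ∑ s : Triangulation n, ∑ t : Triangulation n, (if (assocGraph n).Adj s t ∧ s ∈ S ∧ t ∉ S then (1 : ℝ) else 0) ≤ B := by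
      refine le_trans (le_of_eq ?_) (boundary_bound S)
      rw [← Fintype.sum_prod_type', ← sum_filter, sum_const, nsmul_eq_mul, mul_one]
    simp_rw [sum_add_distrib]
    have e2 : ∑ s : Triangulation n, ∑ t : Triangulation n, (if (assocGraph n).Adj t s ∧ t ∈ S ∧ s ∉ S then (1 : ℝ) else 0) ≤ B := by
      rw [sum_comm]; exact e1
    linarith
  have hC := C0_pos
  have := mul_le_mul_of_nonneg_left hEn (show 0 ≤ 96 * C0 * Real.sqrt ((n + 2 : ℕ) : ℝ) by positivity)
  linarith

theorem final_bound :
    ∃ c : ℝ, 0 < c ∧ ∀ n : ℕ, 2 ≤ n → ∀ S : Set (Triangulation n),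
      S.Nonempty → 2 * S.ncard ≤ Nat.card (Triangulation n) →
      c * (S.ncard : ℝ) / (Real.sqrt n * Real.log n) ≤
        ((edgeBoundary (assocGraph n) S).ncard : ℝ) := by
  have hC := C0_pos
  refine ⟨1 / (1536 * C0), by positivity, fun n hn S _ hS => ?_⟩
  have h := expansion S hS
  set B := ((edgeBoundary (assocGraph n) S).ncard : ℝ)
  have hB : 0 ≤ B := Nat.cast_nonneg _
  have hn' : (2 : ℝ) ≤ n := by exact_mod_cast hn
  have hlog : 1 / 2 ≤ Real.log n := by
    have h1 := Real.log_two_gt_d9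
    have h2 := Real.log_le_log (by norm_num) hn'
    linarith
  have hsq : Real.sqrt ((n + 2 : ℕ) : ℝ) ≤ 2 * Real.sqrt n := by
    rw [Real.sqrt_le_left (by positivity), mul_pow, Real.sq_sqrt (by positivity)]
    push_cast
    linarith
  have hs0 : 0 < Real.sqrt n := Real.sqrt_pos.2 (by linarith)
  rw [div_le_iff₀ (by positivity), one_div, inv_mul_le_iff₀ (by positivity)]
  have h3 : (S.ncard : ℝ) ≤ 384 * C0 * (2 * Real.sqrt n) * B := by
    refine h.trans ?_
    gcongr
  have h4 : 0 ≤ 1536 * C0 * B * Real.sqrt n := by positivity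
  have h5 := mul_le_mul_of_nonneg_left hlog h4
  linarith

end trans
end Assoc

/-- there is a constant `c > 0` such that for every `n ≥ 2` and every
nonempty set `S` of triangulations of the convex `(n+2)`-gon with `2|S| ≤ |V(K_n)|`,
the number of edges of `K_n` with exactly one endpoint in `S` is at least
`c·|S|/(√n·log n)`; i.e. the edge expansion of `K_n` is `Ω(1/(√n·log n))`. -/
theorem assocGraph_expansion_lower_bound :
    ∃ c : ℝ, 0 < c ∧ ∀ n : ℕ, 2 ≤ n → ∀ S : Set (Triangulation n),
      S.Nonempty → 2 * S.ncard ≤ Nat.card (Triangulation n) →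
      c * (S.ncard : ℝ) / (Real.sqrt n * Real.log n) ≤
        ((edgeBoundary (assocGraph n) S).ncard : ℝ) := by
  exact Assoc.final_bound
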